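/- arXiv:2306.03420 — 5 statements merged into one kernel-verified Lean document; each statement's English description precedes it below -/
import Mathlib

section
/- Let p be a prime and let n ≥ 1 be a natural number. In the polynomial ring 𝔽_p[X] one has (X + 1)^n = X^n + 1 if and only if n is a power of p, i.e., if and only if there exists m ∈ ℕ with n = p^m. -/
/-- Let `p` be a prime and `n ≥ 1`. In `𝔽_p[X]` one has `(X + 1)^n = X^n + 1`
if and only if `n` is a power of `p`. -/
theorem freshman_dream_iff_pow_of_prime (p : ℕ) (hp : p.Prime) (n : ℕ) (hn : 1 ≤ n) :
    (Polynomial.X + 1 : Polynomial (ZMod p)) ^ n = Polynomial.X ^ n + 1 ↔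
      ∃ m : ℕ, n = p ^ m := by
  have : Fact p.Prime := ⟨hp⟩
  constructor
  · intro h
    obtain ⟨k, m, hm, rfl⟩ := Nat.exists_eq_pow_mul_and_not_dvd (n := n) (by omega) p hp.ne_one
    refine ⟨k, ?_⟩
    by_contra hne
    have hq : 0 < p ^ k := pow_pos hp.pos k
    have h1 := congrArg (fun f => Polynomial.coeff f (p ^ k)) h
    simp only [Polynomial.coeff_X_add_one_pow, Polynomial.coeff_add, Polynomial.coeff_X_pow,
      Polynomial.coeff_one, if_neg (Ne.symm hne), if_neg hq.ne', add_zero] at h1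
    rw [ZMod.natCast_eq_zero_iff] at h1
    have h2 := Choose.choose_pow_mul_pow_mul_modEq_choose_nat (p := p) (k := k) (a := m) (b := 1)
    rw [mul_one, Nat.choose_one_right] at h2
    exact hm ((h2.dvd_iff dvd_rfl).1 h1)
  · rintro ⟨m, rfl⟩
    rw [add_pow_char_pow, one_pow]
end

section
/- Let p be a prime, let L = 𝔽_p(t) be the field of rational functions in one variable t over 𝔽_p, and let n ∈ ℤ. Then (t + 1)^n = t^n + 1 holds in L (with integer exponents interpreted as zpow on the nonzero elements t and t + 1) if and only if there exists m ∈ ℕ with n = p^m. -/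
open Polynomial in
theorem nat_case_aux (p : ℕ) [Fact p.Prime] (k : ℕ)
    (h : ((X : (ZMod p)[X]) + 1) ^ k = X ^ k + 1) : ∃ m : ℕ, k = p ^ m := by
  have hp : p.Prime := Fact.out
  have hk : k ≠ 0 := by
    rintro rfl
    simp at h
  obtain ⟨m, r, hr, rfl⟩ := Nat.exists_eq_pow_mul_and_not_dvd hk p hp.ne_one
  refine ⟨m, ?_⟩
  have h2 : ((X : (ZMod p)[X]) + 1) ^ r = X ^ r + 1 := by
    apply expand_injective (R := ZMod p) (n := p ^ m) (pow_pos hp.pos m)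
    rw [pow_mul, pow_mul, add_pow_char_pow, one_pow] at h
    simpa using h
  have h3 := congrArg (fun f => f.coeff 1) h2
  simp only [coeff_X_add_one_pow, coeff_add, coeff_X_pow, coeff_one, Nat.choose_one_right] at h3
  by_cases h1 : r = 1
  · simp [h1]
  · rw [if_neg (fun h => h1 h.symm)] at h3
    simp only [one_ne_zero, if_false, add_zero] at h3
    exact absurd ((ZMod.natCast_eq_zero_iff r p).1 h3) hr

/-- Let `p` be a prime, `L = 𝔽_p(t)` the rational function field over `𝔽_p`, and `n : ℤ`.
Then `(t + 1)^n = t^n + 1` in `L` (integer exponents) iff `n = p^m` for some `m : ℕ`. -/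
theorem zpow_freshman_dream_iff_pow_of_prime (p : ℕ) (hp : p.Prime) (n : ℤ) :
    haveI : Fact p.Prime := ⟨hp⟩
    ((RatFunc.X : RatFunc (ZMod p)) + 1) ^ n = (RatFunc.X : RatFunc (ZMod p)) ^ n + 1 ↔
      ∃ m : ℕ, n = (p : ℤ) ^ m := by
  haveI : Fact p.Prime := ⟨hp⟩
  have inj := RatFunc.algebraMap_injective (ZMod p)
  constructor
  · intro h
    obtain ⟨k, rfl | rfl⟩ := n.eq_nat_or_neg
    · simp only [zpow_natCast] at h
      obtain ⟨m, hm⟩ := nat_case_aux p k (inj (by simpa using h))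
      exact ⟨m, by rw [hm]; push_cast; rfl⟩
    · exfalso
      by_cases hk : k = 0
      · subst hk
        simp at h
      have hX : (RatFunc.X : RatFunc (ZMod p)) ≠ 0 := RatFunc.X_ne_zero
      have hX1 : (RatFunc.X : RatFunc (ZMod p)) + 1 ≠ 0 := by
        have : (Polynomial.X + 1 : Polynomial (ZMod p)) ≠ 0 := by
          simpa using Polynomial.X_add_C_ne_zero (1 : ZMod p)
        intro h0
        exact this (inj (by simpa using h0))
      simp only [zpow_neg, zpow_natCast] at h
      have hA := pow_ne_zero k hX
      have hB := pow_ne_zero k hX1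
      have h2 : (RatFunc.X : RatFunc (ZMod p)) ^ k
          = (1 + RatFunc.X ^ k) * (RatFunc.X + 1) ^ k := by
        generalize (RatFunc.X + 1 : RatFunc (ZMod p)) ^ k = B at *
        generalize (RatFunc.X : RatFunc (ZMod p)) ^ k = A at *
        field_simp at h
        linear_combination h
      have h3 : (Polynomial.X : Polynomial (ZMod p)) ^ k
          = (1 + Polynomial.X ^ k) * (Polynomial.X + 1) ^ k := inj (by simpa using h2)
      have h4 := congrArg (Polynomial.eval 0) h3
      simp [hk] at h4
  · rintro ⟨m, rfl⟩
    haveI : CharP (RatFunc (ZMod p)) p := charP_of_injective_algebraMap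
      (algebraMap (ZMod p) (RatFunc (ZMod p))).injective p
    have := add_pow_char_pow (p := p) (n := m) (RatFunc.X : RatFunc (ZMod p)) 1
    rw [one_pow] at this
    exact_mod_cast this
end

section
/- (Main theorem, torus case.) Let K be an algebraically closed field of characteristic p > 0, let N ≥ 1, let X be a subvariety of (Kˣ)^N, and let Γ be a finitely generated subgroup of (Kˣ)^N. Then the intersection X ∩ Γ is a union of finitely many groupless F-sets in Γ together with finitely many generalized F-sets in Γ. -/
/-- `X` is a subvariety of the torus `(Kˣ)^N`: the common zero set in `(Kˣ)^N` of a
family of polynomials in `N` variables over `K`. -/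
def IsTorusSubvariety (K : Type*) [Field K] {N : ℕ} (X : Set (Fin N → Kˣ)) : Prop :=
  ∃ 𝒮 : Set (MvPolynomial (Fin N) K),
    X = {x | ∀ f ∈ 𝒮, MvPolynomial.eval (fun i => (x i : K)) f = 0}

/-- `S` is a groupless `F`-set in the subgroup `Γ` of `(Kˣ)^N`: a subset of `Γ` of the
form `{α₀ · ∏_{i=1}^r F_q^{k·n_i}(α_i) : n_1, …, n_r ∈ ℕ}` for some `r ≥ 0`, `k ≥ 1`,
a power `q = p^a` of `p`, and `α₀, …, α_r ∈ (Kˣ)^N`, where `F_q : x ↦ x^q` is the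
`q`-power Frobenius of the torus. -/
def IsGrouplessFSet {K : Type*} [Field K] (p : ℕ) {N : ℕ}
    (Γ : Subgroup (Fin N → Kˣ)) (S : Set (Fin N → Kˣ)) : Prop :=
  S ⊆ ↑Γ ∧ ∃ (a : ℕ), 1 ≤ a ∧ ∃ (r k : ℕ), 1 ≤ k ∧
    ∃ (α₀ : Fin N → Kˣ) (α : Fin r → Fin N → Kˣ),
      S = {g | ∃ n : Fin r → ℕ, g = α₀ * ∏ i : Fin r, (α i) ^ ((p ^ a) ^ (k * n i))}

/-- The homomorphism of tori `(Kˣ)^N → (Kˣ)^M` given by the monomial map associated to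
an integer matrix `A`. -/
def monomialMap {K : Type*} [Field K] {N M : ℕ} (A : Fin M → Fin N → ℤ) :
    (Fin N → Kˣ) →* (Fin M → Kˣ) where
  toFun x := fun i => ∏ j, x j ^ A i j
  map_one' := by
    funext i
    simp
  map_mul' x y := by
    funext i
    simp [mul_zpow, Finset.prod_mul_distrib]

/-- `S` is a generalized `F`-set in the subgroup `Γ` of `(Kˣ)^N`: a set of the form
`(π|_Γ)⁻¹(S₀)` where `π : (Kˣ)^N → (Kˣ)^M` is a surjective homomorphism of tori with
`M < N` (so the kernel of `π` has positive dimension) and `S₀` is a groupless `F`-set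
in the subgroup `π(Γ)` of `(Kˣ)^M`. -/
def IsGeneralizedFSet {K : Type*} [Field K] (p : ℕ) {N : ℕ}
    (Γ : Subgroup (Fin N → Kˣ)) (S : Set (Fin N → Kˣ)) : Prop :=
  ∃ (M : ℕ), M < N ∧ ∃ A : Fin M → Fin N → ℤ,
    Function.Surjective (monomialMap (K := K) A) ∧
      ∃ S₀ : Set (Fin M → Kˣ), IsGrouplessFSet p (Γ.map (monomialMap (K := K) A)) S₀ ∧
        S = {g | g ∈ Γ ∧ monomialMap (K := K) A g ∈ S₀}


theorem exists_hom_int_of_transcendental (F k : Type*) [Field F] [Field k] [Algebra F k]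
    [Algebra.EssFiniteType F k] (x : kˣ) (hx : Transcendental F (x : k)) :
    ∃ w : kˣ →* Multiplicative ℤ, w x ≠ 1 := by
  classical
  have hind : AlgebraicIndepOn F id ({(x : k)} : Set k) := by
    have := (algebraicIndependent_singleton_iff (R := F) (x := fun i : ({(x : k)} : Set k) => (i : k)) 
      ⟨(x : k), rfl⟩).2 hx
    exact this
  obtain ⟨s, hxs, hs⟩ := exists_isTranscendenceBasis_superset hind
  have hxs' : (x : k) ∈ s := hxs rfl
  let L := IntermediateField.adjoin F (s \ {(x : k)})
  have htr : Transcendental L (x : k) := by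
    have h1 := hs.1.transcendental_adjoin (s := {i : s | (i : k) ≠ x}) (i := ⟨x, hxs'⟩) (by simp)
    have h2 : (fun i : s => (i : k)) '' {i : s | (i : k) ≠ x} = s \ {(x : k)} := by
      ext y; simp [and_comm]
    have h3 : Transcendental (Algebra.adjoin F (s \ {(x : k)})) (x : k) := by
      rw [← h2]; exact h1
    intro halg
    apply h3
    open IntermediateField.algebraAdjoinAdjoin in
    exact (IsFractionRing.isAlgebraic_iff (Algebra.adjoin F (s \ {(x : k)})) L k).2 halg
  let M := IntermediateField.adjoin L {(x : k)}
  have halg : Algebra.IsAlgebraic M k := by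
    have h1 := hs.isAlgebraic_field
    constructor
    intro y
    have hle : IntermediateField.adjoin F (Set.range ((↑) : s → k)) ≤ M.restrictScalars F := by
      rw [IntermediateField.adjoin_le_iff]
      rintro _ ⟨⟨z, hz⟩, rfl⟩
      by_cases hzx : z = x
      · subst hzx
        exact IntermediateField.mem_adjoin_simple_self L _
      · have : z ∈ L := IntermediateField.subset_adjoin F _ ⟨hz, hzx⟩
        exact M.algebraMap_mem ⟨z, this⟩
    obtain ⟨P, hP0, hP⟩ := h1.isAlgebraic y
    let f : ↥(IntermediateField.adjoin F (Set.range ((↑) : s → k))) →+* M :=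
      { toFun := fun z => ⟨z.1, hle z.2⟩
        map_one' := rfl
        map_mul' := fun _ _ => rfl
        map_zero' := rfl
        map_add' := fun _ _ => rfl }
    refine ⟨P.map f, ?_, ?_⟩
    · rw [Ne, Polynomial.map_eq_zero_iff f.injective]
      exact hP0
    · rw [Polynomial.aeval_def, Polynomial.eval₂_map]
      exact hP
  have : Algebra.EssFiniteType L k := Algebra.EssFiniteType.of_comp F L k
  have : Algebra.EssFiniteType M k := Algebra.EssFiniteType.of_comp L M k
  have : Module.Finite M k := Algebra.finite_of_essFiniteType_of_isAlgebraic
  let e : RatFunc L ≃ₐ[L] M := RatFunc.algEquivOfTranscendental (x : k) htr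
  let deg : (RatFunc L)ˣ →* Multiplicative ℤ :=
    { toFun := fun u => Multiplicative.ofAdd (RatFunc.intDegree (u : RatFunc L))
      map_one' := by simp
      map_mul' := fun a b => by
        simp [RatFunc.intDegree_mul a.ne_zero b.ne_zero] }
  refine ⟨(deg.comp (Units.map (e.symm : M →* RatFunc L))).comp
    (Units.map (Algebra.norm M)), ?_⟩
  have hn : Algebra.norm M (x : k) = (e RatFunc.X) ^ Module.finrank M k := by
    have : (x : k) = algebraMap M k (e RatFunc.X) := by
      change (x : k) = ((e RatFunc.X : M) : k)
      rw [RatFunc.algEquivOfTranscendental_X]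
    rw [this, Algebra.norm_algebraMap]
  have hval : (((Units.map (e.symm : M →* RatFunc L)) ((Units.map (Algebra.norm M)) x) : (RatFunc L)ˣ)
      : RatFunc L) = RatFunc.X ^ Module.finrank M k := by
    simp [hn]
  have hX : (RatFunc.X : RatFunc L) ≠ 0 := RatFunc.X_ne_zero
  have hpow : ∀ n : ℕ, RatFunc.intDegree ((RatFunc.X : RatFunc L) ^ n) = n := by
    intro n
    induction n with
    | zero => simp
    | succ n ih => rw [pow_succ, RatFunc.intDegree_mul (pow_ne_zero _ hX) hX, ih]; simp
  intro h
  have h2 := congrArg Multiplicative.toAdd h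
  simp only [MonoidHom.comp_apply] at h2
  change RatFunc.intDegree _ = 0 at h2
  rw [hval, hpow] at h2
  have := Module.finrank_pos (R := M) (M := k)
  omega


theorem isOfFinOrder_of_isAlgebraic (p : ℕ) [Fact p.Prime] (k : Type*) [Field k]
    [Algebra (ZMod p) k] (x : kˣ) (hx : IsAlgebraic (ZMod p) (x : k)) : IsOfFinOrder x := by
  let L := IntermediateField.adjoin (ZMod p) {(x : k)}
  have : FiniteDimensional (ZMod p) L :=
    IntermediateField.adjoin.finiteDimensional hx.isIntegral
  have : Finite L := Module.finite_of_finite (ZMod p)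
  let y : L := ⟨x, IntermediateField.mem_adjoin_simple_self _ _⟩
  have hy : y ≠ 0 := by
    intro h
    exact x.ne_zero (congrArg Subtype.val h)
  obtain ⟨n, hn, h⟩ := (isOfFinOrder_iff_pow_eq_one).1 (isOfFinOrder_of_finite (Units.mk0 y hy))
  refine isOfFinOrder_iff_pow_eq_one.2 ⟨n, hn, ?_⟩
  have h2 := congrArg (fun u : Lˣ => ((u : L) : k)) h
  ext
  simpa using h2

theorem exists_coprime_pow_eq_one (p : ℕ) [hp : Fact p.Prime] (k : Type*) [Field k]
    [CharP k p] (x : kˣ) (hx : IsOfFinOrder x) :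
    ∃ m : ℕ, 0 < m ∧ m.Coprime p ∧ x ^ m = 1 := by
  obtain ⟨n, hn, h⟩ := isOfFinOrder_iff_pow_eq_one.1 hx
  obtain ⟨j, m, hm, rfl⟩ := Nat.exists_eq_pow_mul_and_not_dvd hn.ne' p hp.out.ne_one
  refine ⟨m, Nat.pos_of_ne_zero (by rintro rfl; simp at hm), ?_, ?_⟩
  · exact ((Nat.Prime.coprime_iff_not_dvd hp.out).2 hm).symm
  · have h2 : ((x : k) ^ m) ^ p ^ j = 1 := by
      have := congrArg (fun u : kˣ => (u : k)) h
      simp only [Units.val_pow_eq_pow_val, Units.val_one] at this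
      rw [← pow_mul, mul_comm, this]
    have h3 : (x : k) ^ m = 1 := by
      apply iterateFrobenius_inj k p j
      simpa [iterateFrobenius_def] using h2
    ext
    simpa using h3

theorem exists_lattice_hom (p : ℕ) [hp : Fact p.Prime] (k : Type*) [Field k]
    [Algebra (ZMod p) k] [Algebra.EssFiniteType (ZMod p) k] (A : Type*) [AddCommGroup A]
    [Module.Finite ℤ A] (P : Type*) [Finite P] (ρ : A →ₗ[ℤ] (P → Additive kˣ)) :
    ∃ (s : ℕ) (w : (P → Additive kˣ) →ₗ[ℤ] (Fin s → ℤ)) (e : ℕ), 0 < e ∧ e.Coprime p ∧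
      ∀ a, w (ρ a) = 0 → e • ρ a = 0 := by
  classical
  have : CharP k p := charP_of_injective_algebraMap (algebraMap (ZMod p) k).injective p
  have hfg : (LinearMap.range (LinearMap.lcomp ℤ ℤ ρ)).FG := IsNoetherian.noetherian _
  obtain ⟨s, g, hg⟩ := Submodule.fg_iff_exists_fin_generating_family.1 hfg
  have hmem : ∀ i, ∃ w : (P → Additive kˣ) →ₗ[ℤ] ℤ, LinearMap.lcomp ℤ ℤ ρ w = g i := by
    intro i
    have : g i ∈ LinearMap.range (LinearMap.lcomp ℤ ℤ ρ) := by
      rw [← hg]; exact Submodule.subset_span ⟨i, rfl⟩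
    exact this
  choose w hw using hmem
  let W : (P → Additive kˣ) →ₗ[ℤ] (Fin s → ℤ) := LinearMap.pi w
  have key : ∀ a, W (ρ a) = 0 → ∀ w' : (P → Additive kˣ) →ₗ[ℤ] ℤ, w' (ρ a) = 0 := by
    intro a ha w'
    have h1 : LinearMap.lcomp ℤ ℤ ρ w' ∈ Submodule.span ℤ (Set.range g) := by
      rw [hg]; exact ⟨w', rfl⟩
    have h2 : Submodule.span ℤ (Set.range g) ≤ LinearMap.ker (LinearMap.applyₗ (R := ℤ) (M₂ := ℤ) a) := by
      rw [Submodule.span_le]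
      rintro _ ⟨i, rfl⟩
      have := congrFun ha i
      rw [← hw i]
      simpa [W] using this
    have := h2 h1
    simpa using this
  have tors : ∀ a, W (ρ a) = 0 → ∃ m : ℕ, 0 < m ∧ m.Coprime p ∧ m • ρ a = 0 := by
    intro a ha
    have h1 : ∀ i, ∃ m : ℕ, 0 < m ∧ m.Coprime p ∧ ((ρ a i).toMul : kˣ) ^ m = 1 := by
      intro i
      apply exists_coprime_pow_eq_one p k
      apply isOfFinOrder_of_isAlgebraic p k
      by_contra hcon
      obtain ⟨v, hv⟩ := exists_hom_int_of_transcendental (ZMod p) k (ρ a i).toMul hcon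
      apply hv
      let v' : Additive kˣ →+ ℤ := MonoidHom.toAdditiveLeft v
      have := key a ha ((v'.comp (Pi.evalAddMonoidHom (fun _ : P => Additive kˣ) i)).toIntLinearMap)
      exact this
    choose m hm0 hmp hm using h1
    have := Fintype.ofFinite P
    refine ⟨∏ i, m i, Finset.prod_pos fun i _ => hm0 i,
      Nat.Coprime.prod_left fun i _ => hmp i, ?_⟩
    funext i
    obtain ⟨c, hc⟩ := Finset.dvd_prod_of_mem m (Finset.mem_univ i)
    rw [hc, mul_comm, mul_smul]
    have : m i • ρ a i = 0 := hm i
    simp [this]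
  have hker : (LinearMap.ker (W ∘ₗ ρ)).FG := IsNoetherian.noetherian _
  obtain ⟨t, g', hg'⟩ := Submodule.fg_iff_exists_fin_generating_family.1 hker
  have h1 : ∀ i, ∃ m : ℕ, 0 < m ∧ m.Coprime p ∧ m • ρ (g' i) = 0 := by
    intro i
    apply tors
    have : g' i ∈ LinearMap.ker (W ∘ₗ ρ) := by
      rw [← hg']; exact Submodule.subset_span ⟨i, rfl⟩
    exact this
  choose m hm0 hmp hm using h1
  refine ⟨s, W, ∏ i, m i, Finset.prod_pos fun i _ => hm0 i,
      Nat.Coprime.prod_left fun i _ => hmp i, ?_⟩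
  intro a ha
  have h2 : a ∈ Submodule.span ℤ (Set.range g') := by rw [hg']; exact ha
  have h3 : Submodule.span ℤ (Set.range g') ≤ LinearMap.ker ((∏ i, m i) • ρ) := by
    rw [Submodule.span_le]
    rintro _ ⟨i, rfl⟩
    obtain ⟨c, hc⟩ := Finset.dvd_prod_of_mem m (Finset.mem_univ i)
    change (∏ i, m i) • ρ (g' i) = 0
    rw [hc, mul_comm, mul_smul, hm i, smul_zero]
  exact h3 h2


/-- `1 + q + ... + q^(n-1)`. -/
def geo (q n : ℕ) : ℕ := ∑ i ∈ Finset.range n, q ^ i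

theorem geo_zero (q : ℕ) : geo q 0 = 0 := by simp [geo]

theorem geo_succ (q n : ℕ) : geo q (n + 1) = 1 + q * geo q n := by
  simp only [geo, Finset.sum_range_succ', Finset.mul_sum]
  simp [pow_succ', add_comm]

theorem geo_succ' (q n : ℕ) : geo q (n + 1) = geo q n + q ^ n := by
  simp [geo, Finset.sum_range_succ]

theorem geo_int (q n : ℕ) : ((q : ℤ) - 1) * (geo q n : ℤ) = (q : ℤ) ^ n - 1 := by
  induction n with
  | zero => simp [geo_zero]
  | succ n ih => rw [geo_succ']; push_cast; rw [mul_add, ih]; ring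

theorem finite_smul_eq (k : Type*) [Field k] (P : Type*) [Finite P] (E : ℕ) (hE : 0 < E)
    (d : P → Additive kˣ) : Set.Finite {c : P → Additive kˣ | E • c = d} := by
  have h : ∀ u : Additive kˣ, Set.Finite {c : Additive kˣ | E • c = u} := by
    intro u
    have h1 : Set.Finite {y : k | y ^ E = (u.toMul : k)} := by
      have h2 : Set.Finite {y : k | y ∈ Polynomial.nthRoots E (u.toMul : k)} :=
        Multiset.finite_toSet _
      simpa [Polynomial.mem_nthRoots hE] using h2
    refine Set.Finite.of_finite_image (f := fun c : Additive kˣ => (c.toMul : k)) (h1.subset ?_) ?_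
    · rintro _ ⟨c, hc, rfl⟩
      have hc' : E • c = u := hc
      change (c.toMul : k) ^ E = (u.toMul : k)
      rw [← hc']
      simp
    · intro c _ c' _ hcc
      exact Additive.toMul.injective (Units.ext hcc)
  refine (Set.Finite.pi' fun i => h (d i)).subset ?_
  intro c hc i
  exact congrFun hc i

theorem int_eq_zero_of_forall_pow_dvd (q : ℕ) (hq : 2 ≤ q) (x : ℤ)
    (h : ∀ n : ℕ, (q : ℤ) ^ n ∣ x) : x = 0 := by
  by_contra hx
  have h1 := h x.natAbs
  have h2 := Int.natAbs_dvd_natAbs.2 h1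
  have h3 := Nat.le_of_dvd (Int.natAbs_pos.2 hx) h2
  rw [Int.natAbs_pow] at h3
  have h4 : x.natAbs < q ^ x.natAbs := Nat.lt_pow_self (by omega)
  simp at h3
  omega

theorem mem_span_pow_smul {M : Type*} [AddCommGroup M] (p n : ℕ) (N : Submodule ℤ M) (x : M) :
    x ∈ (Ideal.span {(p : ℤ)}) ^ n • N ↔ ∃ y ∈ N, x = (p : ℤ) ^ n • y := by
  rw [Ideal.span_singleton_pow, Submodule.ideal_span_singleton_smul]
  constructor
  · rintro ⟨y, hy, rfl⟩
    exact ⟨y, hy, rfl⟩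
  · rintro ⟨y, hy, rfl⟩
    exact ⟨y, hy, rfl⟩

theorem descent_data_aux (p : ℕ) [hp : Fact p.Prime] {A : Type*} [AddCommGroup A]
    {C : Type*} [AddCommGroup C] (Φ : A →ₗ[ℤ] C) (a : C) (s e : ℕ) (w : C →ₗ[ℤ] (Fin s → ℤ))
    (he0 : 0 < e) (hep : e.Coprime p)
    (hw : ∀ g (t : ℤ), w (Φ g + t • a) = 0 → e • (Φ g + t • a) = 0)
    (hfin : ∀ E : ℕ, 0 < E → ∀ d : C, Set.Finite {c : C | E • c = d})
    (hyp : ∀ n : ℕ, ∃ (g : A) (y : C), a - Φ g = (p : ℤ) ^ n • y) :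
    ∃ (κ : ℕ) (h : A), 1 ≤ κ ∧ ((p : ℤ) ^ κ) • a = a + Φ h ∧
      (∃ N : ℕ, ∀ z : A, (∃ y, a - Φ z = (p : ℤ) ^ N • y) →
        ∃ γ η : A, Φ η = 0 ∧ z = (p ^ κ) • γ - h + η) ∧
      Set.Finite (Φ '' {z | ∀ n : ℕ, ∃ γ, Φ z = Φ ((p ^ κ) ^ n • γ - geo (p ^ κ) n • h)}) := by
  classical
  have hwΦ : ∀ g, w (Φ g) = 0 → e • Φ g = 0 := by
    intro g hg
    have := hw g 0
    simp only [zero_smul, add_zero] at this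
    exact this hg
  let L := LinearMap.range (w ∘ₗ Φ)
  let I : Ideal ℤ := Ideal.span {(p : ℤ)}
  have hp0 : 0 < p := hp.out.pos
  -- step 1
  obtain ⟨r, hr⟩ : ∃ r : I, (r : ℤ) • (Submodule.Quotient.mk (p := L) (w a)) =
      Submodule.Quotient.mk (p := L) (w a) := by
    rw [← Ideal.mem_iInf_smul_pow_eq_bot_iff, Submodule.mem_iInf]
    intro n
    rw [mem_span_pow_smul]
    obtain ⟨g, y, hgy⟩ := hyp n
    refine ⟨Submodule.Quotient.mk (w y), trivial, ?_⟩
    rw [← Submodule.Quotient.mk_smul, Submodule.Quotient.eq]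
    refine ⟨g, ?_⟩
    have : Φ g = a - (p : ℤ) ^ n • y := by rw [← hgy]; abel
    simp [this]
  obtain ⟨r', hr'⟩ := Ideal.mem_span_singleton'.1 r.2
  have hmem : (1 - (r : ℤ)) • w a ∈ L := by
    rw [← Submodule.Quotient.mk_eq_zero, Submodule.Quotient.mk_smul, sub_smul, one_smul, hr,
      sub_self]
  obtain ⟨h0, hh0⟩ := hmem
  set m : ℤ := 1 - (r : ℤ) with hm
  have hmp : IsCoprime m (p : ℤ) := ⟨1, r', by rw [hm, ← hr']; ring⟩
  have hm0 : m ≠ 0 := by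
    intro h
    rw [h] at hmp
    have := isCoprime_zero_left.1 hmp
    have h1 := Int.isUnit_iff_natAbs_eq.1 this
    simp at h1
    exact hp.out.ne_one h1
  have h1 : e • (m • a - Φ h0) = 0 := by
    have h2 : w (Φ (-h0) + m • a) = 0 := by
      rw [map_neg, map_add, map_neg, map_smul, ← hh0]
      simp
    have h3 := hw _ _ h2
    rw [map_neg] at h3
    rw [← h3]; congr 1; abel
  let M0 : ℕ := e * m.natAbs
  have hM0 : 0 < M0 := Nat.mul_pos he0 (Int.natAbs_pos.2 hm0)
  have hM0p : p.Coprime M0 := by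
    refine (Nat.Coprime.mul_left hep ?_).symm
    have := Int.isCoprime_iff_gcd_eq_one.1 hmp
    exact this
  have hκ : 1 ≤ M0.totient := Nat.totient_pos.2 hM0
  have hdvd : ((e : ℤ) * m) ∣ (p : ℤ) ^ M0.totient - 1 := by
    have h2 := (Nat.ModEq.pow_totient hM0p)
    have h3 := (Nat.modEq_iff_dvd.1 h2.symm)
    have h4 : ((M0 : ℕ) : ℤ) ∣ (p : ℤ) ^ M0.totient - 1 := by exact_mod_cast h3
    refine dvd_trans ?_ h4
    simp only [M0, Nat.cast_mul, Int.natCast_natAbs]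
    exact mul_dvd_mul_left _ (self_dvd_abs m)
  obtain ⟨t, ht⟩ := hdvd
  set κ := M0.totient with hκdef
  set q : ℕ := p ^ κ with hq
  have hq2 : 2 ≤ q := by
    have : p ^ 1 ≤ p ^ κ := Nat.pow_le_pow_right hp0 hκ
    have := hp.out.two_le
    simp at *
    omega
  have ht' : (q : ℤ) - 1 = e * m * t := by rw [hq]; push_cast; exact ht
  let h : A := (t * e) • h0
  have hΦh : ((q : ℤ) - 1) • a = Φ h := by
    have h2 : (e : ℤ) • (m • a) = (e : ℤ) • Φ h0 := by
      rw [← sub_eq_zero, ← smul_sub]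
      exact_mod_cast h1
    rw [ht', map_smul, mul_smul t, ← h2, ← mul_smul, ← mul_smul]
    congr 1; ring
  have hkill : ∀ η, w (Φ η) = 0 → Φ (((q : ℤ) - 1) • η) = 0 := by
    intro η hη
    have h2 := hwΦ η hη
    rw [map_smul, ht', show (e : ℤ) * m * t = (m * t) * e by ring, mul_smul]
    have h3 : (e : ℤ) • Φ η = 0 := by exact_mod_cast h2
    rw [h3, smul_zero]
  refine ⟨κ, h, hκ, ?_, ?_, ?_⟩
  · rw [← hΦh, sub_smul, one_smul, add_sub_cancel, hq]; push_cast; rfl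
  · obtain ⟨c, hc⟩ := Ideal.exists_pow_inf_eq_pow_smul I L
    refine ⟨κ * (c + 1), ?_⟩
    rintro z ⟨y, hy⟩
    have hcle : c + κ ≤ κ * (c + 1) := by nlinarith
    have e1 : Φ (z + geo q (c + 1) • h) = (p : ℤ) ^ (κ * (c + 1)) • (a - y) := by
      have e2 : Φ z = a - (p : ℤ) ^ (κ * (c + 1)) • y := by rw [← hy]; abel
      have e3 : Φ (geo q (c + 1) • h) = ((p : ℤ) ^ (κ * (c + 1)) - 1) • a := by
        rw [← natCast_zsmul, map_smul, ← hΦh, ← mul_smul, mul_comm, geo_int, hq]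
        push_cast
        rw [pow_mul]
      rw [map_add, e2, e3, sub_smul, one_smul, smul_sub]; abel
    have e2 : w (Φ (z + geo q (c + 1) • h)) ∈ I ^ (κ * (c + 1)) • (⊤ : Submodule ℤ (Fin s → ℤ)) ⊓ L := by
      refine ⟨?_, ⟨_, rfl⟩⟩
      rw [SetLike.mem_coe, mem_span_pow_smul]
      exact ⟨w (a - y), trivial, by rw [e1, map_smul]⟩
    rw [hc _ (by omega), mem_span_pow_smul] at e2
    obtain ⟨_, ⟨-, ⟨γ0, rfl⟩⟩, e3⟩ := e2
    let γ1 : A := (p : ℤ) ^ (κ * (c + 1) - c - κ) • γ0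
    let η : A := z + geo q (c + 1) • h - (q : ℤ) • γ1
    have e4 : w (Φ η) = 0 := by
      simp only [η, γ1]
      rw [map_sub, map_sub, e3, sub_eq_zero, ← mul_smul, map_smul, map_smul]
      rw [show κ * (c + 1) - c = κ + (κ * (c + 1) - c - κ) by omega, pow_add, hq]
      simp
    refine ⟨γ1 - geo q c • h + η, -(((q : ℤ) - 1) • η), ?_, ?_⟩
    · rw [map_neg, hkill η e4, neg_zero]
    · have e5 : z = (q : ℤ) • γ1 + η - geo q (c + 1) • h := by simp only [η]; abel
      rw [geo_succ] at e5
      rw [e5, ← hq]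
      clear e5 e4 e3
      clear_value η γ1
      generalize geo q c = G
      module
  · refine (hfin (e * (q - 1)) (Nat.mul_pos he0 (by omega)) (e • Φ h)).subset ?_
    rintro _ ⟨z, hz, rfl⟩
    have hz0 : w (Φ (((q : ℤ) - 1) • z - h)) = 0 := by
      funext i
      apply int_eq_zero_of_forall_pow_dvd q hq2
      intro n
      obtain ⟨γ, hγ⟩ := hz n
      refine ⟨w (Φ (((q : ℤ) - 1) • γ - h)) i, ?_⟩
      have : Φ (((q : ℤ) - 1) • z - h) = (q : ℤ) ^ n • Φ (((q : ℤ) - 1) • γ - h) := by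
        rw [map_sub, map_smul, hγ, ← map_smul, ← map_sub, ← map_smul]
        congr 1
        have e9 : ((q : ℤ) - 1) • (geo q n • h) = ((q : ℤ) ^ n - 1) • h := by
          rw [← geo_int, mul_smul, natCast_zsmul]
        rw [smul_sub, ← hq, e9]
        module
      rw [this, map_smul]
      rfl
    have h2 := hwΦ _ hz0
    rw [map_sub, smul_sub, sub_eq_zero] at h2
    change (e * (q - 1)) • Φ z = e • Φ h
    rw [← h2, mul_smul, map_smul]
    congr 1
    rw [← natCast_zsmul]
    push_cast [show 1 ≤ q by omega]
    rfl

theorem descent_data (p : ℕ) [hp : Fact p.Prime] (k : Type*) [Field k]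
    [Algebra (ZMod p) k] [Algebra.EssFiniteType (ZMod p) k] (A : Type*) [AddCommGroup A]
    [Module.Finite ℤ A] (P : Type*) [Finite P] (Φ : A →ₗ[ℤ] (P → Additive kˣ))
    (a : P → Additive kˣ) (hyp : ∀ n : ℕ, ∃ (g : A) (y : P → Additive kˣ),
      a - Φ g = (p : ℤ) ^ n • y) :
    ∃ (κ : ℕ) (h : A), 1 ≤ κ ∧ ((p : ℤ) ^ κ) • a = a + Φ h ∧
      (∃ N : ℕ, ∀ z : A, (∃ y, a - Φ z = (p : ℤ) ^ N • y) →
        ∃ γ η : A, Φ η = 0 ∧ z = (p ^ κ) • γ - h + η) ∧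
      Set.Finite (Φ '' {z | ∀ n : ℕ, ∃ γ, Φ z = Φ ((p ^ κ) ^ n • γ - geo (p ^ κ) n • h)}) := by
  let ρ : (A × ℤ) →ₗ[ℤ] (P → Additive kˣ) := Φ.coprod (LinearMap.toSpanSingleton ℤ _ a)
  obtain ⟨s, w, e, he0, hep, hw⟩ := exists_lattice_hom p k (A × ℤ) P ρ
  have hρ : ∀ g t, ρ (g, t) = Φ g + t • a := fun g t => by simp [ρ]
  refine descent_data_aux p Φ a s e w he0 hep ?_ (finite_smul_eq k P) hyp
  intro g t
  have := hw (g, t)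
  rwa [hρ] at this


theorem exists_echelon {K E : Type*} [Field K] [Fintype E] [DecidableEq E]
    (V : Submodule K (E → K)) :
    ∃ (J : Finset E) (u : E → E → K), (∀ j ∈ J, u j ∈ V) ∧
      (∀ j ∈ J, ∀ i ∈ J, u j i = if i = j then 1 else 0) ∧
      (∀ v ∈ V, (∀ j ∈ J, v j = 0) → v = 0) := by
  classical
  have hne : ∃ J : Finset E, ∀ v ∈ V, (∀ j ∈ J, v j = 0) → v = 0 :=
    ⟨Finset.univ, fun v _ h => funext fun j => h j (Finset.mem_univ j)⟩
  obtain ⟨J, hJ⟩ := exists_minimal_of_wellFoundedLT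
    (fun J : Finset E => ∀ v ∈ V, (∀ j ∈ J, v j = 0) → v = 0) hne
  have : ∀ j ∈ J, ∃ u ∈ V, ∀ i ∈ J, u i = if i = j then 1 else 0 := by
    intro j hj
    have h1 : ¬ ∀ v ∈ V, (∀ i ∈ J.erase j, v i = 0) → v = 0 := fun h =>
      hJ.not_lt h (Finset.erase_ssubset hj)
    push Not at h1
    obtain ⟨w, hw, hw0, hwn⟩ := h1
    have hwj : w j ≠ 0 := by
      intro h0
      apply hwn
      apply hJ.prop w hw
      intro i hi
      by_cases hij : i = j
      · rw [hij, h0]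
      · exact hw0 i (Finset.mem_erase.2 ⟨hij, hi⟩)
    refine ⟨(w j)⁻¹ • w, V.smul_mem _ hw, fun i hi => ?_⟩
    by_cases hij : i = j
    · subst hij; simp [hwj]
    · simp [hij, hw0 i (Finset.mem_erase.2 ⟨hij, hi⟩)]
  choose! u hu1 hu2 using this
  exact ⟨J, u, hu1, hu2, hJ.prop⟩

theorem mem_iff_of_echelon {K E : Type*} [Field K] [Fintype E] [DecidableEq E]
    {V : Submodule K (E → K)} {J : Finset E} {u : E → E → K} (h1 : ∀ j ∈ J, u j ∈ V)
    (h2 : ∀ j ∈ J, ∀ i ∈ J, u j i = if i = j then 1 else 0)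
    (h3 : ∀ v ∈ V, (∀ j ∈ J, v j = 0) → v = 0) (v : E → K) :
    v ∈ V ↔ ∀ e, v e = ∑ j ∈ J, u j e * v j := by
  have hs : ∑ j ∈ J, v j • u j ∈ V := V.sum_mem fun j hj => V.smul_mem _ (h1 j hj)
  have he : ∀ e, (∑ j ∈ J, v j • u j) e = ∑ j ∈ J, u j e * v j := by
    intro e
    simp [Finset.sum_apply, mul_comm]
  constructor
  · intro hv e
    have : v - ∑ j ∈ J, v j • u j = 0 := by
      refine h3 _ (V.sub_mem hv hs) fun i hi => ?_
      rw [Pi.sub_apply, he, sub_eq_zero, Finset.sum_eq_single i]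
      · simp [h2 i hi i hi]
      · intro j hj hji
        rw [h2 j hj i hi, if_neg (Ne.symm hji), zero_mul]
      · exact fun h => absurd hi h
    rw [sub_eq_zero] at this
    rw [← he, ← this]
  · intro h
    have : v = ∑ j ∈ J, v j • u j := funext fun e => by rw [he, ← h]
    rw [this]
    exact hs

theorem retraction {K L E : Type*} [Field K] [Field L] (i : L →+* K)
    (c : E → K) (hc : ∀ e, c e ≠ 0) (T : Set (E → L)) {V : Submodule K (E → K)}
    (hV : V = Submodule.span K ((fun t : E → L => fun e => c e * i (t e)) '' T))
    {J : Finset E} (h3 : ∀ v ∈ V, (∀ j ∈ J, v j = 0) → v = 0)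
    {u : E → K} (hu : u ∈ V) (huJ : ∀ j ∈ J, ∃ x, u j = c j * i x) (e : E) :
    ∃ x, u e = c e * i x := by
  letI : Algebra L K := i.toAlgebra
  obtain ⟨π, hπ⟩ := LinearMap.exists_leftInverse_of_injective (Algebra.linearMap L K)
    (LinearMap.ker_eq_bot.2 (algebraMap L K).injective)
  have hπi : ∀ x, π (i x) = x := fun x => LinearMap.congr_fun hπ x
  have hπm : ∀ (y : K) (x : L), π (y * i x) = x * π y := by
    intro y x
    have : y * i x = x • y := by rw [Algebra.smul_def, mul_comm]; rfl
    rw [this, map_smul, smul_eq_mul]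
  have hret : ∀ w ∈ V, (fun e => c e * i (π (w e / c e))) ∈ V := by
    intro w hw
    rw [hV] at hw
    induction hw using Submodule.span_induction with
    | mem x hx =>
      obtain ⟨t, ht, rfl⟩ := hx
      rw [hV]
      refine Submodule.subset_span ⟨t, ht, ?_⟩
      funext e
      simp [hc, hπi]
    | zero => convert V.zero_mem using 1; funext e; simp
    | add x y _ _ hx hy =>
      have := V.add_mem hx hy
      convert this using 1
      funext e
      simp [add_div, mul_add]
    | smul a x hx ih =>
      clear ih
      induction hx using Submodule.span_induction generalizing a with
      | mem x hx =>
        obtain ⟨t, ht, rfl⟩ := hx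
        have : (fun e => c e * i (t e)) ∈ V := by
          rw [hV]; exact Submodule.subset_span ⟨t, ht, rfl⟩
        convert V.smul_mem (i (π a)) this using 1
        funext e
        have : a * (c e * i (t e)) / c e = a * i (t e) := by field_simp [hc e]
        simp only [Pi.smul_apply, smul_eq_mul]
        rw [this, hπm, map_mul]
        ring
      | zero => convert V.zero_mem using 1; funext e; simp
      | add x y _ _ hx hy =>
        have := V.add_mem (hx a) (hy a)
        convert this using 1
        funext e
        simp [add_div, mul_add]
      | smul b x _ hx =>
        have := hx (a * b)
        rwa [mul_smul] at this
  have h0 : u - (fun e => c e * i (π (u e / c e))) = 0 := by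
    refine h3 _ (V.sub_mem hu (hret u hu)) fun j hj => ?_
    obtain ⟨x, hx⟩ := huJ j hj
    rw [Pi.sub_apply, hx]
    simp [hc, hπi]
  exact ⟨_, congrFun (sub_eq_zero.1 h0) e⟩

theorem unconstrain {K E : Type*} [Field K] [Fintype E] (p : ℕ) [ExpChar K p] [PerfectRing K p]
    (κ : ℕ) (c : E → K) (hc : ∀ e, c e ≠ 0) (T : Set (E → K)) (V : Submodule K (E → K))
    (hT : ∀ t ∈ T, (fun e => c e * t e ^ p ^ κ) ∈ T)
    (hV : ∀ t ∈ T, (fun e => c e * t e ^ p ^ κ) ∈ V) : ∀ t ∈ T, t ∈ V := by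
  let σ : K ≃+* K := iterateFrobeniusEquiv K p κ
  have hσ : ∀ x, σ x = x ^ p ^ κ := fun x => rfl
  let ψ : (E → K) →ₛₗ[(σ : K →+* K)] (E → K) :=
    { toFun := fun v e => c e * σ (v e)
      map_add' := fun v w => by funext e; simp [mul_add]
      map_smul' := fun a v => by funext e; simp; ring }
  have hψ : Function.Injective ψ := by
    intro v w h
    funext e
    have := congrFun h e
    exact σ.injective (mul_left_cancel₀ (hc e) this)
  let W := Submodule.span K T
  have hle : W.map ψ ≤ W := by
    rw [Submodule.map_span]
    refine Submodule.span_mono ?_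
    rintro _ ⟨t, ht, rfl⟩
    exact hT t ht
  have hle' : W.map ψ ≤ V := by
    rw [Submodule.map_span]
    refine Submodule.span_le.2 ?_
    rintro _ ⟨t, ht, rfl⟩
    exact hV t ht
  have : RingHomInvPair (σ : K →+* K) (σ.symm : K →+* K) := RingHomInvPair.of_ringEquiv σ
  have : RingHomInvPair (σ.symm : K →+* K) (σ : K →+* K) := RingHomInvPair.of_ringEquiv σ.symm
  have hrank : Module.rank K W = Module.rank K (W.map ψ) :=
    rank_eq_of_equiv_equiv σ (Submodule.equivMapOfInjective (σ₂₁ := (σ.symm : K →+* K)) ψ hψ W).toAddEquiv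
      σ.bijective (fun r m => map_smulₛₗ (Submodule.equivMapOfInjective (σ₂₁ := (σ.symm : K →+* K)) ψ hψ W) r m)
  have heq : W.map ψ = W := Submodule.eq_of_le_of_finrank_eq hle (by
    rw [Module.finrank, Module.finrank, hrank])
  intro t ht
  exact hle' (heq.ge (Submodule.subset_span ht))


theorem geo_add (q m n : ℕ) : geo q (m + n) = geo q m + q ^ m * geo q n := by
  induction n with
  | zero => simp [geo_zero]
  | succ n ih => rw [← add_assoc, geo_succ', ih, geo_succ', pow_add]; ring

theorem geo_mul (q m n : ℕ) : geo q (m * n) = geo q m * geo (q ^ m) n := by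
  induction n with
  | zero => simp [geo_zero]
  | succ n ih => rw [Nat.mul_succ, add_comm, geo_add, ih, geo_succ]; ring

/-- A nested set: a translate of a sum of geometric orbits and a subgroup. -/
def IsNested {A : Type*} [AddCommGroup A] (q : ℕ) (S : Set A) : Prop :=
  ∃ (r : ℕ) (g0 : A) (g : Fin r → A) (H : AddSubgroup A),
    S = {x | ∃ (n : Fin r → ℕ) (η : A), η ∈ H ∧ x = g0 + ∑ i, geo q (n i) • g i + η}

/-- A finite union of nested sets. -/
def NestU {A : Type*} [AddCommGroup A] (q : ℕ) (Z : Set A) : Prop :=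
  ∃ T : Set (Set A), T.Finite ∧ (∀ S ∈ T, IsNested q S) ∧ Z = ⋃₀ T

section nested
variable {A : Type*} [AddCommGroup A] {q : ℕ}

theorem IsNested.nestU {S : Set A} (h : IsNested q S) : NestU q S :=
  ⟨{S}, Set.finite_singleton S, by simpa using h, by simp⟩

theorem NestU.sUnion {T : Set (Set A)} (hT : T.Finite) (h : ∀ S ∈ T, NestU q S) :
    NestU q (⋃₀ T) := by
  choose! f hf1 hf2 hf3 using h
  refine ⟨⋃ S ∈ T, f S, hT.biUnion hf1, ?_, ?_⟩
  · intro S hS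
    simp only [Set.mem_iUnion] at hS
    obtain ⟨S', hS', hS⟩ := hS
    exact hf2 S' hS' S hS
  · ext x
    simp only [Set.mem_sUnion, Set.mem_iUnion]
    constructor
    · rintro ⟨S, hS, hx⟩
      rw [hf3 S hS] at hx
      obtain ⟨S', hS', hx⟩ := hx
      exact ⟨S', ⟨S, hS, hS'⟩, hx⟩
    · rintro ⟨S', ⟨S, hS, hS'⟩, hx⟩
      refine ⟨S, hS, ?_⟩
      rw [hf3 S hS]
      exact ⟨S', hS', hx⟩

theorem NestU.iUnion {ι : Type*} [Finite ι] {S : ι → Set A} (h : ∀ i, NestU q (S i)) :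
    NestU q (⋃ i, S i) := by
  rw [← Set.sUnion_range]
  exact NestU.sUnion (Set.finite_range S) (by rintro _ ⟨i, rfl⟩; exact h i)

theorem NestU.union {S T : Set A} (h : NestU q S) (h' : NestU q T) : NestU q (S ∪ T) := by
  rw [← Set.sUnion_pair]
  refine NestU.sUnion (by simp) ?_
  rintro R (rfl | rfl)
  exacts [h, h']

theorem IsNested.pow {S : Set A} (h : IsNested q S) {m : ℕ} (hm : 1 ≤ m) : NestU (q ^ m) S := by
  obtain ⟨r, g0, g, H, rfl⟩ := h
  have : {x | ∃ (n : Fin r → ℕ) (η : A), η ∈ H ∧ x = g0 + ∑ i, geo q (n i) • g i + η} =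
      ⋃ (s : Fin r → Fin m), {x | ∃ (n : Fin r → ℕ) (η : A), η ∈ H ∧
        x = (g0 + ∑ i, geo q (s i) • g i) +
          ∑ i, geo (q ^ m) (n i) • ((q ^ (s i : ℕ) * geo q m) • g i) + η} := by
    have key : ∀ (n : Fin r → ℕ) (s : Fin r → Fin m),
        (g0 + ∑ i, geo q (s i) • g i) +
          ∑ i, geo (q ^ m) (n i) • ((q ^ (s i : ℕ) * geo q m) • g i) =
        g0 + ∑ i, geo q (s i + m * n i) • g i := by
      intro n s
      rw [add_assoc, ← Finset.sum_add_distrib]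
      congr 1
      refine Finset.sum_congr rfl fun i _ => ?_
      rw [geo_add, geo_mul, ← mul_smul, ← add_smul]
      congr 1
      ring
    ext x
    rw [Set.mem_iUnion]
    constructor
    · rintro ⟨n, η, hη, rfl⟩
      refine ⟨fun i => ⟨n i % m, Nat.mod_lt _ hm⟩, fun i => n i / m, η, hη, ?_⟩
      rw [key]
      simp only [Nat.mod_add_div]
    · rintro ⟨s, n, η, hη, rfl⟩
      exact ⟨_, η, hη, by rw [key]⟩
  rw [this]
  exact NestU.iUnion fun s => IsNested.nestU ⟨r, _, _, H, rfl⟩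

theorem NestU.pow {S : Set A} (h : NestU q S) {m : ℕ} (hm : 1 ≤ m) : NestU (q ^ m) S := by
  obtain ⟨T, hT, h1, rfl⟩ := h
  exact NestU.sUnion hT fun S hS => (h1 S hS).pow hm

theorem IsNested.affine {S : Set A} (h : IsNested q S) (t : ℕ) (c : A) :
    IsNested q ((fun x => t • x + c) '' S) := by
  obtain ⟨r, g0, g, H, rfl⟩ := h
  refine ⟨r, t • g0 + c, fun i => t • g i, H.map (nsmulAddMonoidHom t), ?_⟩
  have key : ∀ (n : Fin r → ℕ) (η : A), t • (g0 + ∑ i, geo q (n i) • g i + η) + c =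
      t • g0 + c + ∑ i, geo q (n i) • t • g i + t • η := by
    intro n η
    rw [smul_add, smul_add, Finset.smul_sum]
    simp only [smul_comm t]
    abel
  ext x
  constructor
  · rintro ⟨_, ⟨n, η, hη, rfl⟩, rfl⟩
    exact ⟨n, t • η, ⟨η, hη, rfl⟩, key n η⟩
  · rintro ⟨n, _, ⟨η, hη, rfl⟩, rfl⟩
    exact ⟨_, ⟨n, η, hη, rfl⟩, key n η⟩

theorem NestU.affine {S : Set A} (h : NestU q S) (t : ℕ) (c : A) :
    NestU q ((fun x => t • x + c) '' S) := by
  obtain ⟨T, hT, h1, rfl⟩ := h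
  rw [Set.image_sUnion]
  refine NestU.sUnion (hT.image _) ?_
  rintro _ ⟨S, hS, rfl⟩
  exact ((h1 S hS).affine t c).nestU

/-- Closing up a nested subset of `Z` under the dynamics. -/
theorem nested_closure {Z : Set A} {H : AddSubgroup A} (h : A)
    (hH : ∀ x ∈ Z, ∀ η ∈ H, x + η ∈ Z) (hφ : ∀ x, x ∈ Z → ∀ n, q ^ n • x - geo q n • h ∈ Z)
    (hun : ∀ (n : ℕ) (b c : A) (S : Set A), (∀ s ∈ S, q ^ n • s + c ∈ S) →
      (∀ s ∈ S, b + (q ^ n • s + c) ∈ Z) → ∀ s ∈ S, b + s ∈ Z)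
    {S : Set A} (hS : IsNested q S) (hSZ : S ⊆ Z) :
    ∃ S', IsNested q S' ∧ S' ⊆ Z ∧
      ∀ s ∈ S, ∀ n, ∀ η ∈ H, q ^ n • s - geo q n • h + η ∈ S' := by
  obtain ⟨r, g0, g, H₁, rfl⟩ := hS
  let g' : A := ((q : ℤ) - 1) • g0 - h - ∑ i, g i
  have hq1 : ∀ n, ((q : ℤ) ^ n) • g0 - geo q n • h = g0 + geo q n • g' + geo q n • ∑ i, g i := by
    intro n
    have := geo_int q n
    simp only [g', ← natCast_zsmul]
    rw [smul_sub, smul_sub, ← mul_smul, mul_comm, this, sub_smul, one_smul]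
    abel
  have hphi : ∀ (n : ℕ) (m : Fin r → ℕ) (η : A),
      q ^ n • (g0 + ∑ i, geo q (m i) • g i + η) - geo q n • h =
      (g0 + geo q n • g') + (q ^ n • (∑ i, geo q (m i) • g i + η) + geo q n • ∑ i, g i) := by
    intro n m η
    have := hq1 n
    rw [add_assoc g0, smul_add]
    rw [show q ^ n • g0 = ((q : ℤ) ^ n) • g0 by rw [← natCast_zsmul]; push_cast; rfl]
    rw [add_sub_right_comm, this]
    abel
  have hsum : ∀ (n : ℕ) (m : Fin r → ℕ) (η : A),
      q ^ n • (∑ i, geo q (m i) • g i + η) + geo q n • ∑ i, g i =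
      ∑ i, geo q (n + m i) • g i + q ^ n • η := by
    intro n m η
    rw [smul_add, Finset.smul_sum, Finset.smul_sum, add_right_comm, ← Finset.sum_add_distrib]
    congr 1
    refine Finset.sum_congr rfl fun i _ => ?_
    rw [geo_add, add_smul, mul_smul, add_comm]
  refine ⟨{x | ∃ (n : Fin (r + 1) → ℕ) (η : A), η ∈ H₁ ⊔ H ∧
    x = g0 + ∑ i, geo q (n i) • (Fin.cons g' g : Fin (r + 1) → A) i + η},
    ⟨r + 1, _, _, _, rfl⟩, ?_, ?_⟩
  · rintro _ ⟨n, η, hη, rfl⟩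
    obtain ⟨η₁, hη₁, η₂, hη₂, rfl⟩ := AddSubgroup.mem_sup.1 hη
    rw [← add_assoc]
    refine hH _ ?_ _ hη₂
    rw [Fin.sum_univ_succ]
    simp only [Fin.cons_zero, Fin.cons_succ]
    rw [add_assoc, add_assoc, ← add_assoc g0]
    refine hun (n 0) _ (geo q (n 0) • ∑ i, g i)
      {x | ∃ (m : Fin r → ℕ) (η : A), η ∈ H₁ ∧ x = ∑ i, geo q (m i) • g i + η} ?_ ?_ _
      ⟨_, η₁, hη₁, rfl⟩
    · rintro _ ⟨m, η, hη, rfl⟩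
      exact ⟨fun i => n 0 + m i, q ^ n 0 • η, nsmul_mem hη _, hsum _ _ _⟩
    · rintro _ ⟨m, η, hη, rfl⟩
      rw [← hphi]
      exact hφ _ (hSZ ⟨m, η, hη, rfl⟩) _
  · rintro _ ⟨m, η, hη, rfl⟩ n η' hη'
    refine ⟨Fin.cons n (fun i => n + m i), q ^ n • η + η',
      AddSubgroup.mem_sup.2 ⟨_, nsmul_mem hη _, _, hη', rfl⟩, ?_⟩
    rw [hphi, hsum, Fin.sum_univ_succ]
    simp only [Fin.cons_zero, Fin.cons_succ]
    abel

theorem core_step {Z Y : Set A} {H : AddSubgroup A} (h : A) {m : ℕ} (hm : 1 ≤ m)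
    (hH : ∀ x ∈ Z, ∀ η ∈ H, x + η ∈ Z) (hφ : ∀ x, x ∈ Z → q • x - h ∈ Z)
    (hun : ∀ (n : ℕ) (b c : A) (S : Set A), (∀ s ∈ S, (q ^ m) ^ n • s + c ∈ S) →
      (∀ s ∈ S, b + ((q ^ m) ^ n • s + c) ∈ Z) → ∀ s ∈ S, b + s ∈ Z)
    (hYZ : Y ⊆ Z) (hY : NestU (q ^ m) Y)
    (hZ : ∀ z ∈ Z, z ∈ Y ∨ ∃ γ ∈ Z, ∃ η ∈ H, z = q • γ - h + η)
    (hF : ∃ F : Set A, F.Finite ∧ ∀ z ∈ Z,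
      (∀ n, ∃ γ, ∃ η ∈ H, z = q ^ n • γ - geo q n • h + η) → ∃ f ∈ F, z - f ∈ H) :
    NestU (q ^ m) Z := by
  have hφn : ∀ n, ∀ x ∈ Z, q ^ n • x - geo q n • h ∈ Z := by
    intro n
    induction n with
    | zero => intro x hx; simpa [geo_zero] using hx
    | succ n ih =>
      intro x hx
      have := hφ _ (ih x hx)
      convert this using 1
      rw [geo_succ]
      module
  have hφm : ∀ x, x ∈ Z → ∀ n, (q ^ m) ^ n • x - geo (q ^ m) n • (geo q m • h) ∈ Z := by
    intro x hx n
    have := hφn (m * n) x hx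
    rwa [geo_mul, pow_mul, mul_comm (geo q m), mul_smul] at this
  -- all the images of `Y`
  let Y' : Set A := ⋃ r : Fin m, (fun x => q ^ (r : ℕ) • x + (-(geo q r • h))) '' Y
  have hY' : NestU (q ^ m) Y' := NestU.iUnion fun r => hY.affine _ _
  have hY'Z : Y' ⊆ Z := by
    intro x hx
    obtain ⟨r, y, hy, rfl⟩ := Set.mem_iUnion.1 hx
    simp only [← sub_eq_add_neg]
    exact hφn _ _ (hYZ hy)
  obtain ⟨T, hT, hTn, hTu⟩ := hY'
  have hTZ : ∀ S ∈ T, S ⊆ Z := fun S hS => (Set.subset_sUnion_of_mem hS).trans (hTu ▸ hY'Z)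
  choose! f hf1 hf2 hf3 using fun S hS =>
    nested_closure (H := H) (geo q m • h) hH hφm hun (hTn S hS) (hTZ S hS)
  obtain ⟨F, hFf, hF⟩ := hF
  let F' : Set A := {x ∈ F | ∀ η ∈ H, x + η ∈ Z}
  have hZeq : Z = ⋃₀ (f '' T) ∪ ⋃₀ ((fun x => {y | ∃ η ∈ H, y = x + η}) '' F') := by
    apply Set.Subset.antisymm
    · intro z hz
      by_cases hc : ∃ n, ∃ y ∈ Y, ∃ η ∈ H, z = q ^ n • y - geo q n • h + η
      · left
        obtain ⟨n, y, hy, η, hη, rfl⟩ := hc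
        have hy' : q ^ (n % m) • y - geo q (n % m) • h ∈ Y' := by
          refine Set.mem_iUnion.2 ⟨⟨n % m, Nat.mod_lt _ hm⟩, y, hy, ?_⟩
          simp only [sub_eq_add_neg]
        rw [hTu] at hy'
        obtain ⟨S, hS, hyS⟩ := hy'
        refine ⟨f S, ⟨S, hS, rfl⟩, ?_⟩
        have := hf3 S hS _ hyS (n / m) η hη
        convert this using 2
        have e : n = m * (n / m) + n % m := (Nat.div_add_mod n m).symm
        generalize n / m = a at *
        generalize n % m = b at *
        subst e
        rw [geo_add, geo_mul, pow_add, pow_mul]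
        module
      · right
        have : ∀ n, ∃ γ ∈ Z, ∃ η ∈ H, z = q ^ n • γ - geo q n • h + η := by
          intro n
          induction n with
          | zero => exact ⟨z, hz, 0, H.zero_mem, by simp [geo_zero]⟩
          | succ n ih =>
            obtain ⟨γ, hγ, η, hη, e⟩ := ih
            rcases hZ γ hγ with hy | ⟨γ', hγ', η', hη', e'⟩
            · exact absurd ⟨n, γ, hy, η, hη, e⟩ hc
            · refine ⟨γ', hγ', q ^ n • η' + η, H.add_mem (nsmul_mem hη' _) hη, ?_⟩
              rw [e, e', geo_succ']
              module
        obtain ⟨x, hx, hzx⟩ := hF z hz fun n => by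
          obtain ⟨γ, -, h⟩ := this n
          exact ⟨γ, h⟩
        refine ⟨_, ⟨x, ⟨hx, ?_⟩, rfl⟩, ⟨z - x, hzx, by abel⟩⟩
        intro η hη
        have := hH z hz (η - (z - x)) (H.sub_mem hη hzx)
        convert this using 1
        abel
    · refine Set.union_subset (Set.sUnion_subset ?_) (Set.sUnion_subset ?_)
      · rintro _ ⟨S, hS, rfl⟩
        exact hf2 S hS
      · rintro _ ⟨x, hx, rfl⟩ _ ⟨η, hη, rfl⟩
        exact hx.2 η hη
  rw [hZeq]
  refine NestU.union (NestU.sUnion (hT.image _) ?_)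
    (NestU.sUnion ((hFf.subset (Set.sep_subset _ _)).image _) ?_)
  · rintro _ ⟨S, hS, rfl⟩
    exact (hf1 S hS).nestU
  · rintro _ ⟨x, hx, rfl⟩
    refine IsNested.nestU ⟨0, x, Fin.elim0, H, ?_⟩
    ext y
    simp

end nested


section core

/-- The value in `K` of an element of the additive copy of `kˣ`. -/
def cval {k : Type*} (K : Type*) [Field k] [Field K] [Algebra k K] (x : Additive kˣ) : K :=
  algebraMap k K ((x.toMul : kˣ) : k)

section cval
variable {k K : Type*} [Field k] [Field K] [Algebra k K]

theorem cval_ne_zero (x : Additive kˣ) : cval K x ≠ 0 := by simp [cval]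

theorem cval_inj {x y : Additive kˣ} (h : cval K x = cval K y) : x = y :=
  Additive.toMul.injective (Units.ext ((algebraMap k K).injective h))

theorem cval_add (x y : Additive kˣ) : cval K (x + y) = cval K x * cval K y := by
  simp [cval]

theorem cval_zero : cval K (0 : Additive kˣ) = 1 := by simp [cval]

theorem cval_sub (x y : Additive kˣ) : cval K (x - y) = cval K x / cval K y := by
  rw [eq_div_iff (cval_ne_zero y), ← cval_add, sub_add_cancel]

theorem cval_nsmul (n : ℕ) (x : Additive kˣ) : cval K (n • x) = cval K x ^ n := by
  simp [cval]

theorem exists_cval_eq {x : k} (hx : algebraMap k K x ≠ 0) :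
    ∃ y : Additive kˣ, cval K y = algebraMap k K x :=
  ⟨Additive.ofMul (Units.mk0 x (by rintro rfl; simp at hx)), by simp [cval]⟩

end cval

theorem finNested_common {A : Type*} [AddCommGroup A] (p : ℕ) {T : Set (Set A)} (hT : T.Finite)
    (h : ∀ S ∈ T, ∃ κ, 1 ≤ κ ∧ NestU (p ^ κ) S) : ∃ κ, 1 ≤ κ ∧ ∀ S ∈ T, NestU (p ^ κ) S := by
  induction T, hT using Set.Finite.induction_on with
  | empty => exact ⟨1, le_rfl, by simp⟩
  | @insert a s _ _ ih =>
    obtain ⟨κ, hκ, h1⟩ := ih fun S hS => h S (Set.mem_insert_of_mem _ hS)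
    obtain ⟨κ', hκ', h2⟩ := h a (Set.mem_insert _ _)
    refine ⟨κ * κ', Nat.mul_pos hκ hκ', ?_⟩
    rintro S (rfl | hS)
    · rw [mul_comm, pow_mul]; exact h2.pow hκ
    · rw [pow_mul]; exact (h1 S hS).pow hκ'

theorem finite_quot (A : Type*) [AddCommGroup A] [Module.Finite ℤ A] (n : ℕ) (hn : 0 < n) :
    Finite (A ⧸ LinearMap.range (n • (LinearMap.id : A →ₗ[ℤ] A))) := by
  refine Module.finite_of_fg_torsion _ ?_
  intro x
  obtain ⟨x, rfl⟩ := Submodule.Quotient.mk_surjective _ x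
  refine ⟨⟨(n : ℤ), mem_nonZeroDivisors_of_ne_zero (by exact_mod_cast hn.ne')⟩, ?_⟩
  change (n : ℤ) • (Submodule.Quotient.mk x : A ⧸ LinearMap.range (n • (LinearMap.id : A →ₗ[ℤ] A))) = 0
  rw [← Submodule.Quotient.mk_smul, Submodule.Quotient.mk_eq_zero]
  exact ⟨x, by simp⟩

variable (p : ℕ) [hp : Fact p.Prime] {k K A E : Type*} [Field k] [Field K] [Algebra k K]
    [AddCommGroup A] [Fintype E]

/-- The evaluation vector of a tuple of characters. -/
def evc (K : Type*) [Field K] [Algebra k K] (χ : E → A →+ Additive kˣ) (x : A) (e : E) : K :=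
  cval K (χ e x)

/-- The span of the points of `Z(V)` in a residue class. -/
def clsSpan (V : Submodule K (E → K)) (χ : E → A →+ Additive kˣ) (z : A) (n : ℕ) :
    Submodule K (E → K) :=
  Submodule.span K (evc K χ '' {x | evc K χ x ∈ V ∧ ∃ y, x = z + p ^ n • y})

variable (χ : E → A →+ Additive kˣ)

theorem evc_add (x y : A) (e : E) : evc K χ (x + y) e = evc K χ x e * evc K χ y e := by
  simp [evc, cval_add]

theorem evc_sub (x y : A) (e : E) : evc K χ (x - y) e = evc K χ x e / evc K χ y e := by
  simp [evc, cval_sub]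

theorem evc_nsmul (n : ℕ) (x : A) (e : E) : evc K χ (n • x) e = evc K χ x e ^ n := by
  simp [evc, cval_nsmul]

theorem evc_ne_zero (x : A) (e : E) : evc K χ x e ≠ 0 := cval_ne_zero _

theorem clsSpan_le (V : Submodule K (E → K)) (z : A) (n : ℕ) : clsSpan p V χ z n ≤ V := by
  refine Submodule.span_le.2 ?_
  rintro _ ⟨x, hx, rfl⟩
  exact hx.1

theorem mem_clsSpan (V : Submodule K (E → K)) (z : A) (n : ℕ) (hz : evc K χ z ∈ V) :
    evc K χ z ∈ clsSpan p V χ z n :=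
  Submodule.subset_span ⟨z, ⟨hz, 0, by simp⟩, rfl⟩

theorem clsSpan_finite [Module.Finite ℤ A] (V : Submodule K (E → K)) (n : ℕ) :
    (Set.range fun z => clsSpan p V χ z n).Finite := by
  have := finite_quot A (p ^ n) (pow_pos hp.out.pos n)
  let R := LinearMap.range ((p ^ n) • (LinearMap.id : A →ₗ[ℤ] A))
  refine (Set.finite_range fun t : A ⧸ R => clsSpan p V χ (Quotient.out t) n).subset ?_
  rintro _ ⟨z, rfl⟩
  refine ⟨Submodule.Quotient.mk z, ?_⟩
  have h1 : (Submodule.Quotient.mk (Quotient.out (Submodule.Quotient.mk (p := R) z)) : A ⧸ R) =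
      Submodule.Quotient.mk z := Quotient.out_eq' _
  rw [Submodule.Quotient.eq] at h1
  obtain ⟨w, hw⟩ := h1
  change clsSpan p V χ (Quotient.out (Submodule.Quotient.mk (p := R) z)) n = _
  generalize Quotient.out (Submodule.Quotient.mk (p := R) z) = z' at hw
  have hz' : z' = z + p ^ n • w := by
    have : p ^ n • w = z' - z := hw
    rw [this]; abel
  simp only [clsSpan]
  congr 2
  ext x
  refine and_congr_right fun _ => ?_
  constructor
  · rintro ⟨y, rfl⟩
    exact ⟨w + y, by rw [hz', smul_add]; abel⟩
  · rintro ⟨y, rfl⟩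
    exact ⟨y - w, by rw [hz', smul_sub]; abel⟩

theorem clsSpan_retraction [CharP K p] {V : Submodule K (E → K)} {J : Finset E} {u : E → E → K}
    [DecidableEq E]
    (h1 : ∀ j ∈ J, u j ∈ V) (h2 : ∀ j ∈ J, ∀ i ∈ J, u j i = if i = j then 1 else 0)
    (h3 : ∀ v ∈ V, (∀ j ∈ J, v j = 0) → v = 0) (z : A) (n : ℕ) (hz : clsSpan p V χ z n = V)
    (j : E) (hj : j ∈ J) (e : E) :
    ∃ x : k, evc K χ z j * u j e = evc K χ z e * (algebraMap k K x) ^ p ^ n := by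
  have : ExpChar K p := ExpChar.prime hp.out
  have := retraction ((iterateFrobenius K p n).comp (algebraMap k K)) (evc K χ z)
    (evc_ne_zero χ z)
    ((fun y : A => fun e => (((χ e y).toMul : kˣ) : k)) '' {y | evc K χ (z + p ^ n • y) ∈ V})
    (V := V) (J := J) ?_ h3 (u := evc K χ z j • u j) (V.smul_mem _ (h1 j hj)) ?_ e
  · obtain ⟨x, hx⟩ := this
    exact ⟨x, by simpa [iterateFrobenius_def] using hx⟩
  · conv_lhs => rw [← hz]
    rw [clsSpan, Set.image_image]
    congr 1
    ext v
    constructor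
    · rintro ⟨_, ⟨hy, y, rfl⟩, rfl⟩
      refine ⟨y, hy, ?_⟩
      funext e
      rw [evc_add, evc_nsmul]
      rfl
    · rintro ⟨y, hy, rfl⟩
      refine ⟨_, ⟨hy, y, rfl⟩, ?_⟩
      funext e
      rw [evc_add, evc_nsmul]
      rfl
  · intro i hi
    rw [Pi.smul_apply, h2 j hj i hi]
    split_ifs with h
    · exact ⟨1, by simp [h]⟩
    · exact ⟨0, by simp [hp.out.ne_zero]⟩

theorem core [Algebra (ZMod p) k] [Algebra.EssFiniteType (ZMod p) k] [CharP K p]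
    [PerfectField K] [Module.Finite ℤ A] (V : Submodule K (E → K)) :
    ∃ κ, 1 ≤ κ ∧ NestU (p ^ κ) {x | evc K χ x ∈ V} := by
  classical
  have : ExpChar K p := ExpChar.prime hp.out
  induction hd : Module.finrank K V using Nat.strong_induction_on generalizing V with
  | _ d ih =>
  subst hd
  -- the lower dimensional part
  let Y : ℕ → Set A := fun n => ⋃₀ ((fun W : Submodule K (E → K) => {x | evc K χ x ∈ W}) ''
    {W | (∃ z, clsSpan p V χ z n = W) ∧ W < V})
  have hY : ∀ n, ∃ κ, 1 ≤ κ ∧ NestU (p ^ κ) (Y n) := by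
    intro n
    have hf : ((fun W : Submodule K (E → K) => {x | evc K χ x ∈ W}) ''
      {W | (∃ z, clsSpan p V χ z n = W) ∧ W < V}).Finite :=
        ((clsSpan_finite p χ V n).subset (fun W hW => hW.1)).image _
    obtain ⟨κ, hκ, h⟩ := finNested_common p hf (by
      rintro _ ⟨W, ⟨-, hW⟩, rfl⟩
      exact ih _ (Submodule.finrank_lt_finrank_of_lt hW) W rfl)
    exact ⟨κ, hκ, NestU.sUnion hf h⟩
  have hYZ : ∀ n, Y n ⊆ {x | evc K χ x ∈ V} := by
    rintro n x ⟨_, ⟨W, ⟨-, hW⟩, rfl⟩, hx⟩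
    exact hW.le hx
  have hYc : ∀ n z, evc K χ z ∈ V → clsSpan p V χ z n ≠ V → z ∈ Y n := by
    intro n z hz hne
    exact ⟨_, ⟨_, ⟨⟨z, rfl⟩, lt_of_le_of_ne (clsSpan_le p χ V z n) hne⟩, rfl⟩,
      mem_clsSpan p χ V z n hz⟩
  by_cases hall : ∃ n, ∀ z, clsSpan p V χ z n ≠ V
  · obtain ⟨n, hn⟩ := hall
    have : {x | evc K χ x ∈ V} = Y n :=
      Set.Subset.antisymm (fun z hz => hYc n z hz (hn z)) (hYZ n)
    rw [this]
    exact hY n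
  push Not at hall
  obtain ⟨J, u, h1, h2, h3⟩ := exists_echelon V
  have hmem := mem_iff_of_echelon h1 h2 h3
  have hret := clsSpan_retraction p χ h1 h2 h3
  let P := {ej : E × E // ej.2 ∈ J ∧ u ej.2 ej.1 ≠ 0}
  have hPa : ∀ t : P, ∃ w : Additive kˣ, cval K w = u t.1.2 t.1.1 := by
    rintro ⟨⟨e, j⟩, hj, hu⟩
    obtain ⟨g, hg⟩ := hall 0
    obtain ⟨x, hx⟩ := hret g 0 hg j hj e
    rw [pow_zero, pow_one] at hx
    have hx0 : algebraMap k K x ≠ 0 := by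
      intro h0
      rw [h0, mul_zero] at hx
      exact mul_ne_zero (evc_ne_zero χ g j) hu hx
    obtain ⟨y, hy⟩ := exists_cval_eq hx0
    refine ⟨χ e g + y - χ j g, ?_⟩
    rw [cval_sub, cval_add, hy, div_eq_iff (cval_ne_zero _), mul_comm _ (cval K _)]
    exact hx.symm
  choose a ha using hPa
  let Φ : A →ₗ[ℤ] (P → Additive kˣ) :=
    LinearMap.pi fun t => (χ t.1.1 - χ t.1.2).toIntLinearMap
  have hΦ : ∀ x t, Φ x t = χ t.1.1 x - χ t.1.2 x := fun x t => rfl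
  have hzy : ∀ n z, clsSpan p V χ z n = V → ∃ y, a - Φ z = (p : ℤ) ^ n • y := by
    intro n z hz
    have : ∀ t : P, ∃ y : Additive kˣ, a t - Φ z t = (p ^ n) • y := by
      rintro ⟨⟨e, j⟩, hj, hu⟩
      obtain ⟨x, hx⟩ := hret z n hz j hj e
      have hx0 : algebraMap k K x ≠ 0 := by
        intro h0
        rw [h0, zero_pow (pow_ne_zero _ hp.out.ne_zero), mul_zero] at hx
        exact mul_ne_zero (evc_ne_zero χ z j) hu hx
      obtain ⟨y, hy⟩ := exists_cval_eq hx0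
      refine ⟨y, cval_inj (K := K) ?_⟩
      rw [cval_sub, cval_nsmul, hy, ha, hΦ, cval_sub]
      change u j e / (evc K χ z e / evc K χ z j) = _
      have i1 := evc_ne_zero (K := K) χ z j
      have i2 := evc_ne_zero (K := K) χ z e
      field_simp
      rw [mul_comm (u j e), hx]
    choose y hy using this
    refine ⟨y, funext fun t => ?_⟩
    rw [Pi.sub_apply, hy, Pi.smul_apply, ← natCast_zsmul]
    push_cast
    rfl
  obtain ⟨κ, h, hκ, hah, ⟨n₀, hn₀⟩, hfin⟩ := descent_data p k A P Φ a (fun n => by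
    obtain ⟨g, hg⟩ := hall n
    exact ⟨g, hzy n g hg⟩)
  set q := p ^ κ with hq
  have hq0 : q ≠ 0 := pow_ne_zero _ hp.out.ne_zero
  have hua : ∀ e, ∀ j ∈ J, u j e ^ q = u j e * (evc K χ h e / evc K χ h j) := by
    intro e j hj
    by_cases hu : u j e = 0
    · rw [hu, zero_pow hq0, zero_mul]
    · have := congrArg (cval K) (congrFun hah ⟨(e, j), hj, hu⟩)
      rw [Pi.smul_apply, Pi.add_apply, hΦ, cval_add, cval_sub, ha] at this
      rw [show (p : ℤ) ^ κ = ((q : ℕ) : ℤ) by rw [hq]; push_cast; rfl, natCast_zsmul,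
        cval_nsmul, ha] at this
      exact this
  have hkerΦ : ∀ η, Φ η = 0 → ∀ e, ∀ j ∈ J, u j e ≠ 0 → evc K χ η j = evc K χ η e := by
    intro η hη e j hj hu
    have := congrFun hη ⟨(e, j), hj, hu⟩
    rw [hΦ, Pi.zero_apply, sub_eq_zero] at this
    exact congrArg (cval K) this.symm
  have hφ : ∀ x, evc K χ (q • x - h) ∈ V ↔ evc K χ x ∈ V := by
    intro x
    rw [hmem, hmem]
    refine forall_congr' fun e => ?_
    have e1 : ∑ j ∈ J, u j e * evc K χ (q • x - h) j =
        (∑ j ∈ J, u j e * evc K χ x j) ^ q / evc K χ h e := by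
      rw [hq, sum_pow_char_pow, ← hq, Finset.sum_div]
      refine Finset.sum_congr rfl fun j hj => ?_
      rw [mul_pow, hua e j hj, evc_sub, evc_nsmul]
      have i1 := evc_ne_zero (K := K) χ h j
      have i2 := evc_ne_zero (K := K) χ h e
      field_simp
    rw [e1, evc_sub, evc_nsmul, div_left_inj' (evc_ne_zero χ h e)]
    constructor
    · intro h
      have := iterateFrobenius_inj K p κ
      exact this (by rw [iterateFrobenius_def, iterateFrobenius_def]; exact h)
    · intro h; rw [← h]
  have hH : ∀ x, evc K χ x ∈ V → ∀ η, Φ η = 0 → evc K χ (x + η) ∈ V := by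
    intro x hx η hη
    rw [hmem] at hx ⊢
    intro e
    rw [evc_add, hx e, Finset.sum_mul]
    refine Finset.sum_congr rfl fun j hj => ?_
    rw [evc_add]
    by_cases hu : u j e = 0
    · simp [hu]
    · rw [hkerΦ η hη e j hj hu]; ring
  obtain ⟨m, hm, hYm⟩ := hY n₀
  refine ⟨κ * m, Nat.mul_pos hκ hm, ?_⟩
  rw [pow_mul, ← hq]
  refine core_step (H := (LinearMap.ker Φ).toAddSubgroup) (Y := Y n₀) h hm
    (fun x hx η hη => hH x hx η hη) (fun x hx => (hφ x).2 hx) ?_ (hYZ n₀) ?_ ?_ ?_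
  · intro n b c S hS1 hS2 s hs
    have hQ : (q ^ m) ^ n = p ^ (κ * m * n) := by rw [hq, pow_mul, pow_mul]
    rw [hQ] at hS1 hS2
    let D : (E → K) →ₗ[K] (E → K) := LinearMap.pi fun e => (evc K χ b e) • LinearMap.proj e
    have hD : ∀ v e, D v e = evc K χ b e * v e := fun v e => rfl
    have := unconstrain p (κ * m * n) (evc K χ c) (evc_ne_zero χ c) (evc K χ '' S) (V.comap D)
      ?_ ?_ _ ⟨s, hs, rfl⟩
    · rw [Submodule.mem_comap] at this
      change evc K χ (b + s) ∈ V
      convert this using 1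
      funext e
      rw [hD, evc_add]
    · rintro _ ⟨t, ht, rfl⟩
      refine ⟨_, hS1 t ht, ?_⟩
      funext e
      rw [evc_add, evc_nsmul, mul_comm]
    · rintro _ ⟨t, ht, rfl⟩
      rw [Submodule.mem_comap]
      have : evc K χ _ ∈ V := hS2 t ht
      convert this using 1
      funext e
      rw [hD, evc_add, evc_add, evc_nsmul, mul_comm (evc K χ c e)]
  · rw [hq, ← pow_mul, mul_comm, pow_mul]; exact hYm.pow hκ
  · intro z hz
    by_cases hc : clsSpan p V χ z n₀ = V
    · right
      obtain ⟨γ, η, hη, e⟩ := hn₀ z (hzy n₀ z hc)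
      refine ⟨γ, ?_, η, hη, e⟩
      change evc K χ γ ∈ V
      rw [← hφ]
      have := hH z hz (-η) (by rw [map_neg, hη, neg_zero])
      rwa [e, add_neg_cancel_right] at this
    · left
      exact hYc n₀ z hz hc
  · obtain ⟨F, hF⟩ := Set.exists_subset_bijOn {z | ∀ n : ℕ, ∃ γ,
      Φ z = Φ (q ^ n • γ - geo q n • h)} Φ
    refine ⟨F, ?_, ?_⟩
    · refine Set.Finite.of_finite_image ?_ hF.2.injOn
      rw [hF.2.image_eq]
      exact hfin
    · intro z _ hz
      have : Φ z ∈ Φ '' F := by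
        rw [hF.2.image_eq]
        refine ⟨z, ?_, rfl⟩
        intro n
        obtain ⟨γ, η, hη, e⟩ := hz n
        refine ⟨γ, ?_⟩
        rw [e, map_add, show Φ η = 0 from hη, add_zero]
      obtain ⟨f, hf, e⟩ := this
      exact ⟨f, hf, show Φ (z - f) = 0 by rw [map_sub, e, sub_self]⟩

end core


/-- A simple way to produce groupless `F`-sets. -/
theorem groupless_of {K : Type*} [Field K] [IsAlgClosed K] (p : ℕ) (hp : p.Prime) {N : ℕ}
    (Γ : Subgroup (Fin N → Kˣ)) (κ : ℕ) (hκ : 1 ≤ κ) (r : ℕ) (g0 : Fin N → Kˣ)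
    (g : Fin r → Fin N → Kˣ) (h0 : g0 ∈ Γ) (hg : ∀ i, g i ∈ Γ) :
    IsGrouplessFSet p Γ {x | ∃ n : Fin r → ℕ, x = g0 * ∏ i, g i ^ geo (p ^ κ) (n i)} := by
  have hq : 1 < p ^ κ := Nat.one_lt_pow (by omega) hp.one_lt
  have hroot : ∀ y : Fin N → Kˣ, ∃ a : Fin N → Kˣ, a ^ (p ^ κ - 1) = y := by
    intro y
    have : ∀ j, ∃ z : Kˣ, z ^ (p ^ κ - 1) = y j := by
      intro j
      obtain ⟨z, hz⟩ := IsAlgClosed.exists_pow_nat_eq (y j : K) (n := p ^ κ - 1) (by omega)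
      have hz0 : z ≠ 0 := by
        rintro rfl
        rw [zero_pow (by omega)] at hz
        exact (y j).ne_zero hz.symm
      exact ⟨Units.mk0 z hz0, Units.ext (by simpa using hz)⟩
    choose a ha using this
    exact ⟨a, funext ha⟩
  choose α hα using fun i => hroot (g i)
  refine ⟨?_, κ, hκ, r, 1, le_rfl, g0 * (∏ i, α i)⁻¹, α, ?_⟩
  · rintro _ ⟨n, rfl⟩
    exact Γ.mul_mem h0 (Γ.prod_mem fun i _ => Γ.pow_mem (hg i) _)
  · have key : ∀ n : Fin r → ℕ, g0 * (∏ i, α i)⁻¹ * ∏ i, α i ^ ((p ^ κ) ^ (1 * n i)) =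
        g0 * ∏ i, g i ^ geo (p ^ κ) (n i) := by
      intro n
      have h1 : ∀ i, α i ^ ((p ^ κ) ^ (1 * n i)) = α i * g i ^ geo (p ^ κ) (n i) := by
        intro i
        have := geo_int (p ^ κ) (n i)
        have e : (p ^ κ) ^ (1 * n i) = 1 + (p ^ κ - 1) * geo (p ^ κ) (n i) := by
          zify [hq.le]
          push_cast at this
          rw [this, one_mul]
          ring
        rw [e, pow_add, pow_one, pow_mul, hα]
      rw [Finset.prod_congr rfl fun i _ => h1 i, Finset.prod_mul_distrib]
      group
    ext x
    constructor
    · rintro ⟨n, rfl⟩; exact ⟨n, (key n).symm⟩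
    · rintro ⟨n, rfl⟩; exact ⟨n, key n⟩

theorem sum_eq_zero_of_factors {L W ι β : Type*} [Field L] [AddCommGroup W] [Module L W]
    (v : β → W) (hv : LinearIndependent L v) (s : Finset ι) (ρ : ι → β) (c y : ι → L)
    (h : ∑ d ∈ s, c d • v (ρ d) = 0) (hy : ∀ d d', ρ d = ρ d' → y d = y d') :
    ∑ d ∈ s, c d * y d = 0 := by
  have h1 : ∑ d ∈ s, Finsupp.single (ρ d) (c d) = 0 := by
    apply hv
    rw [map_sum, map_zero]
    simpa [Finsupp.linearCombination_single] using h
  have h2 := congrArg (Finsupp.linearCombination L (Function.extend ρ y 0)) h1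
  rw [map_sum, map_zero] at h2
  simp only [Finsupp.linearCombination_single, smul_eq_mul] at h2
  rw [← h2]
  refine Finset.sum_congr rfl fun d _ => ?_
  rw [Function.FactorsThrough.extend_apply (fun a b hab => hy a b hab)]

/-- Monomial character attached to an integer vector. -/
theorem monomialMap_apply' {K : Type*} [Field K] {N M : ℕ} (A : Fin M → Fin N → ℤ)
    (x : Fin N → Kˣ) (i : Fin M) : monomialMap A x i = ∏ j, x j ^ A i j := rfl

theorem monomialMap_surjective {K : Type*} [Field K] [IsAlgClosed K] {N M : ℕ}
    (A : Fin M → Fin N → ℤ) (hA : LinearIndependent ℤ A) :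
    Function.Surjective (monomialMap (K := K) A) := by
  intro y
  have hdiv : ∀ (n : ℤ), n ≠ 0 → Function.Surjective fun a : Additive Kˣ => n • a := by
    intro n hn a
    have hn' : n.natAbs ≠ 0 := Int.natAbs_ne_zero.2 hn
    obtain ⟨z, hz⟩ := IsAlgClosed.exists_pow_nat_eq ((a.toMul : Kˣ) : K) (n := n.natAbs) (by omega)
    have hz0 : z ≠ 0 := by
      rintro rfl
      rw [zero_pow hn'] at hz
      exact (a.toMul : Kˣ).ne_zero hz.symm
    have hz1 : n.natAbs • Additive.ofMul (Units.mk0 z hz0) = a := by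
      apply Additive.toMul.injective
      exact Units.ext (by simpa using hz)
    rcases Int.natAbs_eq n with h | h
    · refine ⟨Additive.ofMul (Units.mk0 z hz0), ?_⟩
      simp only
      rw [h, natCast_zsmul, hz1]
    · refine ⟨-Additive.ofMul (Units.mk0 z hz0), ?_⟩
      simp only
      rw [h, neg_smul, smul_neg, neg_neg, natCast_zsmul, hz1]
  letI : DivisibleBy (Additive Kˣ) ℤ := divisibleByOfSMulRightSurj _ _ (fun {n} hn => hdiv n hn)
  obtain ⟨h, hh⟩ := (Module.Baer.of_divisible (Additive Kˣ)).extension_property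
    (Fintype.linearCombination ℤ A) (linearIndependent_iff_injective_fintypeLinearCombination.1 hA)
    (Fintype.linearCombination ℤ fun i => Additive.ofMul (y i))
  refine ⟨fun j => (h (Pi.single j 1)).toMul, ?_⟩
  funext i
  rw [monomialMap_apply']
  have h1 := LinearMap.congr_fun hh (Pi.single i 1)
  rw [LinearMap.comp_apply, Fintype.linearCombination_apply_single,
    Fintype.linearCombination_apply_single, one_smul, one_smul] at h1
  have h2 : A i = ∑ j, A i j • (Pi.single j 1 : Fin N → ℤ) := by
    funext l
    simp [Finset.sum_apply, Pi.single_apply]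
  rw [h2, map_sum] at h1
  have h3 := congrArg Additive.toMul h1
  rw [toMul_sum] at h3
  simp only [map_smul, toMul_zsmul, toMul_ofMul] at h3
  exact h3


/-- The integer vectors whose character is trivial on `H`. -/
def annih {K : Type*} [Field K] {N : ℕ} (H : Subgroup (Fin N → Kˣ)) :
    Submodule ℤ (Fin N → ℤ) where
  carrier := {a | ∀ x ∈ H, ∏ j, x j ^ a j = 1}
  zero_mem' := by
    intro x _
    simp
  add_mem' := by
    intro a b ha hb x hx
    have h1 := ha x hx
    have h2 := hb x hx
    simp only [Pi.add_apply, zpow_add, Finset.prod_mul_distrib, h1, h2, mul_one]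
  smul_mem' := by
    intro c a ha x hx
    have h1 := ha x hx
    simp only [Pi.smul_apply, smul_eq_mul, mul_comm c, zpow_mul, Finset.prod_zpow, h1, one_zpow]

theorem finite_of_annih {K : Type*} [Field K] {N : ℕ} (H : Subgroup (Fin N → Kˣ))
    (h : N ≤ Module.finrank ℤ (annih H)) : (H : Set (Fin N → Kˣ)).Finite := by
  have h1 := Submodule.finrank_quotient_add_finrank (annih H)
  rw [Module.finrank_fin_fun] at h1
  have h2 : Module.finrank ℤ ((Fin N → ℤ) ⧸ annih H) = 0 := by omega
  rw [Module.finrank_eq_zero_iff_isTorsion] at h2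
  have : Finite ((Fin N → ℤ) ⧸ annih H) := Module.finite_of_fg_torsion _ h2
  have hD : 0 < Nat.card ((Fin N → ℤ) ⧸ annih H) := Nat.card_pos
  set D := Nat.card ((Fin N → ℤ) ⧸ annih H)
  have hmem : ∀ a : Fin N → ℤ, D • a ∈ annih H := by
    intro a
    rw [← Submodule.Quotient.mk_eq_zero, Submodule.Quotient.mk_smul]
    exact card_nsmul_eq_zero'
  have hfin := finite_smul_eq K (Fin N) D hD 0
  refine (hfin.image (fun c : Fin N → Additive Kˣ => fun j => (c j).toMul)).subset ?_
  intro x hx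
  refine ⟨fun j => Additive.ofMul (x j), ?_, rfl⟩
  funext j
  have h3 := hmem (Pi.single j 1) x hx
  rw [Finset.prod_eq_single j] at h3
  · apply Additive.toMul.injective
    simpa using h3
  · intro i _ hij
    simp [Pi.single_apply, hij]
  · simp

theorem mul_mem_of_annih {K : Type*} [Field K] {N : ℕ} {X : Set (Fin N → Kˣ)}
    (hX : IsTorusSubvariety K X) (H : Subgroup (Fin N → Kˣ)) (s x : Fin N → Kˣ)
    (hs : ∀ η ∈ H, s * η ∈ X) (hx : ∀ a ∈ annih H, ∏ j, x j ^ a j = 1) : s * x ∈ X := by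
  obtain ⟨𝒮, rfl⟩ := hX
  intro f hf
  have hs' : ∀ η ∈ H, MvPolynomial.eval (fun i => ((s * η) i : K)) f = 0 :=
    fun η hη => hs η hη f hf
  have hexp : ∀ y : Fin N → Kˣ, MvPolynomial.eval (fun i => ((s * y) i : K)) f =
      ∑ d ∈ f.support, (MvPolynomial.coeff d f * ((∏ i, s i ^ d i : Kˣ) : K)) *
        ((∏ i, y i ^ d i : Kˣ) : K) := by
    intro y
    rw [MvPolynomial.eval_eq']
    refine Finset.sum_congr rfl fun d _ => ?_
    simp only [Pi.mul_apply, Units.val_mul, mul_pow, Finset.prod_mul_distrib, Units.coe_prod,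
      Units.val_pow_eq_pow_val, mul_assoc]
  rw [hexp]
  let ρ : (Fin N →₀ ℕ) → (H →* K) := fun d =>
    { toFun := fun y => ((∏ i, (y : Fin N → Kˣ) i ^ d i : Kˣ) : K)
      map_one' := by simp
      map_mul' := fun y z => by simp [mul_pow, Finset.prod_mul_distrib] }
  refine sum_eq_zero_of_factors (fun f : H →* K => (f : H → K))
    (linearIndependent_monoidHom H K) _ ρ _ _ ?_ ?_
  · funext y
    have := hs' y y.2
    rw [hexp] at this
    rw [Finset.sum_apply]
    exact this
  · intro d d' hdd
    congr 1
    have h1 : (fun i => (d i : ℤ) - d' i) ∈ annih H := by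
      intro y hy
      have h2 := DFunLike.congr_fun hdd ⟨y, hy⟩
      have h3 : ∏ i, y i ^ d i = ∏ i, y i ^ d' i := Units.ext h2
      simp only [zpow_sub, Finset.prod_mul_distrib, zpow_natCast, Finset.prod_inv_distrib, h3,
        mul_inv_cancel]
    have h2 := hx _ h1
    simp only [zpow_sub, Finset.prod_mul_distrib, zpow_natCast, Finset.prod_inv_distrib] at h2
    exact mul_inv_eq_one.1 h2

theorem nested_to_fsets {K : Type*} [Field K] [IsAlgClosed K] (p : ℕ) (hp : p.Prime)
    {N : ℕ} {X : Set (Fin N → Kˣ)} (hX : IsTorusSubvariety K X)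
    (Γ : Subgroup (Fin N → Kˣ)) (κ : ℕ) (hκ : 1 ≤ κ) (r : ℕ) (g0 : Fin N → Kˣ)
    (g : Fin r → Fin N → Kˣ) (h0 : g0 ∈ Γ) (hg : ∀ i, g i ∈ Γ) (H : Subgroup (Fin N → Kˣ))
    (hH : H ≤ Γ)
    (hSX : ∀ n : Fin r → ℕ, ∀ η ∈ H, (g0 * ∏ i, g i ^ geo (p ^ κ) (n i)) * η ∈ X) :
    ∃ T : Set (Set (Fin N → Kˣ)), T.Finite ∧
      (∀ S ∈ T, IsGrouplessFSet p Γ S ∨ IsGeneralizedFSet p Γ S) ∧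
      (∀ S ∈ T, S ⊆ X ∩ Γ) ∧
      ∀ n : Fin r → ℕ, ∀ η ∈ H, (g0 * ∏ i, g i ^ geo (p ^ κ) (n i)) * η ∈ ⋃₀ T := by
  by_cases hfin : (H : Set (Fin N → Kˣ)).Finite
  · refine ⟨(fun η => {x | ∃ n : Fin r → ℕ, x = (g0 * η) * ∏ i, g i ^ geo (p ^ κ) (n i)}) '' H,
      hfin.image _, ?_, ?_, ?_⟩
    · rintro _ ⟨η, hη, rfl⟩
      exact Or.inl (groupless_of p hp Γ κ hκ r _ g (Γ.mul_mem h0 (hH hη)) hg)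
    · rintro _ ⟨η, hη, rfl⟩ x hx
      refine ⟨?_, (groupless_of p hp Γ κ hκ r _ g (Γ.mul_mem h0 (hH hη)) hg).1 hx⟩
      obtain ⟨n, rfl⟩ := hx
      rw [mul_right_comm]
      exact hSX n η hη
    · intro n η hη
      exact ⟨_, ⟨η, hη, rfl⟩, n, by rw [mul_right_comm]⟩
  · let M := Module.finrank ℤ (annih H)
    have hM : M < N := by
      by_contra hc
      exact hfin (finite_of_annih H (not_lt.1 hc))
    let b : Module.Basis (Fin M) ℤ (annih H) := Module.finBasis ℤ (annih H)
    let A : Fin M → Fin N → ℤ := fun i => (b i : Fin N → ℤ)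
    have hA : LinearIndependent ℤ A :=
      b.linearIndependent.map' (annih H).subtype (Submodule.ker_subtype _)
    have hker : ∀ x : Fin N → Kˣ, monomialMap A x = 1 → ∀ a ∈ annih H, ∏ j, x j ^ a j = 1 := by
      intro x hx a ha
      have h1 : annih H ≤ annih (Subgroup.zpowers x) := by
        have h2 : annih H = Submodule.span ℤ (Set.range A) := by
          have := congrArg (Submodule.map (annih H).subtype) b.span_eq
          rw [Submodule.map_span, ← Set.range_comp, Submodule.map_subtype_top] at this
          exact this.symm
        rw [h2, Submodule.span_le]
        rintro _ ⟨i, rfl⟩ y ⟨m, rfl⟩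
        have h3 := congrFun hx i
        rw [monomialMap_apply'] at h3
        have h4 : ∀ j, (x ^ m) j ^ A i j = (x j ^ A i j) ^ m := by
          intro j
          rw [Pi.pow_apply, ← zpow_mul, mul_comm, zpow_mul]
        change ∏ j, (x ^ m) j ^ A i j = 1
        rw [Finset.prod_congr rfl fun j _ => h4 j, Finset.prod_zpow, h3, Pi.one_apply, one_zpow]
      exact h1 ha x (Subgroup.mem_zpowers x)
    have hHker : ∀ η ∈ H, monomialMap A η = 1 := by
      intro η hη
      funext i
      exact (b i).2 η hη
    let S₀ : Set (Fin M → Kˣ) := {x | ∃ n : Fin r → ℕ, x = monomialMap A g0 *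
      ∏ i, (monomialMap A (g i)) ^ geo (p ^ κ) (n i)}
    have hmap : ∀ n : Fin r → ℕ, monomialMap A (g0 * ∏ i, g i ^ geo (p ^ κ) (n i)) =
        monomialMap A g0 * ∏ i, (monomialMap A (g i)) ^ geo (p ^ κ) (n i) := by
      intro n
      simp [map_mul, map_prod, map_pow]
    refine ⟨{{x | x ∈ Γ ∧ monomialMap A x ∈ S₀}}, Set.finite_singleton _, ?_, ?_, ?_⟩
    · rintro S rfl
      right
      exact ⟨M, hM, A, monomialMap_surjective A hA, S₀,
        groupless_of p hp _ κ hκ r _ _ ⟨g0, h0, rfl⟩ (fun i => ⟨g i, hg i, rfl⟩), rfl⟩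
    · rintro S rfl x ⟨hxΓ, n, hn⟩
      refine ⟨?_, hxΓ⟩
      rw [← hmap] at hn
      have := mul_mem_of_annih hX H (g0 * ∏ i, g i ^ geo (p ^ κ) (n i))
        ((g0 * ∏ i, g i ^ geo (p ^ κ) (n i))⁻¹ * x) (hSX n)
        (hker _ (by rw [map_mul, map_inv, hn, inv_mul_cancel]))
      rwa [mul_inv_cancel_left] at this
    · intro n η hη
      refine ⟨_, rfl, Γ.mul_mem (Γ.mul_mem h0 (Γ.prod_mem fun i _ => Γ.pow_mem (hg i) _)) (hH hη),
        n, ?_⟩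
      rw [map_mul, hHker η hη, mul_one, hmap]


theorem module_finite_additive {G : Type*} [CommGroup G] (Γ : Subgroup G) (h : Γ.FG) :
    Module.Finite ℤ (Additive Γ) := by
  have h1 : Group.FG Γ := (Group.fg_iff_subgroup_fg Γ).2 h
  have h2 : AddGroup.FG (Additive Γ) := GroupFG.iff_add_fg.1 h1
  exact Module.Finite.iff_addGroup_fg.2 h2

theorem exists_nestU (K : Type*) [Field K] [IsAlgClosed K] (p : ℕ) [hp : Fact p.Prime] [CharP K p]
    (N : ℕ) (X : Set (Fin N → Kˣ)) (hX : IsTorusSubvariety K X)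
    (Γ : Subgroup (Fin N → Kˣ)) (hΓ : Γ.FG) :
    ∃ κ, 1 ≤ κ ∧ NestU (p ^ κ) {x : Additive Γ | ((x.toMul : Γ) : Fin N → Kˣ) ∈ X} := by
  classical
  have := module_finite_additive Γ hΓ
  letI : Algebra (ZMod p) K := ZMod.algebra K p
  -- the finitely generated field of definition of `Γ`
  obtain ⟨gen, hgen⟩ := hΓ
  let B : Set K := ⋃ i : Fin N, (fun x : Fin N → Kˣ => (x i : K)) '' (gen : Set (Fin N → Kˣ))
  have hB : B.Finite := Set.finite_iUnion fun i => gen.finite_toSet.image _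
  let k := IntermediateField.adjoin (ZMod p) B
  have hess : Algebra.EssFiniteType (ZMod p) k :=
    IntermediateField.essFiniteType_iff.2 (IntermediateField.fg_adjoin_of_finite hB)
  let U : kˣ →* Kˣ := Units.map (algebraMap k K : k →* K)
  have hU : Function.Injective U := Units.map_injective (algebraMap k K).injective
  have hrange : ∀ x ∈ Γ, ∀ i, x i ∈ U.range := by
    intro x hx i
    have hle : Γ ≤ U.range.comap (Pi.evalMonoidHom (fun _ : Fin N => Kˣ) i) := by
      rw [← hgen, Subgroup.closure_le]
      intro y hy
      have hy1 : (y i : K) ∈ k := IntermediateField.subset_adjoin _ _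
        (Set.mem_iUnion.2 ⟨i, y, hy, rfl⟩)
      refine ⟨Units.mk0 (⟨(y i : K), hy1⟩ : k) ?_, ?_⟩
      · intro h
        exact (y i).ne_zero (congrArg Subtype.val h)
      · exact Units.ext rfl
    exact hle hx
  let c : Fin N → (Γ →* kˣ) := fun i => (MonoidHom.ofInjective hU).symm.toMonoidHom.comp
    (((Pi.evalMonoidHom (fun _ : Fin N => Kˣ) i).comp Γ.subtype).codRestrict U.range
      (fun x => hrange x x.2 i))
  have hc : ∀ i (x : Γ), algebraMap k K (c i x : k) = ((x : Fin N → Kˣ) i : K) := by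
    intro i x
    have h1 : U (c i x) = (x : Fin N → Kˣ) i :=
      congrArg Subtype.val ((MonoidHom.ofInjective hU).apply_symm_apply
        ⟨(x : Fin N → Kˣ) i, hrange x x.2 i⟩)
    exact congrArg Units.val h1
  obtain ⟨𝒮, rfl⟩ := hX
  obtain ⟨t, ht⟩ := IsNoetherian.noetherian (Ideal.span 𝒮)
  have hXt : ∀ x : Fin N → K, (∀ f ∈ 𝒮, MvPolynomial.eval x f = 0) ↔
      ∀ f ∈ t, MvPolynomial.eval x f = 0 := by
    intro x
    have h1 : ∀ T : Set (MvPolynomial (Fin N) K), (∀ f ∈ T, MvPolynomial.eval x f = 0) ↔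
        Ideal.span T ≤ RingHom.ker (MvPolynomial.eval x) := by
      intro T
      rw [Ideal.span_le]
      rfl
    rw [h1, ← ht]
    exact (h1 t).symm
  let E := {d : Fin N →₀ ℕ // d ∈ t.biUnion MvPolynomial.support}
  let V : Submodule K (E → K) :=
    { carrier := {v | ∀ f ∈ t, ∑ e : E, MvPolynomial.coeff e.1 f * v e = 0}
      zero_mem' := by intro f _; simp
      add_mem' := by
        intro v w hv hw f hf
        have h1 := hv f hf
        have h2 := hw f hf
        simp only [Pi.add_apply, mul_add, Finset.sum_add_distrib, h1, h2, add_zero]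
      smul_mem' := by
        intro a v hv f hf
        have h1 := hv f hf
        simp only [Pi.smul_apply, smul_eq_mul, mul_left_comm _ a, ← Finset.mul_sum, h1, mul_zero] }
  let χ : E → Additive Γ →+ Additive kˣ := fun e => MonoidHom.toAdditive (∏ i, (c i) ^ (e.1 i))
  have hχ : ∀ (x : Additive Γ) (e : E), evc K χ x e =
      ∏ i, (((x.toMul : Γ) : Fin N → Kˣ) i : K) ^ e.1 i := by
    intro x e
    have h1 : ((χ e x).toMul : kˣ) = ∏ i, (c i x.toMul) ^ (e.1 i) := by
      simp [χ, MonoidHom.finsetProd_apply]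
    simp only [evc, cval]
    rw [h1, Units.coe_prod, map_prod]
    refine Finset.prod_congr rfl fun i _ => ?_
    rw [Units.val_pow_eq_pow_val, map_pow, hc]
  obtain ⟨κ, hκ, h⟩ := core p (K := K) χ V
  refine ⟨κ, hκ, ?_⟩
  convert h using 1
  ext x
  change (∀ f ∈ 𝒮, MvPolynomial.eval _ f = 0) ↔ ∀ f ∈ t, _
  rw [hXt]
  refine forall₂_congr fun f hf => ?_
  rw [MvPolynomial.eval_eq']
  have hsub : f.support ⊆ t.biUnion MvPolynomial.support :=
    Finset.subset_biUnion_of_mem MvPolynomial.support hf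
  rw [Finset.sum_subset hsub (fun d _ hd => by
    rw [MvPolynomial.notMem_support_iff.1 hd, zero_mul])]
  rw [← Finset.sum_coe_sort]
  simp only [hχ]
  exact Iff.rfl

theorem mordell_lang_aux
    (K : Type*) [Field K] [IsAlgClosed K] (p : ℕ) (hp : p.Prime) [CharP K p]
    (N : ℕ) (X : Set (Fin N → Kˣ)) (hX : IsTorusSubvariety K X)
    (Γ : Subgroup (Fin N → Kˣ)) (hΓ : Γ.FG) :
    ∃ (n : ℕ) (Ss : Fin n → Set (Fin N → Kˣ)),
      (∀ i, IsGrouplessFSet p Γ (Ss i) ∨ IsGeneralizedFSet p Γ (Ss i)) ∧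
        X ∩ ↑Γ = ⋃ i, Ss i := by
  have : Fact p.Prime := ⟨hp⟩
  obtain ⟨κ, hκ, T, hT, hTn, hTu⟩ := exists_nestU K p N X hX Γ hΓ
  have hone : ∀ S ∈ T, ∃ R : Set (Set (Fin N → Kˣ)), R.Finite ∧
      (∀ S ∈ R, IsGrouplessFSet p Γ S ∨ IsGeneralizedFSet p Γ S) ∧
      (∀ S ∈ R, S ⊆ X ∩ Γ) ∧ ∀ x ∈ S, ((x.toMul : Γ) : Fin N → Kˣ) ∈ ⋃₀ R := by
    intro S hS
    obtain ⟨r, g0, g, H, hSeq⟩ := hTn S hS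
    let H' : Subgroup (Fin N → Kˣ) := (AddSubgroup.toSubgroup' H).map Γ.subtype
    have hval : ∀ (n : Fin r → ℕ) (η : Additive Γ),
        (((g0 + ∑ i, geo (p ^ κ) (n i) • g i + η).toMul : Γ) : Fin N → Kˣ) =
        (((g0.toMul : Γ) : Fin N → Kˣ) *
          ∏ i, (((g i).toMul : Γ) : Fin N → Kˣ) ^ geo (p ^ κ) (n i)) *
          ((η.toMul : Γ) : Fin N → Kˣ) := by
      intro n η
      simp [toMul_sum]
    obtain ⟨R, h1, h2, h3, h4⟩ := nested_to_fsets p hp hX Γ κ hκ r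
      ((g0.toMul : Γ) : Fin N → Kˣ) (fun i => (((g i).toMul : Γ) : Fin N → Kˣ))
      (g0.toMul : Γ).2 (fun i => ((g i).toMul : Γ).2) H' (by
        rintro _ ⟨η, -, rfl⟩
        exact η.2) (by
        rintro n _ ⟨η, hη, rfl⟩
        have h5 : g0 + ∑ i, geo (p ^ κ) (n i) • g i + Additive.ofMul η ∈
            {x : Additive Γ | ((x.toMul : Γ) : Fin N → Kˣ) ∈ X} := by
          rw [hTu]
          refine ⟨S, hS, ?_⟩
          rw [hSeq]
          exact ⟨n, _, hη, rfl⟩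
        have h6 : (((g0 + ∑ i, geo (p ^ κ) (n i) • g i + Additive.ofMul η).toMul : Γ) :
          Fin N → Kˣ) ∈ X := h5
        rw [hval] at h6
        exact h6)
    refine ⟨R, h1, h2, h3, ?_⟩
    intro x hx
    rw [hSeq] at hx
    obtain ⟨n, η, hη, rfl⟩ := hx
    rw [hval]
    exact h4 n _ ⟨η.toMul, hη, rfl⟩
  choose! R hR1 hR2 hR3 hR4 using hone
  have hfin : (⋃ S ∈ T, R S).Finite := hT.biUnion hR1
  obtain ⟨n, f, -, hf⟩ := hfin.fin_param
  have hmem : ∀ i, ∃ S ∈ T, f i ∈ R S := by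
    intro i
    have : f i ∈ ⋃ S ∈ T, R S := hf ▸ Set.mem_range_self i
    simpa using this
  refine ⟨n, f, ?_, ?_⟩
  · intro i
    obtain ⟨S, hS, hi⟩ := hmem i
    exact hR2 S hS _ hi
  · apply Set.Subset.antisymm
    · rintro x ⟨hxX, hxΓ⟩
      have h1 : Additive.ofMul (⟨x, hxΓ⟩ : Γ) ∈
        {x : Additive Γ | ((x.toMul : Γ) : Fin N → Kˣ) ∈ X} := hxX
      rw [hTu] at h1
      obtain ⟨S, hS, hxS⟩ := h1
      obtain ⟨Q, hQ, hxQ⟩ := hR4 S hS _ hxS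
      have : Q ∈ Set.range f := by
        rw [hf]
        exact Set.mem_biUnion hS hQ
      obtain ⟨i, rfl⟩ := this
      exact Set.mem_iUnion.2 ⟨i, hxQ⟩
    · refine Set.iUnion_subset fun i => ?_
      obtain ⟨S, hS, hi⟩ := hmem i
      exact hR3 S hS _ hi

/-- Main theorem of the paper (torus case): over an algebraically closed field `K` of
characteristic `p > 0`, the intersection of a subvariety `X` of `(Kˣ)^N` with a finitely
generated subgroup `Γ` of `(Kˣ)^N` is a union of finitely many groupless `F`-sets in `Γ`
together with finitely many generalized `F`-sets in `Γ`. -/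
theorem mordell_lang_torus_char_p
    (K : Type*) [Field K] [IsAlgClosed K] (p : ℕ) (hp : p.Prime) [CharP K p]
    (N : ℕ) (hN : 1 ≤ N) (X : Set (Fin N → Kˣ)) (hX : IsTorusSubvariety K X)
    (Γ : Subgroup (Fin N → Kˣ)) (hΓ : Γ.FG) :
    ∃ (n : ℕ) (Ss : Fin n → Set (Fin N → Kˣ)),
      (∀ i, IsGrouplessFSet p Γ (Ss i) ∨ IsGeneralizedFSet p Γ (Ss i)) ∧
        X ∩ ↑Γ = ⋃ i, Ss i := by
  exact mordell_lang_aux K p hp N X hX Γ hΓ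
end

section
/- (Moosa–Scanlon theorem, torus case.) Let K be an algebraically closed field of characteristic p > 0, let q be a power of p, let N ≥ 1, and let F = F_q be the Frobenius endomorphism of (Kˣ)^N acting coordinatewise by x ↦ x^q. Let X be a subvariety of (Kˣ)^N and let Γ be a finitely generated subgroup of (Kˣ)^N such that F^ℓ(Γ) ⊆ Γ for some ℓ ≥ 1. Then X ∩ Γ is a finite union of F-sets in Γ, i.e., of sets of the form S·B where S is a groupless F-set in Γ and B is a subgroup of Γ. -/
/-- `S` is a groupless `F`-set in the subgroup `Γ` of `(Kˣ)^N` for the `q`-power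
Frobenius `F = F_q : x ↦ x^q`: a subset of `Γ` of the form
`{α₀ · ∏_{i=1}^r F^{k·n_i}(α_i) : n_1, …, n_r ∈ ℕ}` with `r ≥ 0`, `k ≥ 1` and
`α₀, …, α_r ∈ (Kˣ)^N`. -/
def IsGrouplessFqSet {K : Type*} [Field K] (q : ℕ) {N : ℕ}
    (Γ : Subgroup (Fin N → Kˣ)) (S : Set (Fin N → Kˣ)) : Prop :=
  S ⊆ ↑Γ ∧ ∃ (r k : ℕ), 1 ≤ k ∧ ∃ (α₀ : Fin N → Kˣ) (α : Fin r → Fin N → Kˣ),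
    S = {g | ∃ n : Fin r → ℕ, g = α₀ * ∏ i : Fin r, (α i) ^ (q ^ (k * n i))}

/-- `T` is an `F`-set in `Γ`: a set of the form `S·B` where `S` is a groupless `F`-set
in `Γ` and `B` is a subgroup of `Γ`. -/
def IsFqSet {K : Type*} [Field K] (q : ℕ) {N : ℕ}
    (Γ : Subgroup (Fin N → Kˣ)) (T : Set (Fin N → Kˣ)) : Prop :=
  ∃ (S : Set (Fin N → Kˣ)) (B : Subgroup (Fin N → Kˣ)),
    IsGrouplessFqSet q Γ S ∧ B ≤ Γ ∧ T = {g | ∃ s ∈ S, ∃ b ∈ B, g = s * b}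


theorem ms_padic (p a : ℕ) (hp : p.Prime) (ha : 1 ≤ a) (d : ℤ) (hd : d ≠ 0) :
    ∃ c : ℕ, ∀ n : ℕ, ∀ k : ℤ, (((p ^ a) ^ (n + c) : ℕ) : ℤ) ∣ k * d → (((p ^ a) ^ n : ℕ) : ℤ) ∣ k := by
  have hp' : Prime (p : ℤ) := Nat.prime_iff_prime_int.mp hp
  have hfin : FiniteMultiplicity (p : ℤ) d :=
    FiniteMultiplicity.of_prime_left hp' hd
  obtain ⟨d', hd', hnd⟩ := hfin.exists_eq_pow_mul_and_not_dvd
  set v := multiplicity (p : ℤ) d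
  refine ⟨v, fun n k h => ?_⟩
  have hcop : IsCoprime ((p : ℤ) ^ (a * n)) d' :=
    ((Prime.coprime_iff_not_dvd hp').2 hnd).pow_left
  have h1 : (p : ℤ) ^ (a * n + v) ∣ k * d := by
    refine dvd_trans ?_ h
    push_cast
    rw [← pow_mul]
    apply pow_dvd_pow
    nlinarith
  have h2 : (p : ℤ) ^ (a * n) ∣ k * d' := by
    rw [hd', pow_add, show k * ((p : ℤ) ^ v * d') = (k * d') * (p : ℤ) ^ v by ring] at h1
    exact Int.dvd_of_mul_dvd_mul_right (pow_ne_zero _ hp'.ne_zero) h1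
  push_cast
  rw [← pow_mul]
  exact hcop.dvd_of_dvd_mul_right h2

theorem ms_gl_add {A : Type*} [AddCommGroup A] (p a q : ℕ) (hp : p.Prime) (ha : 1 ≤ a)
    (hq : q = p ^ a)
    (notors : ∀ x : A, p • x = 0 → x = 0)
    (det : ∀ x : A, (∀ φ : A →ₗ[ℤ] ℤ, φ x = 0) → ∃ m : ℕ, 0 < m ∧ m • x = 0) :
    ∀ (r : ℕ) (B : Submodule ℤ A), B.FG → Module.finrank ℤ B = r →
    ∃ c : ℕ, ∀ n : ℕ, ∀ x ∈ B, (∃ y, x = (q ^ (n + c)) • y) → ∃ b ∈ B, x = (q ^ n) • b := by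
  intro r
  induction r using Nat.strong_induction_on with
  | _ r ih =>
  intro B hB hr
  by_cases hall : ∀ φ : A →ₗ[ℤ] ℤ, ∀ b ∈ B, φ b = 0
  · refine ⟨0, fun n x hx _ => ?_⟩
    obtain ⟨m, hm, hmx⟩ := det x (fun φ => hall φ x hx)
    obtain ⟨u, m', hm', rfl⟩ := Nat.exists_eq_pow_mul_and_not_dvd hm.ne' p hp.ne_one
    have hm'x : m' • x = 0 := by
      have : ∀ u : ℕ, (p ^ u * m') • x = 0 → m' • x = 0 := by
        intro u
        induction u with
        | zero => simp
        | succ u ihu =>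
          intro h
          apply ihu
          apply notors
          rw [smul_smul, ← h]; congr 1; ring
      exact this u hmx
    have hcop : Nat.Coprime (q ^ n) m' := by
      rw [hq]
      exact (((Nat.Prime.coprime_iff_not_dvd hp).2 hm').pow_left _).pow_left _
    have hcop' : IsCoprime ((q ^ n : ℕ) : ℤ) (m' : ℤ) := Nat.isCoprime_iff_coprime.2 hcop
    obtain ⟨s, t, hst⟩ := hcop'
    refine ⟨s • x, B.smul_mem _ hx, ?_⟩
    have : x = (s * ((q ^ n : ℕ) : ℤ) + t * (m' : ℤ)) • x := by rw [hst, one_smul]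
    rw [add_smul, mul_smul t, natCast_zsmul, hm'x, smul_zero, add_zero, mul_comm, mul_smul, natCast_zsmul] at this
    exact this
  · push Not at hall
    obtain ⟨φ, b1, hb1, hφ⟩ := hall
    obtain ⟨d, hd⟩ := (IsPrincipalIdealRing.principal (B.map φ)).principal
    have hd0 : d ≠ 0 := by
      rintro rfl
      have : φ b1 ∈ B.map φ := Submodule.mem_map_of_mem hb1
      rw [hd] at this
      simp at this
      exact hφ this
    obtain ⟨b0, hb0, hb0d⟩ : d ∈ B.map φ := by rw [hd]; exact Submodule.mem_span_singleton_self d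
    have hBfin : Module.Finite ℤ B := Module.Finite.iff_fg.2 hB
    have hnoeth : IsNoetherian ℤ B := isNoetherian_of_isNoetherianRing_of_finite ℤ B
    let ψ := φ.domRestrict B
    have hB'eq : (LinearMap.ker ψ).map B.subtype = B ⊓ LinearMap.ker φ := by
      ext x; simp [ψ, LinearMap.domRestrict, and_comm]
    have hB' : (B ⊓ LinearMap.ker φ).FG := by
      rw [← hB'eq]
      exact (IsNoetherian.noetherian _).map _
    have hrk : Module.finrank ℤ (B ⊓ LinearMap.ker φ : Submodule ℤ A) < r := by
      rw [← hB'eq, LinearEquiv.finrank_eq ((Submodule.equivMapOfInjective B.subtype B.injective_subtype (LinearMap.ker ψ)).symm), ← hr]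
      have := Submodule.finrank_quotient_add_finrank (LinearMap.ker ψ)
      rw [LinearEquiv.finrank_eq (LinearMap.quotKerEquivRange ψ)] at this
      have hpos : 0 < Module.finrank ℤ (LinearMap.range ψ) := by
        have : Nontrivial (LinearMap.range ψ) := by
          refine ⟨⟨⟨φ b1, ⟨⟨b1, hb1⟩, rfl⟩⟩, 0, ?_⟩⟩
          intro h; exact hφ (congrArg Subtype.val h)
        exact Module.finrank_pos
      omega
    obtain ⟨c2, hc2⟩ := ih _ hrk _ hB' rfl
    obtain ⟨c1, hc1⟩ := ms_padic p a hp ha d hd0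
    refine ⟨c1 + c2, fun n x hx ⟨y, hy⟩ => ?_⟩
    have hxm : φ x ∈ B.map φ := Submodule.mem_map_of_mem hx
    rw [hd, Submodule.mem_span_singleton] at hxm
    obtain ⟨k, hk⟩ := hxm
    have hdiv : ((q ^ (n + c2) : ℕ) : ℤ) ∣ k := by
      rw [hq]
      apply hc1
      rw [← hq, ← smul_eq_mul, hk, hy, map_nsmul, show n + c2 + c1 = n + (c1 + c2) by ring]
      rw [nsmul_eq_mul]
      exact Dvd.intro _ rfl
    obtain ⟨k', rfl⟩ := hdiv
    obtain ⟨b', hb', hxb'⟩ := hc2 n (x - (((q ^ (n + c2) : ℕ) : ℤ) * k') • b0) (by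
      refine ⟨B.sub_mem hx (B.smul_mem _ hb0), ?_⟩
      simp [hb0d, ← hk]) ⟨q ^ c1 • y - k' • b0, by
        rw [smul_sub, hy, smul_smul, mul_smul, natCast_zsmul]
        congr 2
        ring⟩
    refine ⟨b' + (q ^ c2) • k' • b0, B.add_mem hb'.1 (B.smul_of_tower_mem _ (B.smul_mem _ hb0)), ?_⟩
    rw [sub_eq_iff_eq_add] at hxb'
    rw [hxb', smul_add, mul_smul, natCast_zsmul, pow_add, mul_smul]

theorem ms_gl {A : Type*} [CommGroup A] (p a q : ℕ) (hp : p.Prime) (ha : 1 ≤ a)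
    (hq : q = p ^ a)
    (notors : ∀ x : A, x ^ p = 1 → x = 1)
    (det : ∀ x : A, (∀ φ : A →* Multiplicative ℤ, φ x = 1) → ∃ m : ℕ, 0 < m ∧ x ^ m = 1)
    (B : Subgroup A) (hB : B.FG) :
    ∃ c : ℕ, ∀ n : ℕ, ∀ x ∈ B, (∃ y, x = y ^ (q ^ (n + c))) → ∃ b ∈ B, x = b ^ (q ^ n) := by
  have hB2 : (AddSubgroup.toIntSubmodule (Subgroup.toAddSubgroup B)).FG := by
    rw [Submodule.fg_iff_addSubgroup_fg]
    simpa using (Subgroup.fg_iff_add_fg B).1 hB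
  obtain ⟨c, hc⟩ := ms_gl_add (A := Additive A) p a q hp ha hq (fun x hx => notors x.toMul hx)
    (fun x hx => by
      obtain ⟨m, hm, h⟩ := det x.toMul (fun φ => hx (MonoidHom.toAdditiveLeft φ).toIntLinearMap)
      exact ⟨m, hm, h⟩) _ _ hB2 rfl
  exact ⟨c, fun n x hx ⟨y, hy⟩ => hc n (Additive.ofMul x) hx ⟨Additive.ofMul y, hy⟩⟩


open IntermediateField in
theorem ms_val_aux {k L : Type*} [Field k] [Field L] [Algebra k L] [Algebra.EssFiniteType k L]
    (z : Lˣ) (hz : Transcendental k (z : L)) : ∃ φ : Lˣ →* Multiplicative ℤ, φ z ≠ 1 := by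
  have hind : AlgebraicIndepOn k id ({(z : L)} : Set L) := by
    change AlgebraicIndependent k (fun x : ({(z : L)} : Set L) => id x.1)
    exact algebraicIndependent_unique_type_iff.2 hz
  obtain ⟨t, hzt, ht⟩ := exists_isTranscendenceBasis_superset hind
  have hzt' : (z : L) ∈ t := hzt rfl
  let M : IntermediateField k L := adjoin k (t \ {(z : L)})
  have hzM : Transcendental M (z : L) := by
    have h1 := ht.1.transcendental_adjoin (s := {(⟨z, hzt'⟩ : t)}ᶜ) (i := ⟨z, hzt'⟩) (by simp)
    have h2 : (Subtype.val '' ({(⟨z, hzt'⟩ : t)}ᶜ : Set t)) = t \ {(z : L)} := by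
      ext x; simp
    rw [h2] at h1
    exact transcendental_adjoin_iff.2 h1
  let E := M⟮(z : L)⟯
  have hle : ∀ x ∈ adjoin k t, x ∈ E := by
    have : adjoin k t ≤ E.restrictScalars k := by
      rw [adjoin_le_iff]
      intro x hx
      by_cases hxz : x = z
      · subst hxz; exact mem_adjoin_simple_self M _
      · exact E.algebraMap_mem (⟨x, subset_adjoin k _ ⟨hx, hxz⟩⟩ : M)
    exact this
  have halg : Algebra.IsAlgebraic E L := by
    have := ht.isAlgebraic_field
    rw [Subtype.range_coe] at this
    let i : adjoin k t →+* E := Subring.inclusion (S := (adjoin k t).toSubring) (T := E.toSubring) hle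
    let : Algebra (adjoin k t) E := i.toAlgebra
    have : IsScalarTower (adjoin k t) E L := IsScalarTower.of_algebraMap_eq (congrFun rfl)
    exact Algebra.IsAlgebraic.tower_top (K := adjoin k t) E
  have : IsScalarTower k E L := IsScalarTower.of_algebraMap_eq (fun x => rfl)
  have : Algebra.EssFiniteType E L := Algebra.EssFiniteType.of_comp k E L
  have hfin : Module.Finite E L := Algebra.finite_of_essFiniteType_of_isAlgebraic
  let e := RatFunc.algEquivOfTranscendental (K := M) (z : L) hzM
  let deg : (RatFunc M)ˣ →* Multiplicative ℤ :=
    { toFun := fun x => Multiplicative.ofAdd (RatFunc.intDegree (x : RatFunc M))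
      map_one' := by simp
      map_mul' := fun x y => by
        rw [Units.val_mul, RatFunc.intDegree_mul x.ne_zero y.ne_zero, ofAdd_add] }
  let φ := deg.comp ((Units.map (e.symm : E →* RatFunc M)).comp (Units.map (Algebra.norm E : L →* E)))
  refine ⟨φ, ?_⟩
  have hzE : (z : L) = algebraMap E L (AdjoinSimple.gen M (z : L)) := rfl
  have h1 : φ z = Multiplicative.ofAdd ((Module.finrank E L : ℕ) : ℤ) := by
    change Multiplicative.ofAdd (RatFunc.intDegree (e.symm (Algebra.norm E (z : L)))) = _
    have : Algebra.norm E (z : L) = (AdjoinSimple.gen M (z : L)) ^ (Module.finrank E L) := by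
      conv_lhs => rw [hzE]
      rw [Algebra.norm_algebraMap]
    rw [this, map_pow, RatFunc.algEquivOfTranscendental_symm_gen]
    congr 1
    generalize Module.finrank E L = n
    induction n with
    | zero => simp
    | succ n ih =>
      rw [pow_succ, RatFunc.intDegree_mul (pow_ne_zero _ RatFunc.X_ne_zero) RatFunc.X_ne_zero, ih]
      simp
  rw [h1]
  have : 0 < Module.finrank E L := Module.finrank_pos
  intro h
  have := Multiplicative.ofAdd.injective (h.trans ofAdd_zero.symm)
  omega

theorem ms_val {k L : Type*} [Field k] [Finite k] [Field L] [Algebra k L] [Algebra.EssFiniteType k L]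
    (z : Lˣ) (hz : ∀ φ : Lˣ →* Multiplicative ℤ, φ z = 1) : ∃ m : ℕ, 0 < m ∧ z ^ m = 1 := by
  by_cases h : Transcendental k (z : L)
  · obtain ⟨φ, hφ⟩ := ms_val_aux z h
    exact absurd (hz φ) hφ
  · have halg : IsAlgebraic k (z : L) := by simpa [Transcendental] using h
    have hzint : IsIntegral k (z : L) := halg.isIntegral
    have : Module.Finite k (IntermediateField.adjoin k {(z : L)}) :=
      IntermediateField.adjoin.finiteDimensional hzint
    have hf : Finite (IntermediateField.adjoin k {(z : L)}) := Module.finite_of_finite k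
    let z' : IntermediateField.adjoin k {(z : L)} := IntermediateField.AdjoinSimple.gen k (z : L)
    have hz'0 : z' ≠ 0 := by
      intro h0
      exact z.ne_zero (congrArg Subtype.val h0)
    let u := Units.mk0 z' hz'0
    refine ⟨Nat.card (IntermediateField.adjoin k {(z : L)})ˣ, Nat.card_pos, ?_⟩
    have : u ^ Nat.card (IntermediateField.adjoin k {(z : L)})ˣ = 1 := pow_card_eq_one'
    ext
    rw [Units.ext_iff, Units.val_pow_eq_pow_val, Subtype.ext_iff] at this
    rw [Units.val_pow_eq_pow_val]
    exact this


open Finset in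
theorem ms_frob_sum {R : Type*} [CommRing R] (p a q : ℕ) [Fact p.Prime] [CharP R p] (hq : q = p ^ a)
    {ι : Type*} (s : Finset ι) (f : ι → R) (n : ℕ) :
    (∑ i ∈ s, f i) ^ (q ^ n) = ∑ i ∈ s, f i ^ (q ^ n) := by
  subst hq
  rw [← pow_mul, sum_pow_char_pow]

theorem ms_frob_inj {R : Type*} [CommRing R] [IsDomain R] (p a q : ℕ) [Fact p.Prime] [CharP R p]
    (hq : q = p ^ a) (n : ℕ) {x y : R} (h : x ^ (q ^ n) = y ^ (q ^ n)) : x = y := by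
  subst hq
  rw [← pow_mul] at h
  exact iterateFrobenius_inj R p (a * n) h

/-- exponents lemma -/
theorem ms_exp {K : Type*} [Field K] [IsAlgClosed K] (p a q : ℕ) [Fact p.Prime] [CharP K p]
    (hq : q = p ^ a) {ι : Type*} [Fintype ι] (k : ℕ) (y : ι → K) :
    ∃ s : Finset ℕ, ∀ c : ι → K, ∀ t : ℕ,
      (∀ u ∈ s, ∑ i, c i * y i ^ (q ^ (k * (t + 1 + u))) = 0) → ∑ i, c i * y i ^ (q ^ (k * t)) = 0 := by
  have hdep : ¬ LinearIndependent K (fun (t : ℕ) (i : ι) => y i ^ (q ^ (k * t))) := by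
    intro h
    have := h.finite
    exact not_finite ℕ
  rw [not_linearIndependent_iff] at hdep
  obtain ⟨s, g, hs, hne⟩ := hdep
  have hne' : ∃ i, i ∈ s ∧ g i ≠ 0 := hne
  classical
  let m := Nat.find hne'
  have hm := Nat.find_spec hne'
  have hmin : ∀ u ∈ s, u < m → g u = 0 := by
    intro u hu hlt
    by_contra hgu
    exact Nat.find_min hne' hlt ⟨hu, hgu⟩
  have hp : p.Prime := Fact.out
  have hqpos : 0 < q := by rw [hq]; exact pow_pos hp.pos a
  have hroot : ∀ u, ∃ d : K, d ^ (q ^ (k * m)) = g u := fun u =>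
    IsAlgClosed.exists_pow_nat_eq _ (pow_pos hqpos _)
  choose d hd using hroot
  have hrel : ∀ i, ∑ u ∈ s, g u * y i ^ (q ^ (k * u)) = 0 := by
    intro i
    have := congrFun hs i
    simpa [Finset.sum_apply] using this
  let s' := s.filter (fun u => m ≤ u)
  have hrel' : ∀ i, ∑ u ∈ s', d u * y i ^ (q ^ (k * (u - m))) = 0 := by
    intro i
    apply ms_frob_inj p a q hq (k * m)
    rw [ms_frob_sum p a q hq, zero_pow (pow_pos hqpos _).ne', ← hrel i, Finset.sum_filter]
    refine Finset.sum_congr rfl fun u hu => ?_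
    split_ifs with h
    · rw [mul_pow, hd, ← pow_mul, ← pow_add, ← mul_add, Nat.sub_add_cancel h]
    · rw [hmin u hu (by omega), zero_mul]
  have hdm : d m ≠ 0 := by
    intro h
    apply hm.2
    rw [← hd, show d (Nat.find hne') = 0 from h, zero_pow (pow_pos hqpos _).ne']
  refine ⟨(s'.erase m).image (fun u => u - m - 1), fun c t h => ?_⟩
  have h1 : ∑ i, c i * (∑ u ∈ s', d u * y i ^ (q ^ (k * (u - m)))) ^ (q ^ (k * t)) = 0 := by
    refine Finset.sum_eq_zero fun i _ => ?_
    rw [hrel', zero_pow (pow_pos hqpos _).ne', mul_zero]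
  simp_rw [ms_frob_sum p a q hq, mul_pow, ← pow_mul, ← pow_add, ← mul_add, Finset.mul_sum] at h1
  rw [Finset.sum_comm] at h1
  have hms' : m ∈ s' := Finset.mem_filter.2 ⟨hm.1, le_rfl⟩
  rw [← Finset.add_sum_erase _ _ hms'] at h1
  have h2 : ∑ x ∈ s'.erase m, ∑ i, c i * (d x ^ (q ^ (k * t)) * y i ^ (q ^ (k * (x - m + t)))) = 0 := by
    refine Finset.sum_eq_zero fun x hx => ?_
    have hx1 : m < x := by
      have := Finset.mem_erase.1 hx
      have h3 := (Finset.mem_filter.1 this.2).2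
      exact lt_of_le_of_ne h3 (Ne.symm this.1)
    have := h (x - m - 1) (Finset.mem_image_of_mem _ hx)
    rw [show t + 1 + (x - m - 1) = x - m + t by omega] at this
    rw [← mul_zero (d x ^ (q ^ (k * t))), ← this, Finset.mul_sum]
    exact Finset.sum_congr rfl fun i _ => by ring
  rw [h2, add_zero] at h1
  have h3 : d m ^ (q ^ (k * t)) * ∑ i, c i * y i ^ (q ^ (k * t)) = 0 := by
    rw [← h1, Finset.mul_sum]
    refine Finset.sum_congr rfl fun i _ => ?_
    rw [Nat.sub_self, zero_add]; ring
  exact (mul_eq_zero.1 h3).resolve_left (pow_ne_zero _ hdm)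

theorem ms_exp2 {K : Type*} [Field K] [IsAlgClosed K] (p a q : ℕ) [Fact p.Prime] [CharP K p]
    (hq : q = p ^ a) {ι : Type*} [Fintype ι] (k : ℕ) (y c : ι → K) (n : ℕ)
    (h : ∀ t, n ≤ t → ∑ i, c i * y i ^ (q ^ (k * t)) = 0) (t : ℕ) :
    ∑ i, c i * y i ^ (q ^ (k * t)) = 0 := by
  obtain ⟨s, hs⟩ := ms_exp p a q hq k y
  induction n with
  | zero => exact h t (Nat.zero_le _)
  | succ n ih =>
    apply ih
    intro t ht
    exact hs c t fun u _ => h _ (by omega)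

theorem ms_multi {ι : Type*} [Fintype ι] [DecidableEq ι] (P : (ι → ℕ) → Prop) (n : ℕ)
    (h : ∀ m, (∀ i, n ≤ m i) → P m)
    (hs : ∀ i m, (∀ t, n ≤ t → P (Function.update m i t)) → ∀ t, P (Function.update m i t)) :
    ∀ m, P m := by
  have key : ∀ (s : Finset ι) (m : ι → ℕ), (∀ i, i ∉ s → n ≤ m i) → P m := by
    intro s
    induction s using Finset.induction_on with
    | empty => intro m hm; exact h m fun i => hm i (by simp)
    | insert i s hi ih =>
      intro m hm
      have := hs i m (fun t ht => ih _ fun i' hi' => by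
        by_cases hii : i' = i
        · subst hii; simpa using ht
        · rw [Function.update_of_ne hii]; exact hm i' (by simp [hii, hi'])) (m i)
      simpa using this
  exact fun m => key Finset.univ m (by simp)

/-- pivots of a subspace -/
theorem ms_pivot {L : Type*} [Field L] {ι : Type*} [Fintype ι] [DecidableEq ι]
    (V : Submodule L (ι → L)) :
    ∃ (P : Finset ι) (a : ι → ι → L), (∀ x, x ∈ V ↔ ∀ j, x j = ∑ i ∈ P, a j i * x i) ∧
      Module.finrank L V = P.card := by
  let pr : (P : Finset ι) → V →ₗ[L] (P → L) := fun P =>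
    (LinearMap.funLeft L L (Subtype.val : P → ι)).comp V.subtype
  have hex : ∃ n, ∃ P : Finset ι, P.card = n ∧ Function.Injective (pr P) := by
    refine ⟨_, Finset.univ, rfl, ?_⟩
    intro x y hxy
    ext i
    exact congrFun hxy ⟨i, Finset.mem_univ i⟩
  classical
  obtain ⟨P, hPc, hinj⟩ := Nat.find_spec hex
  have hsurj : Function.Surjective (pr P) := by
    rw [← LinearMap.range_eq_top]
    by_contra hne
    obtain ⟨f, hf0, hf⟩ := Submodule.exists_le_ker_of_lt_top _ (lt_top_iff_ne_top.2 hne)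
    obtain ⟨i, hi⟩ : ∃ i, f (Pi.single i 1) ≠ 0 := by
      by_contra hcon
      push Not at hcon
      apply hf0
      apply LinearMap.pi_ext'
      intro i
      ext
      simpa using hcon i
    have hlt : (P.erase i.1).card < Nat.find hex := by
      rw [← hPc]; exact Finset.card_erase_lt_of_mem i.2
    refine Nat.find_min hex hlt ⟨_, rfl, ?_⟩
    rw [injective_iff_map_eq_zero]
    intro x hx
    rw [injective_iff_map_eq_zero] at hinj
    apply hinj
    have hz : ∀ l : P, l ≠ i → (pr P x) l = 0 := by
      intro l hl
      exact congrFun hx ⟨l.1, Finset.mem_erase.2 ⟨fun h => hl (Subtype.ext h), l.2⟩⟩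
    have hsg : pr P x = (pr P x i) • Pi.single i (1 : L) := by
      ext l
      by_cases hl : l = i
      · subst hl; simp
      · rw [hz l hl]; simp [hl]
    have h0 : f (pr P x) = 0 := hf ⟨x, rfl⟩
    rw [hsg, map_smul, smul_eq_mul] at h0
    rw [hsg, (mul_eq_zero.1 h0).resolve_right hi, zero_smul]
  let e := LinearEquiv.ofBijective (pr P) ⟨hinj, hsurj⟩
  have he : ∀ z : P → L, pr P (e.symm z) = z := fun z => e.apply_symm_apply z
  let a : ι → ι → L := fun j i => if h : i ∈ P then (e.symm (Pi.single ⟨i, h⟩ 1)).1 j else 0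
  have hrep : ∀ x : V, ∀ j, x.1 j = ∑ i ∈ P, a j i * x.1 i := by
    intro x j
    have : x = e.symm (∑ i : P, (x.1 i) • Pi.single i (1 : L)) := by
      apply e.injective
      rw [e.apply_symm_apply]
      ext i
      simp [Finset.sum_apply, Pi.single_apply]
      rfl
    conv_lhs => rw [this]
    rw [map_sum]
    simp only [map_smul, Submodule.coe_sum, Submodule.coe_smul, Finset.sum_apply, Pi.smul_apply, smul_eq_mul]
    rw [← Finset.sum_coe_sort P]
    refine Finset.sum_congr rfl fun i _ => ?_
    simp only [a, i.2, dif_pos]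
    ring
  refine ⟨P, a, fun x => ⟨fun hx => hrep ⟨x, hx⟩, fun hx => ?_⟩, ?_⟩
  · have : x = (e.symm (fun i => x i)).1 := by
      ext j
      rw [hx j, hrep]
      refine Finset.sum_congr rfl fun i hi => ?_
      congr 1
      exact (congrFun (he (fun i => x i)) ⟨i, hi⟩).symm
    rw [this]; exact (e.symm _).2
  · rw [LinearEquiv.finrank_eq e]; simp


/-- A nice set in `G`. -/
def msNice {G T : Type*} [CommGroup G] [CommGroup T] (j : G →* T) (q k r : ℕ) (α0 : T)
    (α : Fin r → T) (B : Subgroup G) : Set G :=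
  {g | ∃ n : Fin r → ℕ, ∃ b ∈ B, j g = α0 * (∏ i, α i ^ (q ^ (k * n i))) * j b}

/-- Finite unions of nice sets. -/
inductive MsFU {G T : Type*} [CommGroup G] [CommGroup T] (j : G →* T) (q k : ℕ) : Set G → Prop
  | empty : MsFU j q k ∅
  | nice (r : ℕ) (α0 : T) (α : Fin r → T) (B : Subgroup G) (h0 : ∃ g, j g = α0 * ∏ i, α i)
      (h : ∀ i, ∃ g, α i ^ (q ^ k) = α i * j g) : MsFU j q k (msNice j q k r α0 α B)
  | union (S S' : Set G) (h : MsFU j q k S) (h' : MsFU j q k S') : MsFU j q k (S ∪ S')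

section
variable {G T : Type*} [CommGroup G] [CommGroup T] {j : G →* T} {q k : ℕ}

theorem MsFU.iUnion {κ : Type*} [Finite κ] (S : κ → Set G) (h : ∀ i, MsFU j q k (S i)) :
    MsFU j q k (⋃ i, S i) := by
  have := Fintype.ofFinite κ
  classical
  have key : ∀ s : Finset κ, MsFU j q k (⋃ i ∈ s, S i) := by
    intro s
    induction s using Finset.induction_on with
    | empty => simpa using MsFU.empty
    | insert i s hi ih =>
      rw [Finset.set_biUnion_insert]
      exact MsFU.union _ _ (h i) ih
  simpa using key Finset.univ

theorem ms_pow_iter (α : T) (u : ℕ) (hα : ∃ g, α ^ u = α * j g) (n : ℕ) :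
    ∃ g, α ^ (u ^ n) = α * j g := by
  obtain ⟨g, hg⟩ := hα
  induction n with
  | zero => exact ⟨1, by simp⟩
  | succ n ih =>
    obtain ⟨g', hg'⟩ := ih
    refine ⟨g * g' ^ u, ?_⟩
    rw [pow_succ, pow_mul, hg', mul_pow, hg, map_mul, map_pow, mul_assoc]

theorem ms_prod_mem {r : ℕ} (α : Fin r → T) (e : Fin r → ℕ) (h : ∀ i, ∃ g, α i ^ (e i) = α i * j g) :
    ∃ g, ∏ i, α i ^ (e i) = (∏ i, α i) * j g := by
  choose g hg using h
  refine ⟨∏ i, g i, ?_⟩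
  rw [map_prod, ← Finset.prod_mul_distrib]
  exact Finset.prod_congr rfl fun i _ => hg i

theorem MsFU.translate (hj : Function.Injective j) (g0 : G) (m : ℕ) {S : Set G}
    (h : MsFU j q k S) : MsFU j q k ((fun g => g0 * g ^ m) '' S) := by
  induction h with
  | empty => simpa using MsFU.empty
  | union S S' _ _ h h' => rw [Set.image_union]; exact MsFU.union _ _ h h'
  | nice r α0 α B h0 h =>
    have := MsFU.nice (j := j) (q := q) (k := k) r (j g0 * α0 ^ m) (fun i => α i ^ m)
      (B.map (powMonoidHom m)) (by
        obtain ⟨g, hg⟩ := h0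
        refine ⟨g0 * g ^ m, ?_⟩
        rw [map_mul, map_pow, hg, mul_pow, Finset.prod_pow, mul_assoc]) (by
        intro i
        obtain ⟨g, hg⟩ := h i
        refine ⟨g ^ m, ?_⟩
        rw [← pow_mul, mul_comm m, pow_mul, hg, mul_pow, map_pow])
    convert! this using 1
    have hexp : ∀ n : Fin r → ℕ, ∏ i, (α i ^ m) ^ (q ^ (k * n i)) = (∏ i, α i ^ (q ^ (k * n i))) ^ m := by
      intro n
      rw [← Finset.prod_pow]
      exact Finset.prod_congr rfl fun i _ => by rw [← pow_mul, ← pow_mul, mul_comm]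
    ext x
    constructor
    · rintro ⟨g, ⟨n, b, hb, hg⟩, rfl⟩
      refine ⟨n, b ^ m, ⟨b, hb, rfl⟩, ?_⟩
      rw [hexp, map_mul, map_pow, hg, map_pow, mul_pow, mul_pow]
      simp only [mul_assoc]
    · rintro ⟨n, _, ⟨b, hb, rfl⟩, hx⟩
      obtain ⟨g1, hg1⟩ := h0
      obtain ⟨g2, hg2⟩ := ms_prod_mem (j := j) α (fun i => q ^ (k * n i)) (fun i => by
        rw [pow_mul]; exact ms_pow_iter (α i) _ (h i) (n i))
      have hg : j (g1 * g2 * b) = α0 * (∏ i, α i ^ (q ^ (k * n i))) * j b := by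
        rw [hg2, map_mul, map_mul, hg1]; simp only [mul_assoc]
      refine ⟨g1 * g2 * b, ⟨n, b, hb, hg⟩, ?_⟩
      apply hj
      rw [hx, hexp]
      change j (g0 * (g1 * g2 * b) ^ m) = _
      rw [map_mul, map_pow, hg, powMonoidHom_apply, map_pow, mul_pow, mul_pow]
      simp only [mul_assoc]

theorem MsFU.mul (e : ℕ) (he : 0 < e) {S : Set G} (h : MsFU j q k S) : MsFU j q (k * e) S := by
  induction h with
  | empty => exact MsFU.empty
  | union S S' _ _ h h' => exact MsFU.union _ _ h h'
  | nice r α0 α B h0 h =>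
    have : msNice j q k r α0 α B = ⋃ ρ : Fin r → Fin e,
        msNice j q (k * e) r α0 (fun i => α i ^ (q ^ (k * (ρ i : ℕ)))) B := by
      ext x
      simp only [Set.mem_iUnion]
      constructor
      · rintro ⟨n, b, hb, hx⟩
        refine ⟨fun i => ⟨n i % e, Nat.mod_lt _ he⟩, fun i => n i / e, b, hb, ?_⟩
        rw [hx]
        congr 2
        refine Finset.prod_congr rfl fun i _ => ?_
        rw [← pow_mul, ← pow_add, mul_assoc, ← mul_add, Nat.mod_add_div]
      · rintro ⟨ρ, n, b, hb, hx⟩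
        refine ⟨fun i => ρ i + e * n i, b, hb, ?_⟩
        rw [hx]
        congr 2
        refine Finset.prod_congr rfl fun i _ => ?_
        rw [← pow_mul, ← pow_add, mul_assoc, ← mul_add]
    rw [this]
    refine MsFU.iUnion _ fun ρ => MsFU.nice _ _ _ _ ?_ ?_
    · obtain ⟨g1, hg1⟩ := h0
      obtain ⟨g2, hg2⟩ := ms_prod_mem (j := j) α (fun i => q ^ (k * (ρ i : ℕ))) (fun i => by
        rw [pow_mul]; exact ms_pow_iter (α i) _ (h i) _)
      exact ⟨g1 * g2, by rw [hg2, map_mul, hg1, mul_assoc]⟩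
    · intro i
      obtain ⟨g, hg⟩ := ms_pow_iter (α i) _ (h i) e
      refine ⟨g ^ (q ^ (k * (ρ i : ℕ))), ?_⟩
      rw [← pow_mul, mul_comm, pow_mul, pow_mul q k e, hg, mul_pow, map_pow]

end

/-- Orbit lemma: the union of all images of a nice set inside the solution set `S` under
`u ↦ h' u^(q^k)` is covered by a nice set inside `S`. -/
theorem ms_orbit {K : Type*} [Field K] [IsAlgClosed K] (p a q : ℕ) [Fact p.Prime] [CharP K p]
    (hq : q = p ^ a) (ha : 1 ≤ a) {ι : Type*} [Fintype ι] {G T : Type*} [CommGroup G] [CommGroup T]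
    (j : G →* T) (hdiv : ∀ n : ℕ, 0 < n → ∀ x : T, ∃ y, y ^ n = x)
    (χ : ι → T →* Kˣ) (𝒞 : Set (ι → K)) (S : Set G)
    (hS : ∀ g, g ∈ S ↔ ∀ c ∈ 𝒞, ∑ i, c i * (χ i (j g) : K) = 0)
    (k : ℕ) (hk : 1 ≤ k) (h' : G) (H : Subgroup G) (hH : ∀ g ∈ S, ∀ h ∈ H, g * h ∈ S)
    (hψ : ∀ g ∈ S, h' * g ^ (q ^ k) ∈ S) (N : Set G) (hN : MsFU j q k N) (hNS : N ⊆ S) :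
    ∃ N', MsFU j q k N' ∧ N' ⊆ S ∧
      ∀ n : ℕ, ∀ u ∈ N, ∀ h ∈ H, ((fun g => h' * g ^ (q ^ k))^[n] u) * h ∈ N' := by
  induction hN with
  | empty => exact ⟨∅, MsFU.empty, Set.empty_subset _, by simp⟩
  | union S1 S2 _ _ h1 h2 =>
    obtain ⟨N1, hf1, hs1, hc1⟩ := h1 (Set.subset_union_left.trans hNS)
    obtain ⟨N2, hf2, hs2, hc2⟩ := h2 (Set.subset_union_right.trans hNS)
    refine ⟨N1 ∪ N2, MsFU.union _ _ hf1 hf2, Set.union_subset hs1 hs2, ?_⟩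
    rintro n u (hu | hu) h hh
    · exact Or.inl (hc1 n u hu h hh)
    · exact Or.inr (hc2 n u hu h hh)
  | nice r α0 α B h0 hα =>
    have hp : p.Prime := Fact.out
    have hq2 : 2 ≤ q := by
      rw [hq]; exact hp.two_le.trans (Nat.le_self_pow (by omega) p)
    have hQ : 2 ≤ q ^ k := hq2.trans (Nat.le_self_pow (by omega) q)
    obtain ⟨β, hβ⟩ := hdiv (q ^ k - 1) (by omega) (j h')
    have hβ' : β ^ (q ^ k) = β * j h' := by
      rw [← hβ, ← pow_succ', Nat.sub_add_cancel (by omega)]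
    have hiter : ∀ (n : ℕ) (u : G), j ((fun g => h' * g ^ (q ^ k))^[n] u) =
        β⁻¹ * (β * j u) ^ (q ^ (k * n)) := by
      intro n u
      induction n with
      | zero => simp
      | succ n ih =>
        rw [Function.iterate_succ_apply', map_mul, map_pow, ih, mul_pow, ← pow_mul, ← pow_add,
          inv_pow, hβ', mul_add, mul_one, mul_inv, ← mul_assoc, mul_comm (j h'), mul_assoc (β⁻¹),
          inv_mul_cancel, mul_one]
    obtain ⟨g0, hg0⟩ := h0
    have hα0 : ∃ g, α0 ^ (q ^ k) = α0 * j g := by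
      obtain ⟨g2, hg2⟩ := ms_prod_mem (j := j) α (fun _ => q ^ k) hα
      refine ⟨g0 ^ (q ^ k) * g0⁻¹ * g2⁻¹, ?_⟩
      rw [Finset.prod_pow] at hg2
      have e1 : α0 = j g0 * (∏ i, α i)⁻¹ := by rw [hg0]; simp
      rw [e1, mul_pow, inv_pow, hg2, map_mul, map_mul, map_pow, map_inv, map_inv, mul_inv]
      have : ∀ x y z w : T, x * (y * z) = w * y * (x * w⁻¹ * z) := by
        intro x y z w
        rw [show w * y * (x * w⁻¹ * z) = (w * w⁻¹) * (x * (y * z)) by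
          simp only [mul_assoc, mul_comm, mul_left_comm], mul_inv_cancel, one_mul]
      exact this _ _ _ _
    refine ⟨msNice j q k (r + 1) β⁻¹ (Fin.cons (β * α0) α) (B ⊔ H), MsFU.nice _ _ _ _ ?_ ?_, ?_, ?_⟩
    · refine ⟨g0, ?_⟩
      rw [Fin.prod_univ_succ, hg0]
      simp [mul_assoc]
    · intro i
      refine Fin.cases ?_ ?_ i
      · obtain ⟨g, hg⟩ := hα0
        refine ⟨h' * g, ?_⟩
        rw [Fin.cons_zero, mul_pow, hβ', hg, map_mul]
        simp only [mul_assoc, mul_left_comm]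
      · intro i
        rw [Fin.cons_succ]; exact hα i
    · rintro g ⟨n, b, hb, hg⟩
      rw [Subgroup.mem_sup] at hb
      obtain ⟨b, hb, y, hy, rfl⟩ := hb
      have : g = (g * y⁻¹) * y := by simp
      rw [this]
      refine hH _ ?_ y hy
      rw [hS]
      intro c hc
      have hg' : j (g * y⁻¹) = β⁻¹ * (β * α0) ^ (q ^ (k * n 0)) *
          (∏ i : Fin r, α i ^ (q ^ (k * n i.succ))) * j b := by
        rw [map_mul, hg, Fin.prod_univ_succ]
        simp [mul_assoc]
      rw [hg']
      have hfix : ∀ z w : T, ∀ n0 : ℕ,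
          (∀ t, n0 ≤ t → ∑ i, c i * (χ i (z * w ^ (q ^ (k * t))) : K) = 0) →
          ∀ t, ∑ i, c i * (χ i (z * w ^ (q ^ (k * t))) : K) = 0 := by
        intro z w n0 h t
        have := ms_exp2 p a q hq k (fun i => (χ i w : K)) (fun i => c i * (χ i z : K)) n0 (by
          intro t ht
          rw [← h t ht]
          refine Finset.sum_congr rfl fun i _ => ?_
          simp [mul_assoc]) t
        rw [← this]
        refine Finset.sum_congr rfl fun i _ => ?_
        simp [mul_assoc]
      have known : ∀ (n0 : ℕ) (m : Fin r → ℕ) (b : G), b ∈ B → ∑ i, c i * (χ i (β⁻¹ *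
          (β * α0) ^ (q ^ (k * n0)) * (∏ i : Fin r, α i ^ (q ^ (k * (m i + n0)))) *
            j b ^ (q ^ (k * n0))) : K) = 0 := by
        intro n0 m b hb
        obtain ⟨g2, hg2⟩ := ms_prod_mem (j := j) α (fun i => q ^ (k * m i)) (fun i => by
          rw [pow_mul]; exact ms_pow_iter (α i) _ (hα i) (m i))
        have hu : j (g0 * g2 * b) = α0 * (∏ i, α i ^ (q ^ (k * m i))) * j b := by
          rw [hg2, map_mul, map_mul, hg0]; simp only [mul_assoc]
        have huS : g0 * g2 * b ∈ S := hNS ⟨m, b, hb, hu⟩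
        have hitS : ∀ n : ℕ, (fun g => h' * g ^ (q ^ k))^[n] (g0 * g2 * b) ∈ S := by
          intro n
          induction n with
          | zero => exact huS
          | succ n ih => rw [Function.iterate_succ_apply']; exact hψ _ ih
        have := (hS _).1 (hitS n0) c hc
        rw [hiter, hu] at this
        rw [← this]
        refine Finset.sum_congr rfl fun i _ => ?_
        congr 3
        simp only [mul_pow, ← Finset.prod_pow, ← pow_mul, ← pow_add, ← mul_add]
        simp only [mul_assoc]
      have stepA : ∀ (m : Fin r → ℕ), (∀ i, n 0 ≤ m i) → ∑ i, c i * (χ i (β⁻¹ *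
          (β * α0) ^ (q ^ (k * n 0)) * (∏ i : Fin r, α i ^ (q ^ (k * m i))) * j b) : K) = 0 := by
        intro m hm
        have := hfix (β⁻¹ * (β * α0) ^ (q ^ (k * n 0)) * (∏ i : Fin r, α i ^ (q ^ (k * m i))))
          (j b) (n 0) (by
            intro t ht
            have h1 := known (n 0) (fun i => m i - n 0) (b ^ (q ^ (k * (t - n 0)))) (B.pow_mem hb _)
            simp only [Nat.sub_add_cancel (hm _), map_pow j, ← pow_mul (j b), ← pow_add, ← mul_add,
              Nat.sub_add_cancel ht] at h1
            exact h1) 0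
        simpa using this
      exact ms_multi (fun m : Fin r → ℕ => ∑ i, c i * (χ i (β⁻¹ *
          (β * α0) ^ (q ^ (k * n 0)) * (∏ i : Fin r, α i ^ (q ^ (k * m i))) * j b) : K) = 0) (n 0)
          stepA (by
            intro i m h t
            have hre : ∀ t, β⁻¹ * (β * α0) ^ (q ^ (k * n 0)) *
                (∏ l : Fin r, α l ^ (q ^ (k * (Function.update m i t) l))) * j b =
                (β⁻¹ * (β * α0) ^ (q ^ (k * n 0)) *
                (∏ l ∈ Finset.univ.erase i, α l ^ (q ^ (k * m l))) * j b) * α i ^ (q ^ (k * t)) := by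
              intro t
              rw [← Finset.mul_prod_erase _ _ (Finset.mem_univ i), Function.update_self]
              have : ∏ l ∈ Finset.univ.erase i, α l ^ (q ^ (k * (Function.update m i t) l)) =
                  ∏ l ∈ Finset.univ.erase i, α l ^ (q ^ (k * m l)) := by
                refine Finset.prod_congr rfl fun l hl => ?_
                rw [Function.update_of_ne (Finset.ne_of_mem_erase hl)]
              rw [this]
              simp only [mul_assoc, mul_left_comm, mul_comm]
            simp only [hre] at h ⊢
            exact hfix _ _ _ h t) (fun i => n i.succ)
    · rintro n u ⟨m, b, hb, hu⟩ h hh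
      refine ⟨Fin.cons n (fun i => m i + n), b ^ (q ^ (k * n)) * h,
        Subgroup.mul_mem_sup (B.pow_mem hb _) hh, ?_⟩
      rw [map_mul, hiter, hu, Fin.prod_univ_succ]
      simp only [Fin.cons_zero, Fin.cons_succ, mul_pow, ← Finset.prod_pow, ← pow_mul, ← pow_add,
        ← mul_add, map_mul, map_pow]
      simp only [mul_assoc]


theorem ms_descend {L : Type*} [Field L] (p a q : ℕ) [Fact p.Prime] [CharP L p] (hq : q = p ^ a)
    {ι : Type*} [Fintype ι] [DecidableEq ι] (V : Submodule L (ι → L)) (P : Finset ι) (A : ι → ι → L)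
    (hV : ∀ x, x ∈ V ↔ ∀ j, x j = ∑ i ∈ P, A j i * x i) (hcard : Module.finrank L V = P.card)
    (t : ι → Lˣ) (M : ℕ) :
    ∃ W : Submodule L (ι → L), (∀ x, x ∈ W ↔ (fun i => (t i : L) * x i ^ (q ^ M)) ∈ V) ∧
      (Module.finrank L W < Module.finrank L V ∨
        ∃ b : ι → ι → L, ∀ j, ∀ i ∈ P, A j i * t i = t j * b j i ^ (q ^ M)) := by
  have hp : p.Prime := Fact.out
  have hqpos : 0 < q ^ M := by rw [hq]; exact pow_pos (pow_pos hp.pos a) M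
  have hadd : ∀ x y : L, (x + y) ^ (q ^ M) = x ^ (q ^ M) + y ^ (q ^ M) := by
    intro x y; rw [hq, ← pow_mul, add_pow_char_pow]
  let W : Submodule L (ι → L) :=
    { carrier := {x | (fun i => (t i : L) * x i ^ (q ^ M)) ∈ V}
      add_mem' := by
        intro x y hx hy
        have := V.add_mem hx hy
        have e : (fun i => (t i : L) * (x + y) i ^ (q ^ M)) =
            (fun i => (t i : L) * x i ^ (q ^ M)) + (fun i => (t i : L) * y i ^ (q ^ M)) := by
          ext i
          simp [hadd, mul_add]
        change (fun i => (t i : L) * (x + y) i ^ (q ^ M)) ∈ V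
        rw [e]
        exact this
      zero_mem' := by
        have := V.zero_mem
        have e : (fun i => (t i : L) * (0 : ι → L) i ^ (q ^ M)) = 0 := by
          ext i
          simp only [Pi.zero_apply, zero_pow hqpos.ne', mul_zero]
        change (fun i => (t i : L) * (0 : ι → L) i ^ (q ^ M)) ∈ V
        rw [e]
        exact this
      smul_mem' := by
        intro c x hx
        have := V.smul_mem (c ^ (q ^ M)) hx
        have e : (fun i => (t i : L) * (c • x) i ^ (q ^ M)) =
            c ^ (q ^ M) • (fun i => (t i : L) * x i ^ (q ^ M)) := by
          ext i
          simp only [Pi.smul_apply, smul_eq_mul, mul_pow]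
          ring
        change (fun i => (t i : L) * (c • x) i ^ (q ^ M)) ∈ V
        rw [e]
        exact this }
  have hW : ∀ x, x ∈ W ↔ (fun i => (t i : L) * x i ^ (q ^ M)) ∈ V := fun x => Iff.rfl
  refine ⟨W, hW, ?_⟩
  by_cases hlt : Module.finrank L W < Module.finrank L V
  · exact Or.inl hlt
  right
  let pr : W →ₗ[L] (P → L) := (LinearMap.funLeft L L (Subtype.val : P → ι)).comp W.subtype
  have hinj : Function.Injective pr := by
    rw [injective_iff_map_eq_zero]
    intro x hx
    have h1 := (hV _).1 ((hW _).1 x.2)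
    ext l
    have h2 := h1 l
    have h3 : ∑ i ∈ P, A l i * ((t i : L) * x.1 i ^ (q ^ M)) = 0 := by
      refine Finset.sum_eq_zero fun i hi => ?_
      have : x.1 i = 0 := congrFun hx ⟨i, hi⟩
      rw [this, zero_pow hqpos.ne', mul_zero, mul_zero]
    rw [h3] at h2
    have h4 := (mul_eq_zero.1 h2).resolve_left (t l).ne_zero
    exact eq_zero_of_pow_eq_zero h4
  have hle : Module.finrank L W ≤ P.card := by
    have := LinearMap.finrank_le_finrank_of_injective hinj
    simpa using this
  have heq : Module.finrank L W = Module.finrank L (P → L) := by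
    simp; omega
  have hsurj : Function.Surjective pr :=
    (LinearMap.injective_iff_surjective_of_finrank_eq_finrank heq).1 hinj
  have hx : ∀ i : P, ∃ x : W, pr x = Pi.single i 1 := fun i => hsurj _
  choose x hx using hx
  refine ⟨fun l i => if h : i ∈ P then (x ⟨i, h⟩).1 l else 0, fun l i hi => ?_⟩
  simp only [hi, dif_pos]
  have h1 := (hV _).1 ((hW _).1 (x ⟨i, hi⟩).2) l
  rw [h1, Finset.sum_eq_single i]
  · have : (x ⟨i, hi⟩).1 i = 1 := by
      have := congrFun (hx ⟨i, hi⟩) ⟨i, hi⟩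
      rw [Pi.single_eq_same] at this
      exact this
    rw [this]; simp
  · intro l hl hne
    have : (x ⟨i, hi⟩).1 l = 0 := by
      have := congrFun (hx ⟨i, hi⟩) ⟨l, hl⟩
      rw [Pi.single_eq_of_ne (by simpa using hne)] at this
      exact this
    rw [this, zero_pow hqpos.ne', mul_zero, mul_zero]
  · intro h; exact absurd hi h

theorem ms_quot_finite {G : Type*} [CommGroup G] [Group.FG G] (m : ℕ) (hm : 0 < m) :
    Finite (G ⧸ (powMonoidHom m : G →* G).range) := by
  apply CommGroup.finite_of_fg_isMulTorsion
  intro x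
  rw [isOfFinOrder_iff_pow_eq_one]
  refine ⟨m, hm, ?_⟩
  induction x using QuotientGroup.induction_on with
  | _ g =>
    rw [← QuotientGroup.mk_pow, QuotientGroup.eq_one_iff]
    exact ⟨g, rfl⟩

theorem ms_tors_finite {A : Type*} [CommGroup A] (B : Subgroup A) (hB : B.FG) :
    {x : A | x ∈ B ∧ ∃ m : ℕ, 0 < m ∧ x ^ m = 1}.Finite := by
  have hfg : Group.FG B := (Group.fg_iff_subgroup_fg B).2 hB
  have h1 : AddGroup.FG (Additive B) := inferInstance
  have h2 : Module.Finite ℤ (Additive B) := Module.Finite.iff_addGroup_fg.2 h1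
  let S : Submodule ℤ (Additive B) := AddSubgroup.toIntSubmodule (Subgroup.toAddSubgroup (CommGroup.torsion B))
  have h3 : Module.Finite ℤ S := inferInstance
  have h4 : Group.FG (CommGroup.torsion B) := by
    rw [Group.fg_iff_subgroup_fg, Subgroup.fg_iff_add_fg]
    have := Submodule.fg_iff_addSubgroup_fg S
    have := this.1 (Module.Finite.iff_fg.1 h3)
    simpa [S] using this
  have h5 : Finite (CommGroup.torsion B) :=
    CommGroup.finite_of_fg_isMulTorsion (CommGroup.torsion B) (fun x => by
      have := x.2
      rw [CommGroup.mem_torsion, isOfFinOrder_iff_pow_eq_one] at this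
      obtain ⟨n, hn, h⟩ := this
      rw [isOfFinOrder_iff_pow_eq_one]
      exact ⟨n, hn, Subtype.ext (by simpa using h)⟩)
  refine Set.Finite.subset (Set.finite_range (fun x : CommGroup.torsion B => (x.1.1 : A))) ?_
  rintro x ⟨hx, m, hm, h⟩
  refine ⟨⟨⟨x, hx⟩, ?_⟩, rfl⟩
  rw [CommGroup.mem_torsion, isOfFinOrder_iff_pow_eq_one]
  exact ⟨m, hm, Subtype.ext (by simpa using h)⟩


theorem ms_alg {G 𝔸 : Type*} [CommGroup G] [CommGroup 𝔸] (q : ℕ) (hq2 : 2 ≤ q)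
    (ρ : G →* 𝔸) (av : 𝔸) (g : G) (b : 𝔸) (hb : b ∈ ρ.range ⊔ Subgroup.zpowers av)
    (h : av = ρ g * b ^ q) : ∃ e : ℕ, 1 ≤ e ∧ ∃ h : G, av ^ (q ^ e) = ρ h * av := by
  rw [Subgroup.mem_sup] at hb
  obtain ⟨_, ⟨g', rfl⟩, _, ⟨z, rfl⟩, rfl⟩ := hb
  have h1 : av ^ (1 - z * q : ℤ) = ρ (g * g' ^ q) := by
    rw [zpow_sub, zpow_one, zpow_mul, zpow_natCast, map_mul, map_pow, mul_inv_eq_iff_eq_mul]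
    conv_lhs => rw [h]
    simp only [mul_pow, mul_assoc]
  set D : ℕ := (1 - z * q : ℤ).natAbs with hD
  have hne : (1 - z * q : ℤ) ≠ 0 := by
    intro h0
    have : (q : ℤ) ∣ 1 := ⟨z, by linarith⟩
    have := Int.le_of_dvd one_pos this
    omega
  have hDpos : 0 < D := Int.natAbs_pos.2 hne
  have hcop : Nat.Coprime q D := by
    have : IsCoprime (q : ℤ) (1 - z * q) := ⟨z, 1, by ring⟩
    have := Int.isCoprime_iff_gcd_eq_one.1 this
    rw [Int.gcd] at this
    simpa using this
  have hmod := Nat.ModEq.pow_totient hcop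
  have hdvd : (1 - z * q : ℤ) ∣ (q : ℤ) ^ (Nat.totient D) - 1 := by
    rw [← Int.natAbs_dvd, ← hD]
    have := (Nat.modEq_iff_dvd.1 hmod.symm)
    push_cast at this
    exact this
  obtain ⟨w, hw⟩ := hdvd
  refine ⟨Nat.totient D, Nat.totient_pos.2 hDpos, (g * g' ^ q) ^ w, ?_⟩
  rw [map_zpow, ← h1, ← zpow_mul, ← hw, zpow_sub, zpow_one, inv_mul_cancel_right]
  rw [← zpow_natCast]
  push_cast
  rfl

theorem ms_iter_mul {G : Type*} [CommGroup G] (h : G) (Q n : ℕ) (u v : G) :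
    (fun g => h * g ^ Q)^[n] (u * v) = (fun g => h * g ^ Q)^[n] u * v ^ (Q ^ n) := by
  induction n with
  | zero => simp
  | succ n ih =>
    rw [Function.iterate_succ_apply', Function.iterate_succ_apply', ih, mul_pow, ← pow_mul,
      ← pow_succ, mul_assoc]

theorem ms_iter_a {G 𝔸 : Type*} [CommGroup G] [CommGroup 𝔸] (ρ : G →* 𝔸) (av : 𝔸) (Q : ℕ) (h : G)
    (hh : av ^ Q = ρ h * av) (n : ℕ) (u : G) :
    av * (ρ ((fun g => h⁻¹ * g ^ Q)^[n] u))⁻¹ = (av * (ρ u)⁻¹) ^ (Q ^ n) := by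
  induction n with
  | zero => simp
  | succ n ih =>
    rw [Function.iterate_succ_apply', pow_succ, pow_mul, ← ih, mul_pow, hh, map_mul, map_inv,
      map_pow, inv_pow, mul_inv, inv_inv, ← mul_assoc, mul_comm av]

theorem ms_phi {A : Type*} [CommGroup A] (Q : ℕ) (hQ : 2 ≤ Q) (x : A)
    (h : ∀ n : ℕ, ∃ y, x = y ^ (Q ^ n)) (φ : A →* Multiplicative ℤ) : φ x = 1 := by
  have h1 : ∀ n : ℕ, ((Q ^ n : ℕ) : ℤ) ∣ (φ x).toAdd := by
    intro n
    obtain ⟨y, rfl⟩ := h n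
    rw [map_pow, toAdd_pow]
    exact ⟨(φ y).toAdd, by simp⟩
  have h2 : (φ x).toAdd = 0 := by
    refine Int.eq_zero_of_abs_lt_dvd (h1 ((φ x).toAdd.natAbs)) ?_
    rw [Int.abs_eq_natAbs]
    exact_mod_cast Nat.lt_pow_self (by omega)
  exact h2

/-- The abstract dynamical step. -/
theorem ms_step {G T 𝔸 : Type*} [CommGroup G] [Group.FG G] [CommGroup T] [CommGroup 𝔸]
    (p a q : ℕ) (hp : p.Prime) (ha : 1 ≤ a) (hq : q = p ^ a)
    (notors : ∀ x : 𝔸, x ^ p = 1 → x = 1)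
    (det : ∀ x : 𝔸, (∀ φ : 𝔸 →* Multiplicative ℤ, φ x = 1) → ∃ m : ℕ, 0 < m ∧ x ^ m = 1)
    (j : G →* T) (hj : Function.Injective j) (ρ : G →* 𝔸) (av : 𝔸) (S : Set G)
    (hSH : ∀ g ∈ S, ∀ h ∈ ρ.ker, g * h ∈ S)
    (hFrob : ∀ (e : ℕ) (h : G), av ^ (q ^ e) = ρ h * av → ∀ u, (u ∈ S ↔ h⁻¹ * u ^ (q ^ e) ∈ S))
    (hbad : ∀ M : ℕ, ∃ k, 1 ≤ k ∧ ∃ U, MsFU j q k U ∧ U ⊆ S ∧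
      ∀ g ∈ S, (∃ y, av = ρ g * y ^ (q ^ M)) ∨ g ∈ U)
    (horb : ∀ k, 1 ≤ k → ∀ h' : G, (∀ g ∈ S, h' * g ^ (q ^ k) ∈ S) → ∀ N, MsFU j q k N → N ⊆ S →
      ∃ N', MsFU j q k N' ∧ N' ⊆ S ∧
        ∀ n : ℕ, ∀ u ∈ N, ∀ h ∈ ρ.ker, ((fun g => h' * g ^ (q ^ k))^[n] u) * h ∈ N') :
    ∃ k, 1 ≤ k ∧ MsFU j q k S := by
  have hq2 : 2 ≤ q := by
    rw [hq]; exact hp.two_le.trans (Nat.le_self_pow (by omega) p)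
  have hfgr : ρ.range.FG := by
    exact (Group.fg_iff_subgroup_fg _).1 (Group.fg_range ρ)
  have hfgB : (ρ.range ⊔ Subgroup.zpowers av).FG :=
    Subgroup.FG.sup hfgr ⟨{av}, by rw [Finset.coe_singleton, Subgroup.zpowers_eq_closure]⟩
  obtain ⟨c1, hc1⟩ := ms_gl p a q hp ha hq notors det _ hfgB
  by_cases hgood : ∃ g ∈ S, ∃ y, av = ρ g * y ^ (q ^ (1 + c1))
  swap
  · obtain ⟨k, hk, U, hU, hUS, hc⟩ := hbad (1 + c1)
    refine ⟨k, hk, ?_⟩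
    have : S = U := by
      refine Set.Subset.antisymm (fun g hg => ?_) hUS
      rcases hc g hg with h | h
      · exact absurd ⟨g, hg, h⟩ hgood
      · exact h
    rw [this]; exact hU
  obtain ⟨g1, -, y1, hy1⟩ := hgood
  obtain ⟨e, he, h, hh⟩ : ∃ e : ℕ, 1 ≤ e ∧ ∃ h : G, av ^ (q ^ e) = ρ h * av := by
    obtain ⟨b, hb, hxb⟩ := hc1 1 (av * (ρ g1)⁻¹) (by
      refine mul_mem (Subgroup.mem_sup_right (Subgroup.mem_zpowers av)) (inv_mem ?_)
      exact Subgroup.mem_sup_left ⟨g1, rfl⟩) ⟨y1, by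
        rw [mul_inv_eq_iff_eq_mul, mul_comm]; exact hy1⟩
    refine ms_alg q hq2 ρ av g1 b hb ?_
    rw [pow_one, mul_inv_eq_iff_eq_mul, mul_comm] at hxb
    exact hxb
  obtain ⟨c2, hc2⟩ := ms_gl p a q hp ha hq notors det _ hfgr
  set Q := q ^ e with hQ
  have hQ2 : 2 ≤ Q := hq2.trans (Nat.le_self_pow (by omega) q)
  set ψ : G → G := fun g => h⁻¹ * g ^ Q with hψ
  have hψS : ∀ u, u ∈ S ↔ ψ u ∈ S := hFrob e h hh
  obtain ⟨k0, hk0, U, hU, hUS, hcov⟩ := hbad (e * (c2 + 1))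
  have hrec : ∀ g ∈ S, g ∈ U ∨ ∃ u ∈ S, ∃ h' ∈ ρ.ker, g = ψ u * h' := by
    intro g hg
    rcases hcov g hg with ⟨y, hy⟩ | h1
    · right
      have ha1 : av * (ρ (ψ^[c2 + 1] 1))⁻¹ = av ^ (Q ^ (c2 + 1)) := by
        have := ms_iter_a ρ av Q h hh (c2 + 1) 1
        rw [map_one, inv_one, mul_one] at this
        exact this
      have h2 : ρ (ψ^[c2 + 1] 1 * g⁻¹) = (y * av⁻¹) ^ (Q ^ (c2 + 1)) := by
        rw [mul_pow, inv_pow, ← ha1, map_mul, map_inv, mul_inv, inv_inv, hQ, ← pow_mul]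
        have : y ^ q ^ (e * (c2 + 1)) = (ρ g)⁻¹ * av := by rw [hy]; simp
        rw [this]
        generalize ρ g = s
        generalize ρ (ψ^[c2 + 1] 1) = t
        rw [mul_comm (s⁻¹) av, mul_comm (av⁻¹) t, mul_mul_mul_comm, mul_comm av t, mul_assoc t av,
          mul_comm (s⁻¹), ← mul_assoc av, mul_inv_cancel, one_mul]
      obtain ⟨_, ⟨v, rfl⟩, hv⟩ := hc2 e (ρ (ψ^[c2 + 1] 1 * g⁻¹)) ⟨_, rfl⟩
        ⟨(y * av⁻¹) ^ (q ^ (e * c2 - c2)), by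
          rw [h2, hQ, ← pow_mul, ← pow_mul, ← pow_add]
          congr 2
          have : c2 ≤ e * c2 := Nat.le_mul_of_pos_left _ he
          rw [mul_add, mul_one]; omega⟩
      rw [← map_pow, ← hQ] at hv
      have hk : g * (ψ^[c2 + 1] 1 * (v⁻¹) ^ Q)⁻¹ ∈ ρ.ker := by
        rw [MonoidHom.mem_ker, map_mul, map_inv, map_mul]
        rw [map_mul, map_inv, mul_inv_eq_iff_eq_mul] at hv
        rw [hv]
        simp
      have hgeq : g = ψ (ψ^[c2] 1 * v⁻¹) * (g * (ψ^[c2 + 1] 1 * (v⁻¹) ^ Q)⁻¹) := by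
        have : ψ (ψ^[c2] 1 * v⁻¹) = ψ^[c2 + 1] 1 * (v⁻¹) ^ Q := by
          rw [Function.iterate_succ_apply']
          simp only [hψ, mul_pow, mul_assoc]
        rw [this, mul_comm, inv_mul_cancel_right]
      refine ⟨ψ^[c2] 1 * v⁻¹, ?_, _, hk, hgeq⟩
      rw [hψS]
      have := hSH g hg _ (inv_mem hk)
      nth_rewrite 1 [hgeq] at this
      rwa [mul_inv_cancel_right] at this
    · exact Or.inl h1
  have hrec2 : ∀ n : ℕ, ∀ g ∈ S, (∃ r < n, ∃ u ∈ U, ∃ h' ∈ ρ.ker, g = ψ^[r] u * h') ∨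
      ∃ u ∈ S, ∃ h' ∈ ρ.ker, g = ψ^[n] u * h' := by
    intro n
    induction n with
    | zero => intro g hg; right; exact ⟨g, hg, 1, one_mem _, by simp⟩
    | succ n ih =>
      intro g hg
      rcases ih g hg with ⟨r, hr, h1⟩ | ⟨u, hu, h', hh', hg'⟩
      · exact Or.inl ⟨r, by omega, h1⟩
      · rcases hrec u hu with hu' | ⟨w, hw, h'', hh'', hw'⟩
        · exact Or.inl ⟨n, by omega, u, hu', h', hh', hg'⟩
        · right
          refine ⟨w, hw, h'' ^ (Q ^ n) * h', mul_mem (pow_mem hh'' _) hh', ?_⟩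
          rw [hg', hw', ms_iter_mul, Function.iterate_succ_apply, mul_assoc]
  set k := k0 * e with hk
  have hkpos : 1 ≤ k := Nat.mul_pos hk0 he
  refine ⟨k, hkpos, ?_⟩
  have hiterS : ∀ n : ℕ, ∀ u ∈ S, ψ^[n] u ∈ S := by
    intro n u hu
    induction n with
    | zero => exact hu
    | succ n ih => rw [Function.iterate_succ_apply']; exact (hψS _).1 ih
  have hform : ∀ (n : ℕ) (u : G), ψ^[n] u = ψ^[n] 1 * u ^ (Q ^ n) := by
    intro n u
    have := ms_iter_mul h⁻¹ Q n 1 u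
    rwa [one_mul] at this
  have hQk : Q ^ k0 = q ^ k := by rw [hQ, hk, ← pow_mul, mul_comm]
  have hφ : (fun g => ψ^[k0] 1 * g ^ (q ^ k)) = ψ^[k0] := by
    funext g; rw [hform k0 g, hQk]
  have horbit : ∀ s : Fin k0, ∃ N', MsFU j q k N' ∧ N' ⊆ S ∧
      ∀ n : ℕ, ∀ u ∈ ψ^[s] '' U, ∀ h ∈ ρ.ker, ((ψ^[k0])^[n] u) * h ∈ N' := by
    intro s
    have := horb k hkpos (ψ^[k0] 1) (by
      intro g hg
      have := hiterS k0 g hg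
      rw [hform, hQk] at this
      exact this) (ψ^[s] '' U) (by
        have h1 := MsFU.translate hj (ψ^[s] 1) (Q ^ (s : ℕ)) (MsFU.mul e he hU)
        have h2 : (fun g => ψ^[s] 1 * g ^ (Q ^ (s : ℕ))) = ψ^[s] := by
          funext g; rw [hform s g]
        rw [h2] at h1
        exact h1) (by
        rintro _ ⟨u, hu, rfl⟩
        exact hiterS _ _ (hUS hu))
    rw [hφ] at this
    exact this
  choose N' hN' hN'S hN'c using horbit
  let E : Set G := {g | g ∈ S ∧ ∀ n : ℕ, ∃ u ∈ S, ∃ h' ∈ ρ.ker, g = ψ^[n] u * h'}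
  have hEfin : (ρ '' E).Finite := by
    rcases E.eq_empty_or_nonempty with hE | ⟨g0, hg0⟩
    · rw [hE, Set.image_empty]; exact Set.finite_empty
    refine Set.Finite.subset ((ms_tors_finite ρ.range hfgr).image (fun x => x * ρ g0)) ?_
    rintro _ ⟨g, hg, rfl⟩
    refine ⟨ρ (g * g0⁻¹), ⟨⟨_, rfl⟩, ?_⟩, by simp⟩
    apply det
    apply ms_phi Q hQ2
    intro n
    obtain ⟨u, -, h1, hh1, e1⟩ := hg.2 n
    obtain ⟨u0, -, h2, hh2, e2⟩ := hg0.2 n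
    refine ⟨ρ (u * u0⁻¹), ?_⟩
    rw [e1, e2, hform n u, hform n u0, map_mul, map_inv, map_mul, map_mul, map_mul, map_mul,
      (MonoidHom.mem_ker).1 hh1, (MonoidHom.mem_ker).1 hh2, mul_one, mul_one, map_mul, map_inv,
      map_pow, map_pow, mul_pow, inv_pow, mul_inv, mul_mul_mul_comm, mul_inv_cancel, one_mul]
  have : Finite (ρ '' E) := hEfin
  have hrep : ∀ x : ρ '' E, ∃ g ∈ E, ρ g = x := fun x => x.2
  choose rep hrepE hrepx using hrep
  have hS : S = (⋃ s, N' s) ∪ ⋃ x : ρ '' E, msNice j q k 0 (j (rep x)) Fin.elim0 ρ.ker := by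
    apply Set.Subset.antisymm
    · intro g hg
      by_cases hgE : g ∈ E
      · right
        rw [Set.mem_iUnion]
        refine ⟨⟨ρ g, g, hgE, rfl⟩, Fin.elim0, (rep ⟨ρ g, g, hgE, rfl⟩)⁻¹ * g, ?_, ?_⟩
        · rw [MonoidHom.mem_ker, map_mul, map_inv, hrepx]; simp
        · simp
      · left
        have : ∃ n : ℕ, ¬ ∃ u ∈ S, ∃ h' ∈ ρ.ker, g = ψ^[n] u * h' := by
          by_contra hcon
          push Not at hcon
          exact hgE ⟨hg, hcon⟩
        obtain ⟨n, hn⟩ := this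
        obtain ⟨r, -, u, hu, h', hh', hg'⟩ := (hrec2 n g hg).resolve_right hn
        rw [Set.mem_iUnion]
        refine ⟨⟨r % k0, Nat.mod_lt _ hk0⟩, ?_⟩
        have := hN'c ⟨r % k0, Nat.mod_lt _ hk0⟩ (r / k0) _ ⟨u, hu, rfl⟩ h' hh'
        rw [← Function.iterate_mul, ← Function.iterate_add_apply, Nat.div_add_mod, ← hg'] at this
        exact this
    · refine Set.union_subset (Set.iUnion_subset hN'S) (Set.iUnion_subset fun x => ?_)
      rintro g ⟨n, b, hb, hgb⟩
      have : g = rep x * b := by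
        apply hj
        rw [hgb]; simp
      rw [this]
      exact hSH _ (hrepE x).1 b hb
  rw [hS]
  refine MsFU.union _ _ (MsFU.iUnion _ hN') (MsFU.iUnion _ fun x => MsFU.nice _ _ _ _ ?_ ?_)
  · exact ⟨rep x, by simp⟩
  · intro i; exact i.elim0

theorem ms_bad {L : Type*} [Field L] (p a q : ℕ) [Fact p.Prime] [CharP L p] (hq : q = p ^ a)
    {ι : Type*} [Fintype ι] [DecidableEq ι] {G T 𝔸 : Type*} [CommGroup G] [Group.FG G]
    [CommGroup T] [CommGroup 𝔸] (j : G →* T) (hj : Function.Injective j) (χL : ι → G →* Lˣ)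
    (V : Submodule L (ι → L)) (P : Finset ι) (A : ι → ι → L)
    (hV : ∀ x, x ∈ V ↔ ∀ j, x j = ∑ i ∈ P, A j i * x i) (hcard : Module.finrank L V = P.card)
    (ih : ∀ W : Submodule L (ι → L), Module.finrank L W < Module.finrank L V →
      ∃ k, 1 ≤ k ∧ MsFU j q k {g | (fun i => (χL i g : L)) ∈ W})
    (ρ : G →* 𝔸) (av : 𝔸) (M : ℕ)
    (hgood : ∀ r : G, (∃ b : ι → ι → L, ∀ l, ∀ i ∈ P,
      A l i * (χL i r : L) = (χL l r : L) * b l i ^ (q ^ M)) → ∃ y, av = ρ r * y ^ (q ^ M)) :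
    ∃ k, 1 ≤ k ∧ ∃ U, MsFU j q k U ∧ U ⊆ {g | (fun i => (χL i g : L)) ∈ V} ∧
      ∀ g ∈ {g | (fun i => (χL i g : L)) ∈ V}, (∃ y, av = ρ g * y ^ (q ^ M)) ∨ g ∈ U := by
  have hp : p.Prime := Fact.out
  have hqpos : 0 < q ^ M := by rw [hq]; exact pow_pos (pow_pos hp.pos a) M
  have hfin := ms_quot_finite (G := G) (q ^ M) hqpos
  have := Fintype.ofFinite (G ⧸ (powMonoidHom (q ^ M) : G →* G).range)
  have main : ∀ c : G ⧸ (powMonoidHom (q ^ M) : G →* G).range, ∃ k, 1 ≤ k ∧ ∃ U, MsFU j q k U ∧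
      U ⊆ {g | (fun i => (χL i g : L)) ∈ V} ∧ ∀ g ∈ {g | (fun i => (χL i g : L)) ∈ V},
        QuotientGroup.mk g = c → (∃ y, av = ρ g * y ^ (q ^ M)) ∨ g ∈ U := by
    intro c
    obtain ⟨r, rfl⟩ := QuotientGroup.mk_surjective c
    have hcos : ∀ g : G, (QuotientGroup.mk g : G ⧸ (powMonoidHom (q ^ M) : G →* G).range) =
        QuotientGroup.mk r → ∃ u, g = r * u ^ (q ^ M) := by
      intro g hg
      obtain ⟨u, hu⟩ := QuotientGroup.eq.1 hg.symm
      exact ⟨u, by rw [powMonoidHom_apply] at hu; rw [hu, mul_inv_cancel_left]⟩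
    obtain ⟨W, hW, hlt | hb⟩ := ms_descend p a q hq V P A hV hcard (fun i => χL i r) M
    · obtain ⟨k, hk, hU⟩ := ih W hlt
      have hiff : ∀ u : G, (fun i => (χL i u : L)) ∈ W ↔
          (fun i => (χL i (r * u ^ (q ^ M)) : L)) ∈ V := by
        intro u
        rw [hW]
        simp
      refine ⟨k, hk, _, MsFU.translate hj r (q ^ M) hU, ?_, ?_⟩
      · rintro _ ⟨u, hu, rfl⟩
        exact (hiff u).1 hu
      · intro g hg hgr
        right
        obtain ⟨u, rfl⟩ := hcos g hgr
        exact ⟨u, (hiff u).2 hg, rfl⟩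
    · obtain ⟨y, hy⟩ := hgood r hb
      refine ⟨1, le_rfl, ∅, MsFU.empty, Set.empty_subset _, fun g hg hgr => Or.inl ?_⟩
      obtain ⟨u, rfl⟩ := hcos g hgr
      refine ⟨y * (ρ u)⁻¹, ?_⟩
      rw [map_mul, map_pow, mul_pow, inv_pow, mul_assoc, mul_comm (y ^ _), mul_inv_cancel_left]
      exact hy
  choose k hk U hU hUS hUc using main
  classical
  have hpos : 0 < ∏ c, k c := Finset.prod_pos fun c _ => hk c
  refine ⟨∏ c, k c, hpos, ⋃ c, U c, MsFU.iUnion _ fun c => ?_,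
    Set.iUnion_subset hUS, ?_⟩
  · rw [← Finset.mul_prod_erase _ _ (Finset.mem_univ c)]
    exact MsFU.mul _ (Finset.prod_pos fun c _ => hk c) (hU c)
  · intro g hg
    rcases hUc (QuotientGroup.mk g) g hg rfl with h | h
    · exact Or.inl h
    · exact Or.inr (Set.mem_iUnion.2 ⟨_, h⟩)

theorem ms_core {K L : Type*} [Field K] [IsAlgClosed K] [Field L] (p a q : ℕ) [Fact p.Prime]
    [CharP K p] [CharP L p] (hq : q = p ^ a) (ha : 1 ≤ a)
    (hdet : ∀ z : Lˣ, (∀ φ : Lˣ →* Multiplicative ℤ, φ z = 1) → ∃ m : ℕ, 0 < m ∧ z ^ m = 1)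
    (f : L →+* K) {ι : Type*} [Fintype ι] [DecidableEq ι] {G T : Type*} [CommGroup G] [Group.FG G]
    [CommGroup T] (j : G →* T) (hj : Function.Injective j)
    (hdiv : ∀ n : ℕ, 0 < n → ∀ x : T, ∃ y, y ^ n = x)
    (χ : ι → T →* Kˣ) (χL : ι → G →* Lˣ) (hχ : ∀ i g, f (χL i g : L) = (χ i (j g) : K)) (d : ℕ) :
    ∀ V : Submodule L (ι → L), Module.finrank L V = d →
      ∃ k, 1 ≤ k ∧ MsFU j q k {g | (fun i => (χL i g : L)) ∈ V} := by
  induction d using Nat.strong_induction_on with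
  | _ d IH =>
  intro V hd
  have hp : p.Prime := Fact.out
  have hqpos : ∀ M : ℕ, 0 < q ^ M := by intro M; rw [hq]; exact pow_pos (pow_pos hp.pos a) M
  obtain ⟨P, A, hV, hcard⟩ := ms_pivot V
  have hSm : ∀ g : G, g ∈ {g | (fun i => (χL i g : L)) ∈ V} ↔
      ∀ l, (χL l g : L) = ∑ i ∈ P, A l i * (χL i g : L) := fun g => hV _
  let J := {x : ι × ι // x.2 ∈ P ∧ A x.1 x.2 ≠ 0}
  have hJfin : Finite J := inferInstance
  have hJ : Fintype J := Fintype.ofFinite J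
  let av : J → Lˣ := fun x => Units.mk0 (A x.1.1 x.1.2) x.2.2
  let ρ : G →* (J → Lˣ) := MonoidHom.pi fun x => χL x.1.1 / χL x.1.2
  have hρ : ∀ g (x : J), ρ g x = χL x.1.1 g / χL x.1.2 g := fun g x => rfl
  refine ms_step p a q hp ha hq ?_ ?_ j hj ρ av _ ?_ ?_ ?_ ?_
  · intro x hx
    funext i
    apply Units.ext
    have h1 : ((x i : Lˣ) : L) ^ p = 1 := by
      have := congrFun hx i
      rw [← Units.val_pow_eq_pow_val, ← Pi.pow_apply, this]
      rfl
    have := frobenius_inj L p (a₁ := (x i : L)) (a₂ := 1) (by simpa [frobenius_def] using h1)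
    simpa using this
  · intro x hx
    have h1 : ∀ i, ∃ m : ℕ, 0 < m ∧ x i ^ m = 1 := by
      intro i
      exact hdet (x i) fun φ => hx (φ.comp (Pi.evalMonoidHom _ i))
    choose m hm hxm using h1
    classical
    refine ⟨∏ i, m i, Finset.prod_pos fun i _ => hm i, ?_⟩
    funext i
    rw [Pi.pow_apply, ← Finset.mul_prod_erase _ _ (Finset.mem_univ i), pow_mul, hxm, one_pow]
    rfl
  · intro g hg h hh
    rw [hSm] at hg ⊢
    intro l
    rw [map_mul, Units.val_mul, hg l, Finset.sum_mul]
    refine Finset.sum_congr rfl fun i hi => ?_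
    by_cases hA : A l i = 0
    · simp [hA]
    · have := congrFun (MonoidHom.mem_ker.1 hh) ⟨(l, i), hi, hA⟩
      rw [hρ] at this
      have h2 : χL l h = χL i h := by
        rw [Pi.one_apply, div_eq_one] at this; exact this
      rw [h2, map_mul, Units.val_mul, mul_assoc]
  · intro e h hh u
    have hA : ∀ l, ∀ i ∈ P, A l i ^ (q ^ e) * (χL i h : L) = (χL l h : L) * A l i := by
      intro l i hi
      by_cases hA : A l i = 0
      · rw [hA, zero_pow (hqpos e).ne', zero_mul, mul_zero]
      · have := congrFun hh ⟨(l, i), hi, hA⟩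
        rw [Pi.pow_apply, Pi.mul_apply, hρ, div_mul_eq_mul_div, eq_div_iff_mul_eq'] at this
        have := congrArg (Units.val) this
        simp only [av, Units.val_mul, Units.val_pow_eq_pow_val, Units.val_mk0] at this
        exact this
    rw [hSm, hSm]
    refine forall_congr' fun l => ?_
    have key : (χL l h : L) * ∑ i ∈ P, A l i * (χL i (h⁻¹ * u ^ (q ^ e)) : L) =
        (∑ i ∈ P, A l i * (χL i u : L)) ^ (q ^ e) := by
      rw [ms_frob_sum p a q hq, Finset.mul_sum]
      refine Finset.sum_congr rfl fun i hi => ?_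
      rw [← mul_assoc, ← hA l i hi, map_mul, map_inv, map_pow, mul_pow, Units.val_mul,
        Units.val_pow_eq_pow_val, mul_assoc, ← mul_assoc (χL i h : L), Units.mul_inv, one_mul]
    have key2 : (χL l h : L) * (χL l (h⁻¹ * u ^ (q ^ e)) : L) = (χL l u : L) ^ (q ^ e) := by
      rw [← Units.val_mul, ← map_mul, mul_inv_cancel_left, map_pow, Units.val_pow_eq_pow_val]
    constructor
    · intro h1
      apply (χL l h).isUnit.mul_left_cancel
      rw [key, key2, ← h1]
    · intro h1
      apply ms_frob_inj p a q hq e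
      rw [← key, ← key2, ← h1]
  · intro M
    refine ms_bad p a q hq j hj χL V P A hV hcard (fun W hW => IH _ (hd ▸ hW) W rfl) ρ av M ?_
    rintro r ⟨b, hb⟩
    have hb0 : ∀ x : J, b x.1.1 x.1.2 ≠ 0 := by
      intro x h0
      have := hb x.1.1 x.1.2 x.2.1
      rw [h0, zero_pow (hqpos M).ne', mul_zero] at this
      exact x.2.2 ((mul_eq_zero.1 this).resolve_right (Units.ne_zero _))
    refine ⟨fun x => Units.mk0 (b x.1.1 x.1.2) (hb0 x), ?_⟩
    funext x
    rw [Pi.mul_apply, Pi.pow_apply, hρ, div_mul_eq_mul_div, eq_div_iff_mul_eq']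
    apply Units.ext
    simp only [av, Units.val_mul, Units.val_pow_eq_pow_val, Units.val_mk0]
    exact hb x.1.1 x.1.2 x.2.1
  · intro k hk h' hψ N hN hNS
    refine ms_orbit p a q hq ha j hdiv χ (Set.range fun l => fun i =>
      f ((if i = l then 1 else 0) - if i ∈ P then A l i else 0)) _ ?_ k hk h' ρ.ker ?_ hψ N hN hNS
    · intro g
      rw [hSm, Set.forall_mem_range]
      refine forall_congr' fun l => ?_
      have : ∑ i, f ((if i = l then 1 else 0) - if i ∈ P then A l i else 0) * (χ i (j g) : K) =
          f ((χL l g : L) - ∑ i ∈ P, A l i * (χL i g : L)) := by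
        simp_rw [← hχ, ← map_mul, ← map_sum]
        congr 1
        simp_rw [sub_mul, Finset.sum_sub_distrib]
        congr 1
        · simp
        · simp [Finset.sum_ite_mem]
      rw [this, map_eq_zero, sub_eq_zero]
    · intro g hg h hh
      rw [hSm] at hg ⊢
      intro l
      rw [map_mul, Units.val_mul, hg l, Finset.sum_mul]
      refine Finset.sum_congr rfl fun i hi => ?_
      by_cases hA : A l i = 0
      · simp [hA]
      · have := congrFun (MonoidHom.mem_ker.1 hh) ⟨(l, i), hi, hA⟩
        rw [hρ] at this
        have h2 : χL l h = χL i h := by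
          rw [Pi.one_apply, div_eq_one] at this; exact this
        rw [h2, map_mul, Units.val_mul, mul_assoc]

theorem ms_conv {K : Type*} [Field K] (q k : ℕ) (hk : 1 ≤ k) {N : ℕ} (Γ : Subgroup (Fin N → Kˣ))
    {S : Set Γ} (hS : MsFU Γ.subtype q k S) :
    ∃ (n : ℕ) (Ts : Fin n → Set (Fin N → Kˣ)),
      (∀ i, IsFqSet q Γ (Ts i)) ∧ Subtype.val '' S = ⋃ i, Ts i := by
  induction hS with
  | empty => exact ⟨0, Fin.elim0, fun i => i.elim0, by simp⟩
  | union S S' _ _ h h' =>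
    obtain ⟨n, Ts, h1, h2⟩ := h
    obtain ⟨n', Ts', h1', h2'⟩ := h'
    refine ⟨n + n', Fin.append Ts Ts', ?_, ?_⟩
    · intro i
      refine Fin.addCases (fun i => ?_) (fun i => ?_) i
      · rw [Fin.append_left]; exact h1 i
      · rw [Fin.append_right]; exact h1' i
    · rw [Set.image_union, h2, h2']
      ext x
      simp only [Set.mem_union, Set.mem_iUnion]
      constructor
      · rintro (⟨i, hi⟩ | ⟨i, hi⟩)
        · exact ⟨Fin.castAdd _ i, by rw [Fin.append_left]; exact hi⟩
        · exact ⟨Fin.natAdd _ i, by rw [Fin.append_right]; exact hi⟩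
      · rintro ⟨i, hi⟩
        revert hi
        refine Fin.addCases (fun i => ?_) (fun i => ?_) i
        · rw [Fin.append_left]; exact fun hi => Or.inl ⟨i, hi⟩
        · rw [Fin.append_right]; exact fun hi => Or.inr ⟨i, hi⟩
  | nice r α0 α B h0 h =>
    refine ⟨1, fun _ => _, fun _ => ?_, (Set.iUnion_const _).symm⟩
    have hmem : ∀ n : Fin r → ℕ, α0 * ∏ i, α i ^ (q ^ (k * n i)) ∈ Γ := by
      intro n
      obtain ⟨g1, hg1⟩ := h0
      obtain ⟨g2, hg2⟩ := ms_prod_mem (j := Γ.subtype) α (fun i => q ^ (k * n i)) (fun i => by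
        rw [pow_mul]; exact ms_pow_iter (α i) _ (h i) (n i))
      rw [hg2, ← mul_assoc, ← hg1]
      exact mul_mem g1.2 g2.2
    refine ⟨{g | ∃ n : Fin r → ℕ, g = α0 * ∏ i : Fin r, (α i) ^ (q ^ (k * n i))}, B.map Γ.subtype,
      ⟨?_, r, k, hk, α0, α, rfl⟩, ?_, ?_⟩
    · rintro _ ⟨n, rfl⟩
      exact hmem n
    · rintro _ ⟨b, -, rfl⟩
      exact b.2
    · ext x
      constructor
      · rintro ⟨g, ⟨n, b, hb, hg⟩, rfl⟩
        exact ⟨_, ⟨n, rfl⟩, b, ⟨b, hb, rfl⟩, hg⟩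
      · rintro ⟨_, ⟨n, rfl⟩, _, ⟨b, hb, rfl⟩, rfl⟩
        exact ⟨⟨_, mul_mem (hmem n) b.2⟩, ⟨n, b, hb, rfl⟩, rfl⟩

/-- Moosa–Scanlon's theorem (torus case): over an algebraically closed field `K` of
characteristic `p > 0`, if `Γ` is a finitely generated subgroup of `(Kˣ)^N` invariant
under some power `F^ℓ` of the `q`-power Frobenius `F : x ↦ x^q`, then the intersection
of a subvariety `X` of `(Kˣ)^N` with `Γ` is a finite union of `F`-sets in `Γ`. -/
theorem moosa_scanlon_torus
    (K : Type*) [Field K] [IsAlgClosed K] (p : ℕ) (hp : p.Prime) [CharP K p]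
    (q a : ℕ) (ha : 1 ≤ a) (hq : q = p ^ a)
    (N : ℕ) (hN : 1 ≤ N) (X : Set (Fin N → Kˣ)) (hX : IsTorusSubvariety K X)
    (Γ : Subgroup (Fin N → Kˣ)) (hΓ : Γ.FG)
    (ℓ : ℕ) (hℓ : 1 ≤ ℓ) (hinv : ∀ γ ∈ Γ, γ ^ (q ^ ℓ) ∈ Γ) :
    ∃ (n : ℕ) (Ts : Fin n → Set (Fin N → Kˣ)),
      (∀ i, IsFqSet q Γ (Ts i)) ∧ X ∩ ↑Γ = ⋃ i, Ts i := by
  have : Fact p.Prime := ⟨hp⟩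
  classical
  letI : Algebra (ZMod p) K := ZMod.algebra K p
  obtain ⟨𝒮, rfl⟩ := hX
  obtain ⟨s, hs⟩ : (Ideal.span 𝒮).FG := IsNoetherian.noetherian _
  have hzero : ∀ x : Fin N → K, (∀ f ∈ 𝒮, MvPolynomial.eval x f = 0) ↔
      ∀ f ∈ s, MvPolynomial.eval x f = 0 := by
    intro x
    have h1 : ∀ S : Set (MvPolynomial (Fin N) K), (∀ f ∈ S, MvPolynomial.eval x f = 0) ↔
        Ideal.span S ≤ RingHom.ker (MvPolynomial.eval x) := by
      intro S
      rw [Ideal.span_le]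
      exact Iff.rfl
    rw [h1 𝒮, ← hs]
    exact (h1 ↑s).symm
  obtain ⟨t, ht⟩ := hΓ
  let E0 : Finset (Fin N →₀ ℕ) := s.biUnion MvPolynomial.support
  let E : Finset K := (s ×ˢ E0).image (fun x => MvPolynomial.coeff x.2 x.1) ∪
    (t ×ˢ (Finset.univ : Finset (Fin N))).image (fun x => (x.1 x.2 : K))
  let L : IntermediateField (ZMod p) K := IntermediateField.adjoin (ZMod p) (E : Set K)
  have hLfg : Algebra.EssFiniteType (ZMod p) L :=
    IntermediateField.essFiniteType_iff.2 ⟨E, rfl⟩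
  have hcoeff : ∀ f ∈ s, ∀ m ∈ E0, MvPolynomial.coeff m f ∈ L := by
    intro f hf m hm
    apply IntermediateField.subset_adjoin
    exact Finset.mem_coe.2 (Finset.mem_union_left _ (Finset.mem_image.2
      ⟨(f, m), Finset.mem_product.2 ⟨hf, hm⟩, rfl⟩))
  have hΓL : ∀ g ∈ Γ, ∀ i, (g i : K) ∈ L := by
    intro g hg
    rw [← ht] at hg
    induction hg using Subgroup.closure_induction with
    | mem g hg =>
      intro i
      apply IntermediateField.subset_adjoin
      exact Finset.mem_coe.2 (Finset.mem_union_right _ (Finset.mem_image.2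
        ⟨(g, i), Finset.mem_product.2 ⟨hg, Finset.mem_univ _⟩, rfl⟩))
    | one => intro i; simpa using L.one_mem
    | mul x y _ _ hx hy => intro i; simpa using L.mul_mem (hx i) (hy i)
    | inv x _ hx => intro i; simpa using L.inv_mem (hx i)
  have hFG : Group.FG Γ := (Group.fg_iff_subgroup_fg Γ).2 ⟨t, ht⟩
  have hcharL : CharP L p := (algebraMap L K).charP (algebraMap L K).injective p
  let cΓ : Fin N → Γ →* Lˣ := fun i => MonoidHom.mk' (fun g => Units.mk0 ⟨(g.1 i : K), hΓL g.1 g.2 i⟩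
    (fun h => (g.1 i).ne_zero (congrArg Subtype.val h))) (by
      intro x y
      apply Units.ext
      apply Subtype.ext
      simp)
  have hcΓ : ∀ i g, algebraMap L K (cΓ i g : L) = (g.1 i : K) := fun i g => rfl
  let χ : E0 → (Fin N → Kˣ) →* Kˣ := fun m => ∏ i, (Pi.evalMonoidHom (fun _ => Kˣ) i) ^ (m.1 i)
  let χL : E0 → Γ →* Lˣ := fun m => ∏ i, (cΓ i) ^ (m.1 i)
  have hχv : ∀ m x, (χ m x : K) = ∏ i, (x i : K) ^ (m.1 i) := by
    intro m x
    simp [χ]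
  have hχ : ∀ m g, algebraMap L K (χL m g : L) = (χ m (Γ.subtype g) : K) := by
    intro m g
    rw [hχv]
    simp only [χL, MonoidHom.finsetProd_apply, MonoidHom.pow_apply, Units.coe_prod,
      Units.val_pow_eq_pow_val, map_prod, map_pow, hcΓ]
    rfl
  let cL : s → E0 → L := fun f m => ⟨MvPolynomial.coeff m.1 f.1, hcoeff f.1 f.2 m.1 m.2⟩
  let V : Submodule L (E0 → L) :=
    ⨅ f : s, LinearMap.ker (∑ m : E0, cL f m • (LinearMap.proj m : (E0 → L) →ₗ[L] L))
  have hV : ∀ x : E0 → L, x ∈ V ↔ ∀ f : s, ∑ m, cL f m * x m = 0 := by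
    intro x
    simp [V, Submodule.mem_iInf]
  obtain ⟨k, hk, hfu⟩ := ms_core (K := K) (L := L) p a q hq ha (fun z hz => ms_val (k := ZMod p) z hz)
    (algebraMap L K) Γ.subtype Γ.subtype_injective (by
      intro n hn x
      have : ∀ i, ∃ y : Kˣ, y ^ n = x i := by
        intro i
        obtain ⟨z, hz⟩ := IsAlgClosed.exists_pow_nat_eq (x i : K) hn
        have hz0 : z ≠ 0 := by
          rintro rfl
          rw [zero_pow hn.ne'] at hz
          exact (x i).ne_zero hz.symm
        exact ⟨Units.mk0 z hz0, Units.ext (by simpa using hz)⟩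
      choose y hy using this
      exact ⟨y, funext hy⟩) χ χL hχ _ V rfl
  obtain ⟨n, Ts, h1, h2⟩ := ms_conv q k hk Γ hfu
  refine ⟨n, Ts, h1, ?_⟩
  rw [← h2]
  have heval : ∀ (g : Γ) (f : s), MvPolynomial.eval (fun i => (g.1 i : K)) f.1 =
      algebraMap L K (∑ m, cL f m * (χL m g : L)) := by
    intro g f
    rw [map_sum, MvPolynomial.eval_eq', Finset.sum_subset (Finset.subset_biUnion_of_mem
      MvPolynomial.support f.2), ← Finset.sum_coe_sort]
    · refine Finset.sum_congr rfl fun m _ => ?_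
      rw [map_mul, hχ, hχv]
      rfl
    · intro m _ hm
      rw [MvPolynomial.notMem_support_iff.1 hm, zero_mul]
  have hmem : ∀ g : Γ, g ∈ {g : Γ | (fun i => (χL i g : L)) ∈ V} ↔
      ∀ f ∈ 𝒮, MvPolynomial.eval (fun i => (g.1 i : K)) f = 0 := by
    intro g
    rw [hzero, Set.mem_setOf_eq, hV]
    constructor
    · intro h f hf
      rw [heval g ⟨f, hf⟩, h, map_zero]
    · intro h f
      have := heval g f
      rw [h f.1 f.2] at this
      exact (map_eq_zero _).1 this.symm
  ext x
  constructor
  · rintro ⟨hx, hxΓ⟩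
    exact ⟨⟨x, hxΓ⟩, (hmem ⟨x, hxΓ⟩).2 hx, rfl⟩
  · rintro ⟨g, hg, rfl⟩
    exact ⟨(hmem g).1 hg, g.2⟩
end

section
/- (Proposition on curves, part (i), torus case.) Let K be an algebraically closed field of characteristic p > 0, let f ∈ K[x, y] be an irreducible polynomial, and let X = {(a, b) ∈ (Kˣ)² : f(a, b) = 0}; assume X is infinite, so that X is an irreducible curve in the torus (Kˣ)². Let Γ be a finitely generated subgroup of (Kˣ)². If the stabilizer Stab(X) = {g ∈ (Kˣ)² : g·X = X} is infinite, then X ∩ Γ is either empty or a coset of a subgroup of Γ. -/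
theorem aux_dvd_of_infinite {K : Type*} [Field K]
    (f g : MvPolynomial (Fin 2) K) (hf : Irreducible f)
    (h : {v : Fin 2 → K | MvPolynomial.eval v f = 0 ∧ MvPolynomial.eval v g = 0}.Infinite) :
    f ∣ g := by
  by_contra hfg
  apply h
  have hfin := Ideal.finite_minimalPrimes_of_isNoetherianRing (MvPolynomial (Fin 2) K)
    (Ideal.span {f, g})
  have hker : ∀ v : Fin 2 → K, (RingHom.ker (MvPolynomial.eval v)).IsPrime := fun v =>
    RingHom.ker_isPrime _
  refine Set.Finite.of_finite_image (f := fun v => RingHom.ker (MvPolynomial.eval v))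
    (hfin.subset ?_) ?_
  · rintro _ ⟨v, ⟨hv1, hv2⟩, rfl⟩
    have := hker v
    have hle : Ideal.span {f, g} ≤ RingHom.ker (MvPolynomial.eval v) := by
      rw [Ideal.span_le]
      rintro a (rfl | rfl)
      · exact hv1
      · exact hv2
    obtain ⟨P, hP, hPle⟩ := Ideal.exists_minimalPrimes_le hle
    have hPp : P.IsPrime := hP.1.1
    rcases hPle.eq_or_lt with heq | hlt
    · simpa [← heq] using hP
    · exfalso
      have hfp : (Ideal.span {f}).IsPrime :=
        (Ideal.span_singleton_prime hf.ne_zero).2 hf.prime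
      have hfP : f ∈ P := hP.1.2 (Ideal.subset_span (by simp))
      have hgP : g ∈ P := hP.1.2 (Ideal.subset_span (by simp))
      have h1 : (⊥ : Ideal (MvPolynomial (Fin 2) K)) < Ideal.span {f} := by
        rw [bot_lt_iff_ne_bot, Ne, Ideal.span_singleton_eq_bot]
        exact hf.ne_zero
      have h2 : Ideal.span {f} < P := by
        refine lt_of_le_of_ne ((Ideal.span_singleton_le_iff_mem _).2 hfP) ?_
        rintro rfl
        exact hfg (Ideal.mem_span_singleton.1 hgP)
      have hb : (⊥ : Ideal (MvPolynomial (Fin 2) K)).IsPrime := Ideal.isPrime_bot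
      let p0 : PrimeSpectrum (MvPolynomial (Fin 2) K) := ⟨⊥, hb⟩
      let p1 : PrimeSpectrum (MvPolynomial (Fin 2) K) := ⟨_, hfp⟩
      let p2 : PrimeSpectrum (MvPolynomial (Fin 2) K) := ⟨_, hPp⟩
      let p3 : PrimeSpectrum (MvPolynomial (Fin 2) K) := ⟨_, this⟩
      let s : LTSeries (PrimeSpectrum (MvPolynomial (Fin 2) K)) :=
        { length := 3
          toFun := ![p0, p1, p2, p3]
          step := by
            intro i
            fin_cases i
            · exact (show p0 < p1 from h1)
            · exact (show p1 < p2 from h2)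
            · exact (show p2 < p3 from hlt) }
      have hs := Order.LTSeries.length_le_krullDim s
      have hd : Order.krullDim (PrimeSpectrum (MvPolynomial (Fin 2) K)) = 2 := by
        have := MvPolynomial.ringKrullDim_of_isNoetherianRing (R := K) (ι := Fin 2)
        rw [ringKrullDim_eq_zero_of_field] at this
        change ringKrullDim _ = 2
        rw [this]
        simp
      rw [hd] at hs
      have hl : s.length = 3 := rfl
      rw [hl] at hs
      exact absurd hs (by decide)
  · intro v _ w _ hvw
    funext i
    have : (MvPolynomial.X i - MvPolynomial.C (v i)) ∈ RingHom.ker (MvPolynomial.eval w) := by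
      have hvw' : RingHom.ker (MvPolynomial.eval v) = RingHom.ker (MvPolynomial.eval w) := hvw
      rw [← hvw', RingHom.mem_ker]
      simp
    rw [RingHom.mem_ker] at this
    simp [sub_eq_zero] at this
    exact this.symm

theorem aux_mul_mem {K : Type*} [Field K]
    (f : MvPolynomial (Fin 2) K) (hf : Irreducible f)
    (X : Set (Kˣ × Kˣ))
    (hX : X = {g : Kˣ × Kˣ | MvPolynomial.eval ![(g.1 : K), (g.2 : K)] f = 0})
    (hstab : {g : Kˣ × Kˣ | (fun x => g * x) '' X = X}.Infinite)
    {x y z : Kˣ × Kˣ} (hx : x ∈ X) (hy : y ∈ X) (hz : z ∈ X) : x * y⁻¹ * z ∈ X := by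
  set h := x * y⁻¹ with hh
  let c : Fin 2 → K := ![(h.1 : K), (h.2 : K)]
  let g : MvPolynomial (Fin 2) K :=
    MvPolynomial.aeval (fun i => MvPolynomial.C (c i) * MvPolynomial.X i) f
  have hg : ∀ u : Kˣ × Kˣ, MvPolynomial.eval ![(u.1 : K), (u.2 : K)] g = 0 ↔ h * u ∈ X := by
    intro u
    have : MvPolynomial.eval ![(u.1 : K), (u.2 : K)] g =
        MvPolynomial.eval ![((h * u).1 : K), ((h * u).2 : K)] f := by
      simp only [g, MvPolynomial.aeval_def, MvPolynomial.eval_eval₂, MvPolynomial.algebraMap_eq]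
      rw [← MvPolynomial.eval₂_id]
      congr 1
      · ext; simp
      · funext i
        fin_cases i <;> simp [c]
    rw [this, hX]
    rfl
  have hdvd : f ∣ g := by
    apply aux_dvd_of_infinite f g hf
    have hinj : Function.Injective
        (fun s : Kˣ × Kˣ => (![((s * y).1 : K), ((s * y).2 : K)] : Fin 2 → K)) := by
      intro s t hst
      have h0 := congrFun hst 0
      have h1 := congrFun hst 1
      simp at h0 h1
      exact Prod.ext (Units.ext h0) (Units.ext h1)
    refine (hstab.image hinj.injOn).mono ?_
    rintro _ ⟨s, hs, rfl⟩
    have hs' : ∀ a ∈ X, s * a ∈ X := fun a ha => by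
      have : (fun x => s * x) '' X = X := hs
      rw [← this]
      exact ⟨a, ha, rfl⟩
    refine ⟨?_, (hg _).2 ?_⟩
    · have := hs' y hy
      rw [hX] at this
      exact this
    · have : h * (s * y) = s * x := by
        rw [hh, mul_left_comm, inv_mul_cancel_right]
      rw [this]
      exact hs' x hx
  rw [← hg z]
  obtain ⟨k, hk⟩ := hdvd
  rw [hX] at hz
  have hz' : MvPolynomial.eval ![(z.1 : K), (z.2 : K)] f = 0 := hz
  rw [hk, map_mul, hz', zero_mul]


/-- Proposition on curves, part (i) (torus case): let `X ⊆ (Kˣ)²` be the zero set of an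
irreducible polynomial `f ∈ K[x,y]`, an infinite (hence irreducible) curve in the torus,
and `Γ` a finitely generated subgroup of `(Kˣ)²`. If the stabilizer of `X` in `(Kˣ)²`
is infinite, then `X ∩ Γ` is either empty or a coset of a subgroup of `Γ`. -/
theorem curve_intersection_coset_of_infinite_stabilizer
    (K : Type*) [Field K] [IsAlgClosed K] (p : ℕ) (hp : p.Prime) [CharP K p]
    (f : MvPolynomial (Fin 2) K) (hf : Irreducible f)
    (X : Set (Kˣ × Kˣ))
    (hX : X = {g : Kˣ × Kˣ | MvPolynomial.eval ![(g.1 : K), (g.2 : K)] f = 0})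
    (hXinf : X.Infinite)
    (Γ : Subgroup (Kˣ × Kˣ)) (hΓ : Γ.FG)
    (hstab : {g : Kˣ × Kˣ | (fun x => g * x) '' X = X}.Infinite) :
    X ∩ ↑Γ = ∅ ∨
      ∃ (γ : Kˣ × Kˣ) (B : Subgroup (Kˣ × Kˣ)), γ ∈ Γ ∧ B ≤ Γ ∧
        X ∩ ↑Γ = {g | ∃ b ∈ B, g = γ * b} := by

  have key := @aux_mul_mem K _ f hf X hX hstab
  rcases Set.eq_empty_or_nonempty (X ∩ (Γ : Set (Kˣ × Kˣ))) with he | ⟨γ, hγX, hγ⟩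
  · exact Or.inl he
  · right
    have hγ' : γ ∈ Γ := hγ
    refine ⟨γ,
      { carrier := {b | b ∈ Γ ∧ γ * b ∈ X}
        one_mem' := ⟨Γ.one_mem, by simpa using hγX⟩
        mul_mem' := ?_
        inv_mem' := ?_ }, hγ', fun b hb => hb.1, ?_⟩
    · rintro a b ⟨ha, ha'⟩ ⟨hb, hb'⟩
      refine ⟨Γ.mul_mem ha hb, ?_⟩
      have := key ha' hγX hb'
      rwa [mul_assoc, inv_mul_cancel_left, mul_assoc] at this
    · rintro a ⟨ha, ha'⟩
      refine ⟨Γ.inv_mem ha, ?_⟩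
      have := key hγX ha' hγX
      rwa [mul_inv_rev, mul_assoc, inv_mul_cancel_right] at this
    · ext g
      constructor
      · rintro ⟨hg, hgΓ⟩
        refine ⟨γ⁻¹ * g, ⟨Γ.mul_mem (Γ.inv_mem hγ') hgΓ, ?_⟩, ?_⟩
        · simpa using hg
        · simp
      · rintro ⟨b, ⟨hb, hb'⟩, rfl⟩
        exact ⟨hb', Γ.mul_mem hγ' hb⟩
end
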